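/- Let n ≥ 1 be an 'odd' integer (i.e., q−1 does not divide n). Then π̃ and ζ(n) are algebraically independent over k̄. -/

import Mathlib

/-!
# Algebraic independence of the Carlitz period and of an odd zeta value

Since `π̃ ^ (q - 1) = -θ ^ q P ^ (q - 1)`, where `P` is the infinite product in the definition of
`π̃`, it suffices to exclude polynomial relations with coefficients in `𝔽_q[θ]` between
`ϖ = -θ ^ q P ^ (q - 1)` and `ζ = ζ(n)` in `𝔽_q((1/θ))`: passing from `𝔽_q[θ]` to `k̄` is an
algebraic extension of scalars.

**Functions.** Let `k = 𝔽_q(t)` and let `τ` be the `k`-linear endomorphism `x ↦ x ^ q` of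
`k((1/x))`. By the Anderson–Thakur formula (`exists_powSum`) there is `h ∈ k[x]` such that the
power sum `S_d(n)` over monic polynomials of degree `d` equals `h(θ ^ (q ^ d)) / ℓ_d ^ n` with
`ℓ_d = ∏_{j=1}^d (θ - θ ^ (q ^ j))`, once `t` is specialized to `θ`. This leads to two series in
`k((1/x))`: `w = -x ^ q ∏_{i ≥ 1} (1 - t / x ^ (q ^ i)) ^ (1 - q)` and
`F = ∑_d h(x ^ (q ^ d)) / ∏_{j=1}^d (t - x ^ (q ^ j)) ^ n`. With `β = t - x ^ q` they satisfy
`τ w = β ^ (q - 1) w` and `τ F = β ^ n (F - h)`. At `x = θ ^ (q ^ N)`, `t = θ`, they take the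
values `ℓ_N ^ (q - 1) ϖ` and `ℓ_N ^ n (ζ - ∑_{d < N} S_d(n))`. The coefficients of the series lie in
`k`, with no bound on their size, so taking values is made precise by uniform asymptotic expansions
(`Exp`, `exp_omega`, `exp_F`).

**Independence of the functions** (`formal_independence`). A relation between `w` and `F` over
`k(x)` of minimal degree is an eigenvector of the transformation induced by `τ`, and comparing
coefficients produces a `p`-power of `F` which is rational (`exists_pow_mem_of_relation`); this is
where `q - 1 ∤ n` enters, as comparing orders shows that `τ e = β ^ (n p ^ i) e` has no nonzero
solution `e` in `k((1/x))`. The functional equation then makes `F ^ (p ^ i)` a polynomial which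
vanishes at `x = t` (`exists_polynomial_of_relation`), and its values at `x = θ ^ (q ^ N)` show that
`(ℓ_N ^ n ζ) ^ (p ^ i)` stays bounded as `N → ∞`, which contradicts `ζ ≠ 0`.

**From functions to values** (`no_relation`, `core`). A relation between `ϖ` and `ζ` over `𝔽_q[θ]`
turns, for every `N`, into a relation between the values of `w` and `F` at `θ ^ (q ^ N)` of the same
shape, with coefficients in `𝔽_q[θ]` of degree `O(q ^ N)` (`exists_numerators`,
`clear_denominators`). Writing these coefficients in base `θ ^ (q ^ N)` and multiplying by a
polynomial of bounded degree, chosen so that the digits have gaps at finitely many places, one reads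
off a nontrivial linear relation over `k[x]` between the functions modulo a high power of `1/x`; the
independence of the functions excludes it for `N` large.
-/

/-!
Setting: `Fq` is a finite field with `q = Fintype.card Fq` elements and characteristic
`p = ringChar Fq`.  The field `k_∞ = 𝔽_q((1/θ))` is realized as `Kinf Fq`, the field of
formal Laurent series over `Fq` in the variable `u = θ⁻¹`; thus `theta Fq = u⁻¹` plays
the role of `θ` (it is the single Hahn series supported in degree `-1`), and polynomials
in `θ` are evaluated in `Kinf Fq` via `Polynomial.aeval (theta Fq)`.  `KinfBar Fq` is a
fixed algebraic closure `k̄_∞` of `k_∞`.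
-/

set_option synthInstance.maxHeartbeats 1000000
set_option maxHeartbeats 1000000

noncomputable section

variable (Fq : Type) [Field Fq] [Fintype Fq]

/-- `k_∞ = 𝔽_q((1/θ))`, with its `1/θ`-adic (valued) topology. -/
abbrev Kinf := LaurentSeries Fq

/-- `θ ∈ k_∞`, the inverse of the Laurent-series variable. -/
def theta : Kinf Fq := HahnSeries.single (-1 : ℤ) (1 : Fq)

/-- The multizeta value `ζ(n 0, …, n (d-1))`: the sum, over all `d`-tuples of monic
polynomials `a i ∈ 𝔽_q[θ]` with `deg (a 0) > deg (a 1) > … > deg (a (d-1)) ≥ 0`, of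
`1 / (a 0 ^ n 0 ⋯ a (d-1) ^ n (d-1))`, computed in `k_∞`. -/
def mzv (d : ℕ) (n : Fin d → ℕ) : Kinf Fq :=
  ∑' a : {a : Fin d → Polynomial Fq //
      (∀ i, (a i).Monic) ∧ ∀ i j : Fin d, i < j → (a j).degree < (a i).degree},
    (∏ i, Polynomial.aeval (theta Fq) (a.1 i) ^ n i)⁻¹

/-- A fixed algebraic closure `k̄_∞` of `k_∞`. -/
abbrev KinfBar := AlgebraicClosure (Kinf Fq)

/-- The image of `θ` in `k̄_∞`. -/
def thetaBar : KinfBar Fq := algebraMap (Kinf Fq) (KinfBar Fq) (theta Fq)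

/-- The fundamental period `π̃ = (−θ)^{q/(q−1)} ∏_{i≥1} (1−θ^{1−qⁱ})⁻¹` of the Carlitz
module, relative to a chosen `(q−1)`-st root `η` of `−θ` (so `(−θ)^{q/(q−1)} = η ^ q`);
the convergent product is computed in `k_∞` and mapped into `k̄_∞`. -/
def pitilde (η : KinfBar Fq) : KinfBar Fq :=
  η ^ Fintype.card Fq *
    algebraMap (Kinf Fq) (KinfBar Fq)
      (∏' i : ℕ, (1 - theta Fq ^ ((1 : ℤ) - (Fintype.card Fq : ℤ) ^ (i + 1)))⁻¹)

/-- `k = 𝔽_q(θ)`, as a subfield of `k̄_∞`. -/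
def kSub : Subfield (KinfBar Fq) :=
  Subfield.closure
    (Set.range (fun a : Fq => algebraMap (Kinf Fq) (KinfBar Fq) (algebraMap Fq (Kinf Fq) a)) ∪
      {thetaBar Fq})

/-- `k̄`, the algebraic closure of `k` inside `k̄_∞`. -/
def kbar : IntermediateField (kSub Fq) (KinfBar Fq) :=
  algebraicClosure (kSub Fq) (KinfBar Fq)

namespace PiZeta

open Polynomial

set_option linter.unusedSectionVars false

/-! ### Orders of Laurent series -/

section Order

variable {R : Type*} [Field R]

/-- `Bd y c` says that the Laurent series `y` has order at least `c`. -/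
def Bd (y : LaurentSeries R) (c : ℤ) : Prop := ∀ i < c, y.coeff i = 0

/-- `Od y c` says that the Laurent series `y` is nonzero, of order exactly `c`. -/
def Od (y : LaurentSeries R) (c : ℤ) : Prop := y.orderTop = (c : WithTop ℤ)

lemma bd_iff {y : LaurentSeries R} {c : ℤ} : Bd y c ↔ (c : WithTop ℤ) ≤ y.orderTop := by
  rw [HahnSeries.le_orderTop_iff_forall]
  simp only [Bd]
  constructor
  · intro h i hi
    exact h i (by exact_mod_cast hi)
  · intro h i hi
    exact h i (by exact_mod_cast hi)

lemma Bd.mono {y : LaurentSeries R} {c d : ℤ} (h : Bd y c) (hd : d ≤ c) : Bd y d :=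
  fun i hi => h i (by omega)

lemma bd_zero (c : ℤ) : Bd (0 : LaurentSeries R) c := fun i _ => by simp

lemma Bd.add {y z : LaurentSeries R} {c : ℤ} (h : Bd y c) (h' : Bd z c) : Bd (y + z) c :=
  fun i hi => by simp [h i hi, h' i hi]

lemma Bd.sub {y z : LaurentSeries R} {c : ℤ} (h : Bd y c) (h' : Bd z c) : Bd (y - z) c :=
  fun i hi => by simp [h i hi, h' i hi]

lemma Bd.neg {y : LaurentSeries R} {c : ℤ} (h : Bd y c) : Bd (-y) c :=
  fun i hi => by simp [h i hi]

lemma Bd.mul {y z : LaurentSeries R} {c d : ℤ} (h : Bd y c) (h' : Bd z d) :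
    Bd (y * z) (c + d) := by
  rw [bd_iff] at *
  rw [HahnSeries.orderTop_mul, WithTop.coe_add]
  exact add_le_add h h'

lemma bd_single (c : ℤ) (r : R) : Bd (HahnSeries.single c r : LaurentSeries R) c :=
  fun i hi => by simp [HahnSeries.coeff_single_of_ne hi.ne]

lemma bd_one : Bd (1 : LaurentSeries R) 0 := bd_single 0 1

lemma bd_C (r : R) : Bd (HahnSeries.C r : LaurentSeries R) 0 := bd_single 0 r

lemma Bd.pow {y : LaurentSeries R} {c : ℤ} (h : Bd y c) (m : ℕ) : Bd (y ^ m) (m * c) := by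
  induction m with
  | zero => simpa using bd_one
  | succ m ih =>
    rw [pow_succ]
    refine (ih.mul h).mono (le_of_eq ?_)
    push_cast; ring

lemma bd_sum {ι : Type*} {s : Finset ι} {f : ι → LaurentSeries R} {c : ℤ}
    (h : ∀ i ∈ s, Bd (f i) c) : Bd (∑ i ∈ s, f i) c := by
  classical
  induction s using Finset.induction_on with
  | empty => simpa using bd_zero c
  | insert a s ha ih =>
    rw [Finset.sum_insert ha]
    exact (h a (by simp)).add (ih fun i hi => h i (by simp [hi]))

lemma eq_zero_of_bd {y : LaurentSeries R} (h : ∀ c : ℤ, ∃ d, c ≤ d ∧ Bd y d) : y = 0 := by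
  ext i
  obtain ⟨d, hd, hy⟩ := h (i + 1)
  exact hy i (by omega)

lemma exists_bd (y : LaurentSeries R) : ∃ c, Bd y c := by
  by_cases hy : y = 0
  · exact ⟨0, hy ▸ bd_zero 0⟩
  · refine ⟨y.order, bd_iff.2 ?_⟩
    rw [HahnSeries.order_eq_orderTop_of_ne_zero hy]

lemma Od.bd {y : LaurentSeries R} {c : ℤ} (h : Od y c) : Bd y c := bd_iff.2 h.ge

lemma Od.ne_zero {y : LaurentSeries R} {c : ℤ} (h : Od y c) : y ≠ 0 := by
  rintro rfl
  simp [Od] at h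

lemma exists_od {y : LaurentSeries R} (hy : y ≠ 0) : ∃ c, Od y c :=
  ⟨y.order, (HahnSeries.order_eq_orderTop_of_ne_zero hy).symm⟩

lemma Od.unique {y : LaurentSeries R} {c d : ℤ} (h : Od y c) (h' : Od y d) : c = d := by
  rw [Od] at h h'
  exact_mod_cast h.symm.trans h'

lemma Od.le_of_bd {y : LaurentSeries R} {c d : ℤ} (h : Od y c) (h' : Bd y d) : d ≤ c := by
  rw [bd_iff, h] at h'
  exact_mod_cast h'

lemma od_iff {y : LaurentSeries R} {c : ℤ} : Od y c ↔ Bd y c ∧ y.coeff c ≠ 0 := by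
  constructor
  · intro h
    refine ⟨h.bd, fun h0 => ?_⟩
    have := h.le_of_bd (d := c + 1) fun i hi => by
      rcases (show i < c ∨ i = c by omega) with h1 | rfl
      · exact h.bd i h1
      · exact h0
    omega
  · rintro ⟨h, h0⟩
    have hy : y ≠ 0 := by rintro rfl; simp at h0
    obtain ⟨d, hd⟩ := exists_od hy
    have h1 := hd.le_of_bd h
    rcases h1.eq_or_lt with rfl | h1
    · exact hd
    · exact absurd (hd.bd c h1) h0

lemma Od.mul {y z : LaurentSeries R} {c d : ℤ} (h : Od y c) (h' : Od z d) :
    Od (y * z) (c + d) := by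
  rw [Od] at *
  rw [HahnSeries.orderTop_mul, h, h', WithTop.coe_add]

lemma od_single (c : ℤ) {r : R} (hr : r ≠ 0) :
    Od (HahnSeries.single c r : LaurentSeries R) c :=
  HahnSeries.orderTop_single hr

lemma od_one : Od (1 : LaurentSeries R) 0 := od_single 0 one_ne_zero

lemma Od.pow {y : LaurentSeries R} {c : ℤ} (h : Od y c) (m : ℕ) : Od (y ^ m) (m * c) := by
  induction m with
  | zero => simpa using od_one
  | succ m ih =>
    rw [pow_succ]
    have := ih.mul h
    rwa [show ((m + 1 : ℕ) : ℤ) * c = m * c + c by push_cast; ring]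

lemma Od.inv {y : LaurentSeries R} {c : ℤ} (h : Od y c) : Od y⁻¹ (-c) := by
  obtain ⟨d, hd⟩ := exists_od (inv_ne_zero h.ne_zero)
  have := h.mul hd
  rw [mul_inv_cancel₀ h.ne_zero] at this
  have := this.unique od_one
  rwa [show -c = d by omega]

lemma Od.neg {y : LaurentSeries R} {c : ℤ} (h : Od y c) : Od (-y) c := by
  rw [od_iff] at *
  exact ⟨h.1.neg, by simpa using h.2⟩

lemma Od.add {y z : LaurentSeries R} {c : ℤ} (h : Od y c) (h' : Bd z (c + 1)) :
    Od (y + z) c := by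
  rw [od_iff] at *
  refine ⟨h.1.add (h'.mono (by omega)), ?_⟩
  rw [HahnSeries.coeff_add, h' c (by omega), add_zero]
  exact h.2

lemma Od.sub {y z : LaurentSeries R} {c : ℤ} (h : Od y c) (h' : Bd z (c + 1)) :
    Od (y - z) c := by
  rw [sub_eq_add_neg]; exact h.add h'.neg

lemma od_prod {ι : Type*} {s : Finset ι} {f : ι → LaurentSeries R} {c : ι → ℤ}
    (h : ∀ i ∈ s, Od (f i) (c i)) : Od (∏ i ∈ s, f i) (∑ i ∈ s, c i) := by
  classical
  induction s using Finset.induction_on with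
  | empty => simpa using od_one
  | insert a s ha ih =>
    rw [Finset.prod_insert ha, Finset.sum_insert ha]
    exact (h a (by simp)).mul (ih fun i hi => h i (by simp [hi]))

/-- Completeness of the field of Laurent series, with explicit error terms. -/
lemma exists_limit (s : ℕ → LaurentSeries R) (a : ℕ → ℤ) (ha : Monotone a)
    (hu : ∀ c, ∃ I, c ≤ a I) (h : ∀ I, Bd (s (I + 1) - s I) (a I)) :
    ∃ F : LaurentSeries R, ∀ I, Bd (F - s I) (a I) := by
  have h2 : ∀ I J, I ≤ J → Bd (s J - s I) (a I) := by
    intro I J hIJ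
    induction J, hIJ using Nat.le_induction with
    | base => simpa using bd_zero _
    | succ J hJ ih =>
      rw [show s (J + 1) - s I = (s (J + 1) - s J) + (s J - s I) by ring]
      exact ((h J).mono (ha hJ)).add ih
  choose K hK using fun c : ℤ => hu (c + 1)
  have h3 : ∀ i I, i < a I → (s (K i)).coeff i = (s I).coeff i := by
    intro i I hi
    rcases le_total (K i) I with hle | hle
    · have := h2 _ _ hle i (by have := hK i; omega)
      rw [HahnSeries.coeff_sub, sub_eq_zero] at this
      exact this.symm
    · have := h2 _ _ hle i hi
      rw [HahnSeries.coeff_sub, sub_eq_zero] at this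
      exact this
  obtain ⟨c0, hc0⟩ := exists_bd (s 0)
  have hb : BddBelow (Function.support fun i : ℤ => (s (K i)).coeff i) := by
    refine ⟨min c0 (a 0), fun i hi => ?_⟩
    by_contra hlt
    push Not at hlt
    apply hi
    simp only
    rw [h3 i 0 (lt_of_lt_of_le hlt (min_le_right _ _))]
    exact hc0 i (lt_of_lt_of_le hlt (min_le_left _ _))
  refine ⟨HahnSeries.ofSuppBddBelow _ hb, fun I i hi => ?_⟩
  rw [HahnSeries.coeff_sub, sub_eq_zero]
  exact h3 i I hi

end Order

/-! ### Difference algebra -/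

section Difference

lemma choose_ne_zero_of_char {L : Type*} [Field L] (p : ℕ) [Fact p.Prime] [CharP L p]
    (i b' : ℕ) (hb : ¬ p ∣ b') : ((Nat.choose (p ^ i * b') (p ^ i) : ℕ) : L) ≠ 0 := by
  have hp : 0 < p ^ i := pow_pos (Fact.out : p.Prime).pos i
  have h1 : ((X : L[X]) + 1) ^ (p ^ i * b') = expand L (p ^ i) ((X + 1) ^ b') := by
    rw [pow_mul, add_pow_char_pow]
    simp
  have h2 := congrArg (fun P : L[X] => P.coeff (p ^ i)) h1
  beta_reduce at h2
  rw [coeff_X_add_one_pow, coeff_expand hp, if_pos dvd_rfl, Nat.div_self hp,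
    coeff_X_add_one_pow, Nat.choose_one_right] at h2
  rw [h2]
  intro h
  exact hb ((CharP.cast_eq_zero_iff L p b').1 h)

variable {K0 L : Type*} [Field K0] [Field L] [Algebra K0 L]

/-- The triviality of `τ c = β ^ m c` over `K0` passes to elements algebraic over `K0`. -/
lemma eq_zero_of_isAlgebraic
    (τ : L →+* L) (τ0 : K0 →+* K0) (hτ : ∀ c, τ (algebraMap K0 L c) = algebraMap K0 L (τ0 c))
    (β : K0) (hβ : β ≠ 0)
    (hR : ∀ c : K0, ∀ m : ℕ, 1 ≤ m → τ0 c = β ^ m * c → c = 0)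
    (c : L) (hc : IsAlgebraic K0 c) (m : ℕ) (hm : 1 ≤ m)
    (h1 : τ c = algebraMap K0 L (β ^ m) * c) : c = 0 := by
  have hci : IsIntegral K0 c := hc.isIntegral
  set P := minpoly K0 c with hP
  have hPm : P.Monic := minpoly.monic hci
  set P1 : K0[X] := (P.map τ0).comp (C (β ^ m) * X) with hP1
  have hr : 0 < P.natDegree := minpoly.natDegree_pos hci
  have hbm : β ^ m ≠ 0 := pow_ne_zero _ hβ
  have hnd : (C (β ^ m) * X : K0[X]).natDegree = 1 := natDegree_C_mul_X _ hbm
  have hdeg : P1.natDegree = P.natDegree := by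
    rw [hP1, natDegree_comp, hnd, mul_one, natDegree_map]
  have hlead : P1.leadingCoeff = (β ^ m) ^ P.natDegree := by
    rw [hP1, leadingCoeff_comp (by rw [hnd]; norm_num), leadingCoeff_map, hPm.leadingCoeff,
      leadingCoeff_C_mul_X, natDegree_map]
    simp
  have hev : aeval c P1 = 0 := by
    rw [hP1, aeval_comp]
    simp only [map_mul, aeval_C, aeval_X]
    rw [← h1, aeval_def, eval₂_map, show (algebraMap K0 L).comp τ0 = τ.comp (algebraMap K0 L) from
      RingHom.ext fun x => (hτ x).symm, ← hom_eval₂, ← aeval_def]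
    rw [hP, minpoly.aeval, map_zero]
  have hdvd : P ∣ P1 := minpoly.dvd K0 c hev
  have heq := eq_leadingCoeff_mul_of_monic_of_dvd_of_natDegree_le hPm hdvd hdeg.le
  have h0 : τ0 (P.coeff 0) = β ^ (m * P.natDegree) * P.coeff 0 := by
    have := congrArg (fun Q : K0[X] => Q.coeff 0) heq
    simp only [coeff_C_mul, hlead, ← pow_mul] at this
    rw [← this, hP1, coeff_zero_eq_eval_zero (Polynomial.comp _ _), eval_comp]
    simp [← coeff_zero_eq_eval_zero]
  have := hR _ _ (Nat.mul_pos hm hr) h0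
  rwa [minpoly.coeff_zero_eq_zero hci] at this

/-- The key step: a nonconstant polynomial over `K0` which is semi-invariant under
`Y ↦ β ^ n (Y - h)` forces a `p`-power of `F` to lie in `K0`. -/
lemma exists_pow_mem_of_semiinvariant (p : ℕ) [Fact p.Prime] [CharP L p]
    (τ : L →+* L) (τ0 : K0 →+* K0) (hτ : ∀ c, τ (algebraMap K0 L c) = algebraMap K0 L (τ0 c))
    (β : K0) (hβ : β ≠ 0)
    (hR : ∀ c : K0, ∀ m : ℕ, 1 ≤ m → τ0 c = β ^ m * c → c = 0)
    (h : K0) (n : ℕ) (hn : 1 ≤ n) (F : L)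
    (hF : τ F = algebraMap K0 L (β ^ n) * (F - algebraMap K0 L h))
    (hO : ∀ e : L, ∀ i : ℕ, τ e = algebraMap K0 L (β ^ (n * p ^ i)) * e → e = 0)
    (P : K0[X]) (m : ℕ) (hb : 1 ≤ P.natDegree)
    (hP : (P.map τ0).comp (C (β ^ n) * (X - C h)) = C (β ^ m) * P) :
    ∃ i : ℕ, ∃ f : K0, F ^ p ^ i = algebraMap K0 L f := by
  set b := P.natDegree with hbdef
  have hP0 : P ≠ 0 := by rintro rfl; simp [hbdef] at hb
  set c := P.leadingCoeff with hc
  have hc0 : c ≠ 0 := leadingCoeff_ne_zero.2 hP0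
  have hbn : β ^ n ≠ 0 := pow_ne_zero _ hβ
  have hlin : (C (β ^ n) * (X - C h) : K0[X]).natDegree = 1 := by
    rw [natDegree_C_mul hbn, natDegree_X_sub_C]
  -- comparison of leading coefficients pins down the multiplier
  have hlc : τ0 c * β ^ (n * b) = β ^ m * c := by
    have := congrArg leadingCoeff hP
    rw [leadingCoeff_comp (by rw [hlin]; norm_num), leadingCoeff_map, leadingCoeff_mul,
      leadingCoeff_X_sub_C, leadingCoeff_C, natDegree_map, leadingCoeff_mul, leadingCoeff_C,
      mul_one, ← pow_mul] at this
    exact this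
  have hm : m = n * b := by
    rcases lt_trichotomy m (n * b) with hlt | heq | hgt
    · exfalso
      obtain ⟨e, he⟩ := Nat.exists_eq_add_of_lt hlt
      have h1 : τ0 c⁻¹ = β ^ (e + 1) * c⁻¹ := by
        rw [map_inv₀]
        have hτc : τ0 c ≠ 0 := by simpa using hc0
        rw [he, add_assoc, pow_add] at hlc
        field_simp
        have := mul_left_cancel₀ (pow_ne_zero m hβ)
          (show β ^ m * (τ0 c * β ^ (e + 1)) = β ^ m * c by rw [← hlc]; ring)
        linear_combination -this
      exact inv_ne_zero hc0 (hR _ _ (by omega) h1)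
    · exact heq
    · exfalso
      obtain ⟨e, he⟩ := Nat.exists_eq_add_of_lt hgt
      have h1 : τ0 c = β ^ (e + 1) * c := by
        rw [he, add_assoc, pow_add] at hlc
        exact mul_left_cancel₀ (pow_ne_zero (n * b) hβ) (by rw [mul_comm, hlc]; ring)
      exact hc0 (hR _ _ (by omega) h1)
  subst hm
  set PL : L[X] := P.map (algebraMap K0 L) with hPL
  set G : L[X] := taylor F PL with hG
  have hGc : ∀ j, G.coeff j = aeval F (hasseDeriv j P) := by
    intro j
    have h1 : hasseDeriv j PL = (hasseDeriv j P).map (algebraMap K0 L) := by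
      ext l
      simp [hPL, hasseDeriv_coeff]
    rw [hG, taylor_coeff, h1, eval_map, aeval_def]
  have hGτ : (G.map τ).comp (C (algebraMap K0 L (β ^ n)) * X) =
      C (algebraMap K0 L (β ^ (n * b))) * G := by
    have h1 := congrArg (fun Q : K0[X] => taylor F (Q.map (algebraMap K0 L))) hP
    beta_reduce at h1
    rw [Polynomial.map_mul, map_C, taylor_mul, taylor_C, Polynomial.map_comp, taylor_apply] at h1
    rw [hG, ← h1, taylor_apply, Polynomial.map_comp, comp_assoc, comp_assoc, hPL,
      Polynomial.map_map, Polynomial.map_map, show (algebraMap K0 L).comp τ0 =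
      τ.comp (algebraMap K0 L) from RingHom.ext fun x => (hτ x).symm]
    congr 1
    simp only [Polynomial.map_add, Polynomial.map_mul, Polynomial.map_sub, map_X, map_C, hF,
      mul_comp, add_comp, sub_comp, X_comp, C_comp, C_mul, C_sub]
    ring
  have hg : ∀ j ≤ b, τ (G.coeff j) = algebraMap K0 L (β ^ (n * (b - j))) * G.coeff j := by
    intro j hj
    have h1 := congrArg (fun Q : L[X] => Q.coeff j) hGτ
    beta_reduce at h1
    rw [comp_C_mul_X_coeff, coeff_map, coeff_C_mul, ← map_pow, ← pow_mul] at h1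
    have h2 : n * b = n * (b - j) + n * j := by rw [← mul_add, Nat.sub_add_cancel hj]
    rw [h2, pow_add, map_mul] at h1
    have h3 : algebraMap K0 L (β ^ (n * j)) ≠ 0 := by
      simpa using fun h => absurd h hβ
    apply mul_right_cancel₀ h3
    rw [h1]; ring
  -- split off the exact power of `p` dividing the degree
  obtain ⟨i, b', hb', hbb⟩ := Nat.exists_eq_pow_mul_and_not_dvd (n := b) (by omega) p
    (Fact.out : p.Prime).ne_one
  have hpi : 0 < p ^ i := pow_pos (Fact.out : p.Prime).pos i
  have hle : p ^ i ≤ b := by rw [hbb]; exact Nat.le_mul_of_pos_right _ (by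
    rcases Nat.eq_zero_or_pos b' with h | h
    · subst h; simp at hb'
    · exact h)
  have hch : ((Nat.choose b (b - p ^ i) : ℕ) : L) ≠ 0 := by
    rw [Nat.choose_symm hle, hbb]
    exact choose_ne_zero_of_char p i b' hb'
  have hg0 : G.coeff (b - p ^ i) = 0 := by
    apply hO _ i
    rw [hg _ (Nat.sub_le _ _), Nat.sub_sub_self hle]
  have halg : IsAlgebraic K0 F := by
    refine ⟨hasseDeriv (b - p ^ i) P, ?_, by rw [← hGc, hg0]⟩
    intro h0
    have := congrArg (fun Q : K0[X] => Q.coeff (p ^ i)) h0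
    simp only [hasseDeriv_coeff, coeff_zero, mul_eq_zero] at this
    rw [Nat.add_sub_cancel' hle] at this
    rcases this with h1 | h1
    · apply hch
      rw [← map_natCast (algebraMap K0 L), h1, map_zero]
    · exact hc0 h1
  have hgall : ∀ j < b, G.coeff j = 0 := by
    intro j hj
    refine eq_zero_of_isAlgebraic τ τ0 hτ β hβ hR _ ?_ (n * (b - j))
      (Nat.mul_pos hn (by omega)) (hg j hj.le)
    rw [hGc]
    have hmem : aeval F (hasseDeriv j P) ∈ IntermediateField.adjoin K0 {F} :=
      (IntermediateField.mem_adjoin_simple_iff K0 _).2 ⟨hasseDeriv j P, 1, by simp⟩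
    have := IntermediateField.isAlgebraic_adjoin_simple halg.isIntegral
    exact IntermediateField.isAlgebraic_iff.1 (this.isAlgebraic ⟨_, hmem⟩)
  have hGdeg : G.natDegree = b := by
    rw [hG, natDegree_taylor, hPL, natDegree_map]
  have hGb : G = C (algebraMap K0 L c) * X ^ b := by
    ext j
    rw [coeff_C_mul_X_pow]
    split_ifs with hj
    · subst hj
      have : G.leadingCoeff = algebraMap K0 L c := by
        rw [hG, leadingCoeff_taylor, hPL, leadingCoeff_map]
      rw [← this, leadingCoeff, hGdeg]
    · rcases lt_or_gt_of_ne hj with h1 | h1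
      · exact hgall j h1
      · exact coeff_eq_zero_of_natDegree_lt (by omega)
  have hPLeq : PL = C (algebraMap K0 L c) * (X - C F) ^ b := by
    have h1 : taylor (-F) G = PL := by
      rw [hG, taylor_taylor, neg_add_cancel, taylor_zero]
    rw [← h1, hGb]
    simp [taylor_apply, sub_eq_add_neg]
  have hco := congrArg (fun Q : L[X] => Q.coeff (b - p ^ i)) hPLeq
  beta_reduce at hco
  rw [hPL, coeff_map, coeff_C_mul, sub_eq_add_neg, ← C_neg, coeff_X_add_C_pow,
    Nat.sub_sub_self hle] at hco
  refine ⟨i, (-1) ^ p ^ i * (P.coeff (b - p ^ i) / (c * (Nat.choose b (b - p ^ i) : ℕ))), ?_⟩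
  rw [map_mul, map_div₀, hco, map_mul, map_natCast, map_pow, map_neg, map_one, neg_pow F]
  have hcL : algebraMap K0 L c ≠ 0 := by simpa using hc0
  field_simp
  rw [← pow_mul, mul_comm (p ^ i) 2, pow_mul]
  simp

/-- An algebraic relation between the solutions `w`, `F` of the difference equations
`τ w = β ^ a w` and `τ F = β ^ n (F - h)` forces a `p`-power of `F` to lie in `K0`.
The outer variable of `Q` stands for `w`, the inner one for `F`; a relation which is minimal for
the lexicographic order of degrees is an eigenvector of the transformation induced by `τ`. -/
lemma exists_pow_mem_of_relation (p : ℕ) [Fact p.Prime] [CharP L p]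
    (τ : L →+* L) (τ0 : K0 →+* K0) (hτ : ∀ c, τ (algebraMap K0 L c) = algebraMap K0 L (τ0 c))
    (β : K0) (hβ : β ≠ 0)
    (hR : ∀ c : K0, ∀ m : ℕ, 1 ≤ m → τ0 c = β ^ m * c → c = 0)
    (h : K0) (n : ℕ) (hn : 1 ≤ n) (F : L)
    (hF : τ F = algebraMap K0 L (β ^ n) * (F - algebraMap K0 L h))
    (hO : ∀ e : L, ∀ i : ℕ, τ e = algebraMap K0 L (β ^ (n * p ^ i)) * e → e = 0)
    (w : L) (hw : w ≠ 0) (a : ℕ) (ha : 1 ≤ a) (hwτ : τ w = algebraMap K0 L (β ^ a) * w)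
    (Q0 : K0[X][X]) (hQ0 : Q0 ≠ 0) (hQ0ev : Q0.eval₂ (aeval F : K0[X] →ₐ[K0] L).toRingHom w = 0) :
    ∃ i : ℕ, ∃ f : K0, F ^ p ^ i = algebraMap K0 L f := by
  set ev : K0[X][X] →+* L := eval₂RingHom (aeval F : K0[X] →ₐ[K0] L).toRingHom w with hev
  set T1 : K0[X] →+* K0[X] := eval₂RingHom (C.comp τ0) (C (β ^ n) * (X - C h)) with hT1
  set T : K0[X][X] →+* K0[X][X] := eval₂RingHom (C.comp T1) (C (C (β ^ a)) * X) with hT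
  have hT1' : ∀ P : K0[X], T1 P = (P.map τ0).comp (C (β ^ n) * (X - C h)) := by
    intro P
    rw [hT1, coe_eval₂RingHom, Polynomial.comp, eval₂_map]
  have hT' : ∀ Q : K0[X][X], T Q = (Q.map T1).comp (C (C (β ^ a)) * X) := by
    intro P
    rw [hT, coe_eval₂RingHom, Polynomial.comp, eval₂_map]
  have hTev : ∀ Q, ev (T Q) = τ (ev Q) := by
    intro Q
    have : ev.comp T = τ.comp ev := by
      ext c
      · simp [hev, hT, hT1, hτ]
      · simp [hev, hT, hT1, hF, eval₂_pow]
      · simp [hev, hT, hT1, hwτ, eval₂_pow]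
    exact DFunLike.congr_fun this Q
  have hTc : ∀ Q j, (T Q).coeff j = T1 (Q.coeff j) * C (β ^ (a * j)) := by
    intro Q j
    rw [hT', comp_C_mul_X_coeff, coeff_map, ← C_pow, ← pow_mul]
  -- a minimal relation
  let μ : K0[X][X] → ℕ ×ₗ ℕ := fun Q => toLex (Q.natDegree, Q.leadingCoeff.natDegree)
  obtain ⟨Q, ⟨hQ, hQev⟩, hmin⟩ := WellFounded.has_min (InvImage.wf μ wellFounded_lt)
    {Q : K0[X][X] | Q ≠ 0 ∧ ev Q = 0} ⟨Q0, hQ0, hQ0ev⟩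
  replace hmin : ∀ Q', ev Q' = 0 → Q' ≠ 0 → ¬ μ Q' < μ Q := fun Q' h1 h2 => hmin Q' ⟨h2, h1⟩
  set A := Q.natDegree with hA
  set q := Q.leadingCoeff with hq
  have hq0 : q ≠ 0 := leadingCoeff_ne_zero.2 hQ
  set B := q.natDegree with hB
  set c := q.leadingCoeff with hc
  have hc0 : c ≠ 0 := leadingCoeff_ne_zero.2 hq0
  have hbn : β ^ n ≠ 0 := pow_ne_zero _ hβ
  have hlin : (C (β ^ n) * (X - C h) : K0[X]).natDegree = 1 := by
    rw [natDegree_C_mul hbn, natDegree_X_sub_C]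
  have hT1deg : ∀ P, (T1 P).natDegree = P.natDegree := by
    intro P
    rw [hT1', natDegree_comp, hlin, mul_one, natDegree_map]
  have hT1lc : ∀ P, (T1 P).leadingCoeff = τ0 P.leadingCoeff * β ^ (n * P.natDegree) := by
    intro P
    rw [hT1', leadingCoeff_comp (by rw [hlin]; norm_num), leadingCoeff_map, leadingCoeff_mul,
      leadingCoeff_X_sub_C, leadingCoeff_C, natDegree_map, mul_one, ← pow_mul]
  have hTQ : C (C c) * T Q = C (C (τ0 c * β ^ (a * A + n * B))) * Q := by
    by_contra hne
    set D := C (C c) * T Q - C (C (τ0 c * β ^ (a * A + n * B))) * Q with hD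
    have hD0 : D ≠ 0 := sub_ne_zero.2 hne
    have hDev : ev D = 0 := by
      rw [hD, map_sub, map_mul, map_mul, hTev, hQev]; simp
    have hDA : ∀ j, D.coeff j = C c * (T1 (Q.coeff j) * C (β ^ (a * j))) -
        C (τ0 c * β ^ (a * A + n * B)) * Q.coeff j := by
      intro j
      rw [hD, coeff_sub, coeff_C_mul, coeff_C_mul, hTc]
    have hDdeg : D.natDegree ≤ A := by
      refine natDegree_le_iff_coeff_eq_zero.2 fun j hj => ?_
      rw [hDA, coeff_eq_zero_of_natDegree_lt (show Q.natDegree < j from hj)]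
      simp
    apply hmin D hDev hD0
    rw [Prod.Lex.toLex_lt_toLex]
    rcases hDdeg.lt_or_eq with hlt | heq
    · exact Or.inl hlt
    · refine Or.inr ⟨heq, ?_⟩
      have hlD : D.leadingCoeff = C c * (T1 q * C (β ^ (a * A))) -
          C (τ0 c * β ^ (a * A + n * B)) * q := by
        rw [leadingCoeff, heq, hDA]; rfl
      have hne0 : D.leadingCoeff ≠ 0 := leadingCoeff_ne_zero.2 hD0
      have hBc : D.leadingCoeff.coeff B = 0 := by
        rw [hlD, coeff_sub, coeff_C_mul, coeff_mul_C, coeff_C_mul]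
        have h1 : (T1 q).coeff B = τ0 c * β ^ (n * B) := by
          rw [hB, ← hT1deg, coeff_natDegree, hT1lc, hT1deg]
        have h2 : q.coeff B = c := rfl
        rw [h1, h2, pow_add]
        ring
      have hle : D.leadingCoeff.natDegree ≤ B := by
        rw [hlD]
        refine (natDegree_sub_le _ _).trans (max_le ?_ ?_)
        · refine (natDegree_C_mul_le _ _).trans ((natDegree_mul_C_le _ _).trans ?_)
          rw [hT1deg]
        · exact natDegree_C_mul_le _ _
      refine lt_of_le_of_ne hle fun h1 => hne0 ?_
      replace h1 : D.leadingCoeff.natDegree = B := h1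
      rw [← leadingCoeff_eq_zero, leadingCoeff, h1, hBc]
  -- some coefficient is not constant, as `w` is transcendental over `K0`
  have hnc : ∃ j, 1 ≤ (Q.coeff j).natDegree := by
    by_contra hall
    push Not at hall
    have hQC : Q = (Q.map (evalRingHom 0)).map C := by
      ext j : 1
      rw [coeff_map, coeff_map, coe_evalRingHom, ← coeff_zero_eq_eval_zero]
      exact eq_C_of_natDegree_eq_zero (by have := hall j; omega)
    apply hw
    refine eq_zero_of_isAlgebraic τ τ0 hτ β hβ hR w ⟨Q.map (evalRingHom 0), ?_, ?_⟩ a ha hwτ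
    · intro h0
      apply hQ
      rw [hQC, h0, Polynomial.map_zero]
    · rw [hQC] at hQev
      rw [hev, coe_eval₂RingHom, eval₂_map] at hQev
      rw [aeval_def, ← hQev]
      congr 1
      ext x
      simp
  obtain ⟨j, hj⟩ := hnc
  have hjA : j ≤ A := by
    by_contra hlt
    rw [coeff_eq_zero_of_natDegree_lt (show Q.natDegree < j by omega)] at hj
    simp at hj
  set P := Q.coeff j with hP
  have hTP : C c * T1 P = C (τ0 c * β ^ (a * (A - j) + n * B)) * P := by
    have h1 := congrArg (fun Q : K0[X][X] => Q.coeff j) hTQ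
    beta_reduce at h1
    rw [coeff_C_mul, coeff_C_mul, hTc, ← hP] at h1
    have h2 : (C (β ^ (a * j)) : K0[X]) ≠ 0 := C_ne_zero.2 (pow_ne_zero _ hβ)
    apply mul_right_cancel₀ h2
    rw [mul_assoc, h1]
    have h3 : a * A + n * B = a * (A - j) + n * B + a * j := by
      have : a * A = a * (A - j) + a * j := by rw [← mul_add, Nat.sub_add_cancel hjA]
      omega
    rw [h3, pow_add _ _ (a * j), ← mul_assoc, C_mul]
    ring
  refine exists_pow_mem_of_semiinvariant p τ τ0 hτ β hβ hR h n hn F hF hO (C c⁻¹ * P)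
    (a * (A - j) + n * B) (by rwa [natDegree_C_mul (inv_ne_zero hc0)]) ?_
  rw [← hT1', map_mul]
  have h4 : T1 (C c⁻¹) = C (τ0 c)⁻¹ := by simp [hT1]
  have h5 : τ0 c ≠ 0 := by simpa using hc0
  rw [h4]
  have h6 : T1 P = C c⁻¹ * (C c * T1 P) := by
    rw [← mul_assoc, ← C_mul, inv_mul_cancel₀ hc0, C_1, one_mul]
  rw [h6, hTP, ← mul_assoc, ← mul_assoc, ← mul_assoc, ← C_mul, ← C_mul, ← C_mul]
  congr 2
  field_simp

end Difference

/-! ### The Frobenius-type endomorphism of `k((1/x))` and the field `k(x)` -/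

section RationalFunctions

variable {k : Type*} [Field k]

/-- The large element `x` of the Laurent series field `k((1/x))`. -/
def xL (k : Type*) [Field k] : LaurentSeries k := HahnSeries.single (-1 : ℤ) 1

lemma od_xL : Od (xL k) (-1) := od_single _ one_ne_zero

lemma xL_ne_zero : xL k ≠ 0 := od_xL.ne_zero

lemma xL_pow (m : ℕ) : xL k ^ m = HahnSeries.single (-(m : ℤ)) 1 := by
  rw [xL, HahnSeries.single_pow]; simp

lemma xL_zpow (m : ℤ) : xL k ^ m = HahnSeries.single (-m) 1 := by
  rcases m with m | m
  · simpa using xL_pow (k := k) m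
  · rw [zpow_negSucc, xL_pow, HahnSeries.inv_single]
    simp [Int.negSucc_eq]

lemma algebraMap_eq_C (c : k) : algebraMap k (LaurentSeries k) c = HahnSeries.C c := by
  rw [HahnSeries.algebraMap_apply']
  simp

lemma algebraMap_mul_coeff (c : k) (y : LaurentSeries k) (i : ℤ) :
    (algebraMap k (LaurentSeries k) c * y).coeff i = c * y.coeff i := by
  rw [algebraMap_eq_C, HahnSeries.C_apply, HahnSeries.coeff_single_zero_mul]

lemma coeff_aeval_xL (P : k[X]) (j : ℕ) : (aeval (xL k) P).coeff (-(j : ℤ)) = P.coeff j := by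
  induction P using Polynomial.induction_on' with
  | add P Q hP hQ => simp [hP, hQ]
  | monomial i a =>
    rw [aeval_monomial, algebraMap_mul_coeff, xL_pow, coeff_monomial]
    split_ifs with h
    · simp [h]
    · rw [HahnSeries.coeff_single_of_ne (by omega), mul_zero]

lemma bd_algebraMap (c : k) : Bd (algebraMap k (LaurentSeries k) c) 0 := by
  rw [algebraMap_eq_C]
  exact bd_C c

lemma bd_aeval_xL (P : k[X]) (d : ℕ) (h : P.natDegree ≤ d) : Bd (aeval (xL k) P) (-(d : ℤ)) := by
  rw [aeval_eq_sum_range]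
  refine bd_sum fun i hi => ?_
  rw [Algebra.smul_def]
  have h1 := (bd_algebraMap (P.coeff i)).mul (od_xL (k := k).pow i).bd
  refine h1.mono ?_
  simp at hi
  omega

lemma od_aeval_xL (P : k[X]) (h : P ≠ 0) : Od (aeval (xL k) P) (-(P.natDegree : ℤ)) := by
  rw [od_iff]
  refine ⟨bd_aeval_xL P _ le_rfl, ?_⟩
  rw [coeff_aeval_xL]
  exact leadingCoeff_ne_zero.2 h

lemma aeval_xL_injective : Function.Injective (aeval (xL k) : k[X] →ₐ[k] LaurentSeries k) := by
  intro P Q h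
  ext j
  rw [← coeff_aeval_xL, ← coeff_aeval_xL, h]

/-- The `k`-linear endomorphism of `k((1/x))` with `x ↦ x ^ q`. -/
def tau (k : Type*) [Field k] {q : ℕ} (hq : 0 < q) : LaurentSeries k →+* LaurentSeries k :=
  HahnSeries.embDomainRingHom (AddMonoidHom.mulLeft (q : ℤ))
    (fun a b h => by
      simp only [AddMonoidHom.coe_mulLeft] at h
      exact mul_left_cancel₀ (by exact_mod_cast hq.ne') h)
    (fun a b => by
      simp only [AddMonoidHom.coe_mulLeft]
      exact mul_le_mul_iff_right₀ (by exact_mod_cast hq))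

variable {q : ℕ} (hq : 0 < q)

lemma tau_single (i : ℤ) (c : k) :
    tau k hq (HahnSeries.single i c) = HahnSeries.single (q * i) c := by
  exact HahnSeries.embDomain_single

lemma tau_algebraMap (c : k) : tau k hq (algebraMap k _ c) = algebraMap k _ c := by
  rw [algebraMap_eq_C]
  exact HahnSeries.embDomainRingHom_C

lemma tau_xL : tau k hq (xL k) = xL k ^ q := by
  rw [xL, tau_single, ← xL, xL_pow]
  simp

lemma tau_aeval (P : k[X]) : tau k hq (aeval (xL k) P) = aeval (xL k) (expand k q P) := by
  rw [expand_aeval, ← tau_xL hq, aeval_def, hom_eval₂, aeval_def]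
  congr 1
  ext c : 1
  exact tau_algebraMap hq c

lemma Od.tau {y : LaurentSeries k} {c : ℤ} (h : Od y c) : Od (tau k hq y) (q * c) := by
  rw [Od] at *
  refine (HahnSeries.orderTop_embDomain (x := y)).trans ?_
  rw [h]
  rfl

lemma Bd.tau {y : LaurentSeries k} {c : ℤ} (h : Bd y c) : Bd (tau k hq y) (q * c) := by
  by_cases hy : y = 0
  · rw [hy, map_zero]; exact bd_zero _
  · obtain ⟨d, hd⟩ := exists_od hy
    refine (hd.tau hq).bd.mono ?_
    exact mul_le_mul_of_nonneg_left (hd.le_of_bd h) (by positivity)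

/-- The subfield `k(x)` of `k((1/x))`. -/
def kx (k : Type*) [Field k] : IntermediateField k (LaurentSeries k) :=
  IntermediateField.adjoin k {xL k}

lemma mem_kx {f : LaurentSeries k} :
    f ∈ kx k ↔ ∃ P S : k[X], f = aeval (xL k) P / aeval (xL k) S :=
  IntermediateField.mem_adjoin_simple_iff k f

lemma aeval_mem_kx (P : k[X]) : aeval (xL k) P ∈ kx k := mem_kx.2 ⟨P, 1, by simp⟩

lemma tau_mem_kx {f : LaurentSeries k} (hf : f ∈ kx k) : tau k hq f ∈ kx k := by
  obtain ⟨P, S, rfl⟩ := mem_kx.1 hf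
  exact mem_kx.2 ⟨expand k q P, expand k q S, by rw [map_div₀, tau_aeval, tau_aeval]⟩

/-- The element `t - x ^ q` as a polynomial in `x`. -/
def betaP (q : ℕ) (t : k) : k[X] := C t - X ^ q

lemma od_beta (hq : 0 < q) (t : k) : Od (aeval (xL k) (betaP q t)) (-(q : ℤ)) := by
  have h1 : aeval (xL k) (betaP q t) = -(xL k ^ q) + algebraMap k _ t := by
    simp [betaP]; ring
  rw [h1]
  refine Od.add ?_ ((bd_algebraMap t).mono (by omega))
  have := (od_xL (k := k).pow q).neg
  simpa using this

lemma natDegree_betaP (hq : 0 < q) (t : k) : (betaP q t).natDegree = q := by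
  rw [betaP, natDegree_sub_eq_right_of_natDegree_lt (by simpa using hq), natDegree_X_pow]

/-- A rational solution `f` of `τ f = (t - x ^ q) ^ m (f - G)` is a polynomial vanishing
at `t`. -/
lemma exists_polynomial_of_mem_kx (hq2 : 2 ≤ q) (t : k) (m : ℕ) (hm : 1 ≤ m)
    (G : k[X]) {f : LaurentSeries k} (hf : f ∈ kx k)
    (h : tau k hq f = aeval (xL k) (betaP q t) ^ m * (f - aeval (xL k) G)) :
    ∃ P : k[X], f = aeval (xL k) P ∧ expand k q P = betaP q t ^ m * (P - G) ∧
      P.eval t = 0 := by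
  classical
  have hdeg : ∀ P : k[X], f = aeval (xL k) P → ∃ P : k[X], f = aeval (xL k) P ∧
      expand k q P = betaP q t ^ m * (P - G) ∧ P.eval t = 0 := by
    intro P hP
    have hexp : expand k q P = betaP q t ^ m * (P - G) := by
      apply aeval_xL_injective
      rw [← tau_aeval hq, ← hP, h, map_mul, map_pow, map_sub, hP]
    refine ⟨P, hP, hexp, ?_⟩
    obtain ⟨W, hW⟩ : (X - C t) ∣ P - C (P.eval t) := X_sub_C_dvd_sub_C_eval
    have h1 : P = (X - C t) * W + C (P.eval t) := by rw [← hW]; ring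
    have h2 : betaP q t ∣ C (P.eval t) := by
      have h3 : expand k q P = -betaP q t * expand k q W + C (P.eval t) := by
        conv_lhs => rw [h1]
        simp [betaP]
      have h4 : C (P.eval t) = betaP q t ^ m * (P - G) + betaP q t * expand k q W := by
        rw [← hexp, h3]; ring
      rw [h4]
      exact dvd_add ((dvd_pow_self _ (by omega)).mul_right _) (dvd_mul_right _ _)
    by_contra h0
    have := natDegree_le_of_dvd h2 (C_ne_zero.2 h0)
    rw [natDegree_betaP hq, natDegree_C] at this
    omega
  obtain ⟨P0, S0, hPS⟩ := mem_kx.1 hf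
  by_cases hS0 : S0 = 0
  · exact hdeg 0 (by rw [hPS, hS0]; simp)
  set g := gcd P0 S0 with hg
  have hg0 : g ≠ 0 := fun h => hS0 ((gcd_eq_zero_iff _ _).1 h).2
  have hcop : IsCoprime (P0 / g) (S0 / g) := isCoprime_div_gcd_div_gcd hS0
  obtain ⟨P, hP⟩ := gcd_dvd_left P0 S0
  obtain ⟨S, hS⟩ := gcd_dvd_right P0 S0
  rw [← hg] at hP hS
  rw [show P0 / g = P by rw [hP, mul_div_cancel_left₀ _ hg0],
    show S0 / g = S by rw [hS, mul_div_cancel_left₀ _ hg0]] at hcop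
  have hinj : ∀ R : k[X], R ≠ 0 → aeval (xL k) R ≠ 0 := fun R hR => (od_aeval_xL R hR).ne_zero
  have hS0' : S ≠ 0 := by rintro rfl; simp [hS] at hS0
  have hfPS : f = aeval (xL k) P / aeval (xL k) S := by
    rw [hPS, hP, hS, map_mul, map_mul, mul_div_mul_left _ _ (hinj g hg0)]
  have hES : expand k q S ≠ 0 := (expand_ne_zero hq).2 hS0'
  have key : expand k q P * S = betaP q t ^ m * (P - G * S) * expand k q S := by
    apply aeval_xL_injective
    rw [hfPS, map_div₀, tau_aeval, tau_aeval] at h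
    have h1 := hinj _ hS0'
    have h2 := hinj _ hES
    field_simp at h
    simp only [map_mul, map_pow, map_sub]
    linear_combination h
  have hd : expand k q S ∣ S := by
    have h1 : IsCoprime (expand k q S) (expand k q P) := by
      have := hcop.map (expand k q).toRingHom
      exact this.symm
    exact h1.dvd_of_dvd_mul_left (Dvd.intro_left _ key.symm)
  have hSd : S.natDegree = 0 := by
    have := natDegree_le_of_dvd hd hS0'
    rw [natDegree_expand] at this
    nlinarith
  obtain ⟨s, hs⟩ := natDegree_eq_zero.1 hSd
  have hs0 : s ≠ 0 := by rintro rfl; apply hS0'; rw [← hs, C_0]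
  refine hdeg (C s⁻¹ * P) ?_
  rw [hfPS, ← hs]
  simp [div_eq_mul_inv, mul_comm]

lemma eq_zero_of_mem_kx (hq2 : 2 ≤ q) (t : k) (ht : Function.Injective fun i : ℕ => t ^ q ^ i)
    (m : ℕ) (hm : 1 ≤ m) {f : LaurentSeries k} (hf : f ∈ kx k)
    (h : tau k hq f = aeval (xL k) (betaP q t) ^ m * f) : f = 0 := by
  obtain ⟨P, hP, hexp, h0⟩ := exists_polynomial_of_mem_kx hq hq2 t m hm 0 hf (by simpa using h)
  have hroot : ∀ i : ℕ, P.eval (t ^ q ^ i) = 0 := by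
    intro i
    induction i with
    | zero => simpa using h0
    | succ i ih =>
      have := congrArg (fun R : k[X] => R.eval (t ^ q ^ i)) hexp
      simp only [expand_eval, eval_mul, sub_zero, ih, mul_zero] at this
      rwa [pow_succ, pow_mul]
  have : P = 0 := eq_zero_of_infinite_isRoot P
    ((Set.infinite_range_of_injective ht).mono (by rintro _ ⟨i, rfl⟩; exact hroot i))
  rw [hP, this, map_zero]

/-- If `w` and `F` satisfy `τ w = β ^ a w`, `τ F = β ^ n (F - H(x))` with `β = t - x ^ q` and are
algebraically dependent over `k(x)`, then a `p`-power of `F` is a polynomial in `x`. -/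
lemma exists_polynomial_of_relation (p : ℕ) [Fact p.Prime] [CharP k p] {f : ℕ} (hqp : q = p ^ f)
    (hq2 : 2 ≤ q) (t : k) (ht : Function.Injective fun i : ℕ => t ^ q ^ i)
    (n : ℕ) (hn : 1 ≤ n) (hodd : ¬ (q - 1) ∣ n) (H : k[X]) (w F : LaurentSeries k) (hw : w ≠ 0)
    (a : ℕ) (ha : 1 ≤ a) (hwτ : tau k hq w = aeval (xL k) (betaP q t) ^ a * w)
    (hF : tau k hq F = aeval (xL k) (betaP q t) ^ n * (F - aeval (xL k) H))
    (D : ℕ) (r : Fin D × Fin D → k[X]) (hr : r ≠ 0)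
    (hrel : ∑ ij, aeval (xL k) (r ij) * (w ^ (ij.1 : ℕ) * F ^ (ij.2 : ℕ)) = 0) :
    ∃ (i : ℕ) (P : k[X]), F ^ p ^ i = aeval (xL k) P ∧
      expand k q P = betaP q t ^ (n * p ^ i) * (P - H ^ p ^ i) ∧ P.eval t = 0 := by
  have : CharP (LaurentSeries k) p := charP_of_injective_algebraMap
    (algebraMap k (LaurentSeries k)).injective p
  let b : kx k := ⟨_, aeval_mem_kx (betaP q t)⟩
  let h : kx k := ⟨_, aeval_mem_kx H⟩
  let τ0 : kx k →+* kx k := (tau k hq).restrict (kx k) (kx k) fun _ hx => tau_mem_kx hq hx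
  have hb : b ≠ 0 := fun h0 => (od_beta hq t).ne_zero (congrArg Subtype.val h0)
  let Q0 : (kx k)[X][X] := ∑ ij : Fin D × Fin D, monomial (ij.1 : ℕ) (monomial (ij.2 : ℕ)
    (⟨_, aeval_mem_kx (r ij)⟩ : kx k))
  have hQ0 : Q0 ≠ 0 := by
    intro h0
    apply hr
    funext ij
    have h1 := congrArg (fun Q : (kx k)[X][X] => (Q.coeff ij.1).coeff ij.2) h0
    simp only [Q0, finsetSum_coeff, coeff_monomial, coeff_zero] at h1
    rw [Finset.sum_eq_single ij] at h1
    · simp only [if_true, coeff_monomial] at h1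
      have := congrArg Subtype.val h1
      apply aeval_xL_injective
      simpa using this
    · intro b' _ hne
      split_ifs with h2
      · rw [coeff_monomial, if_neg]
        intro h3
        exact hne (Prod.ext (Fin.ext h2) (Fin.ext h3))
      · simp
    · simp
  have hev : Q0.eval₂ (aeval F : (kx k)[X] →ₐ[kx k] LaurentSeries k).toRingHom w = 0 := by
    rw [← hrel]
    simp only [Q0, eval₂_finsetSum, eval₂_monomial]
    refine Finset.sum_congr rfl fun ij _ => ?_
    simp only [AlgHom.toRingHom_eq_coe, RingHom.coe_coe, aeval_monomial]
    rw [mul_assoc, mul_comm (F ^ _)]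
    rfl
  obtain ⟨i, f', hf'⟩ := exists_pow_mem_of_relation p (tau k hq) τ0 (fun c => rfl) b hb
    (fun c m hm hc => by
      have := eq_zero_of_mem_kx hq hq2 t ht m hm c.2 (congrArg Subtype.val hc)
      exact Subtype.ext this)
    h n hn F hF
    (fun e i he => by
      by_contra he0
      obtain ⟨o, ho⟩ := exists_od he0
      have h1 := ho.tau hq
      rw [he] at h1
      have h2 : Od (algebraMap (kx k) (LaurentSeries k) (b ^ (n * p ^ i)) * e)
          ((n * p ^ i : ℕ) * (-(q : ℤ)) + o) := by
        rw [map_pow]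
        exact ((od_beta hq t).pow _).mul ho
      have h3 := h1.unique h2
      apply hodd
      have hq1 : ((q - 1 : ℕ) : ℤ) = q - 1 := by push_cast [Nat.cast_sub (show 1 ≤ q by omega)]; rfl
      have h4 : ((q - 1 : ℕ) : ℤ) ∣ (n * (p ^ i * q) : ℕ) := by
        refine ⟨-o, ?_⟩
        rw [hq1]; push_cast at h3 ⊢; linear_combination h3
      have h5 : (q - 1) ∣ n * (p ^ i * q) := by exact_mod_cast h4
      refine Nat.Coprime.dvd_of_dvd_mul_right ?_ h5
      have h6 : Nat.Coprime (q - 1) q := by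
        have := Nat.coprime_self_add_right (m := q - 1) (n := 1)
        rw [Nat.sub_add_cancel (by omega)] at this
        exact this.2 (by simp)
      have h7 : Nat.Coprime (q - 1) p := by
        have hf0 : f ≠ 0 := by rintro rfl; simp at hqp; omega
        exact h6.coprime_dvd_right (hqp ▸ dvd_pow_self p hf0)
      exact (h7.pow_right i).mul_right h6)
    w hw a ha hwτ Q0 hQ0 hev
  obtain ⟨P, hP, h1, h2⟩ := exists_polynomial_of_mem_kx hq hq2 t (n * p ^ i)
    (Nat.mul_pos hn (pow_pos (Fact.out : p.Prime).pos i)) (H ^ p ^ i) f'.2 (by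
      have h3 : (f' : LaurentSeries k) = F ^ p ^ i := hf'.symm
      rw [h3, map_pow, hF, mul_pow, sub_pow_char_pow, map_pow, ← pow_mul])
  exact ⟨i, P, hf'.trans hP, h1, h2⟩

end RationalFunctions

/-! ### Power sums of monic polynomials of a given degree -/

section PowerSums

variable {E : Type*} [Field E] [Algebra Fq E] (t : E)

local notation "qq" => Fintype.card Fq

/-- The monic polynomial `X ^ d + ∑ c i X ^ i` with lower coefficients `c`. -/
def mon (d : ℕ) (c : Fin d → Fq) : Fq[X] := X ^ d + ∑ i, C (c i) * X ^ (i : ℕ)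

/-- The power sum `S_d(n) = ∑ 1 / a ^ n` over monic `a` of degree `d`, evaluated at `t`. -/
def powSum (d n : ℕ) : E := ∑ c : Fin d → Fq, (aeval t (mon Fq d c) ^ n)⁻¹

/-- `ℓ_d = ∏_{j=1}^d (t - t ^ (q ^ j))`. -/
def ell (d : ℕ) : E := ∏ j ∈ Finset.range d, (t - t ^ qq ^ (j + 1))

/-- The Carlitz factorials `D_i`. -/
def Dfac : ℕ → E
  | 0 => 1
  | i + 1 => (t ^ qq ^ (i + 1) - t) * Dfac i ^ qq

/-- The polynomial `G_i(y) = ∏_{j=1}^i (t ^ (q ^ i) - y ^ (q ^ j))`. -/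
def Gpol (i : ℕ) : E[X] := ∏ j ∈ Finset.range i, (C (t ^ qq ^ i) - X ^ qq ^ (j + 1))

/-- The coefficient of `z ^ (q ^ i)` in the Carlitz polynomial `E_d(z)`. -/
def cco (d i : ℕ) : E := (Gpol Fq t i).eval (t ^ qq ^ d) / (Dfac Fq t i * ell Fq t d ^ qq ^ i)

/-- The Carlitz polynomials, normalized to take the value `1` at the monic polynomials of
degree `d`, as `𝔽_q`-linear maps. -/
def eL : ℕ → (E →ₗ[Fq] E)
  | 0 => LinearMap.id
  | d + 1 => (t ^ qq ^ (d + 1) - t)⁻¹ •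
      ((FiniteField.frobeniusAlgHom Fq E).toLinearMap ∘ₗ eL d - eL d)

variable {t}

lemma pow_card_sub (x y : E) (i : ℕ) : (x - y) ^ qq ^ i = x ^ qq ^ i - y ^ qq ^ i := by
  induction i with
  | zero => simp
  | succ i ih =>
    have := map_sub (FiniteField.frobeniusAlgHom Fq E) (x ^ qq ^ i) (y ^ qq ^ i)
    simp only [FiniteField.coe_frobeniusAlgHom] at this
    rw [pow_succ, pow_mul, pow_mul, pow_mul, ih, this]

lemma pow_qq_inj (ht : Function.Injective (aeval t : Fq[X] →ₐ[Fq] E)) (i j : ℕ)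
    (h : t ^ i = t ^ j) : i = j := by
  have : (X ^ i : Fq[X]) = X ^ j := ht (by simpa using h)
  have := congrArg natDegree this
  simpa using this

lemma one_lt_qq : 1 < qq := Fintype.one_lt_card

lemma bracket_ne_zero (ht : Function.Injective (aeval t : Fq[X] →ₐ[Fq] E)) (d : ℕ) :
    t ^ qq ^ (d + 1) - t ≠ 0 := by
  intro h
  have := pow_qq_inj Fq ht (qq ^ (d + 1)) 1 (by rw [pow_one]; exact sub_eq_zero.1 h)
  have h1 := Nat.one_lt_pow (show d + 1 ≠ 0 by omega) (one_lt_qq Fq)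
  omega

lemma ell_ne_zero (ht : Function.Injective (aeval t : Fq[X] →ₐ[Fq] E)) (d : ℕ) :
    ell Fq t d ≠ 0 := by
  rw [ell, Finset.prod_ne_zero_iff]
  intro j _ h
  apply bracket_ne_zero Fq ht j
  rw [← neg_eq_zero, neg_sub, h]

lemma Dfac_ne_zero (ht : Function.Injective (aeval t : Fq[X] →ₐ[Fq] E)) (i : ℕ) :
    Dfac Fq t i ≠ 0 := by
  induction i with
  | zero => simp [Dfac]
  | succ i ih => exact mul_ne_zero (bracket_ne_zero Fq ht i) (pow_ne_zero _ ih)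

lemma eL_succ (ht : Function.Injective (aeval t : Fq[X] →ₐ[Fq] E)) (d : ℕ) (z : E) :
    (t ^ qq ^ (d + 1) - t) * eL Fq t (d + 1) z = eL Fq t d z ^ qq - eL Fq t d z := by
  simp only [eL, LinearMap.smul_apply, LinearMap.sub_apply, LinearMap.comp_apply, smul_eq_mul]
  rw [mul_inv_cancel_left₀ (bracket_ne_zero Fq ht d)]
  rfl

lemma eL_mul (ht : Function.Injective (aeval t : Fq[X] →ₐ[Fq] E)) (d : ℕ) (z : E) :
    eL Fq t (d + 1) (t * z) = t * eL Fq t (d + 1) z + eL Fq t d z ^ qq := by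
  induction d with
  | zero =>
    apply mul_left_cancel₀ (bracket_ne_zero Fq ht 0)
    rw [eL_succ Fq ht, mul_add, mul_left_comm, eL_succ Fq ht]
    simp only [eL, LinearMap.id_apply, mul_pow, zero_add, pow_one]
    ring
  | succ d ih =>
    apply mul_left_cancel₀ (bracket_ne_zero Fq ht (d + 1))
    rw [eL_succ Fq ht, mul_add, mul_left_comm, eL_succ Fq ht, ih]
    have h1 := pow_card_sub Fq (eL Fq t d z ^ qq) (eL Fq t d z) 1
    rw [← eL_succ Fq ht, pow_one, mul_pow] at h1
    have h2 := pow_card_sub Fq (t ^ qq ^ (d + 1)) t 1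
    rw [pow_one, ← pow_mul, ← pow_succ] at h2
    have h3 := map_add (FiniteField.frobeniusAlgHom Fq E) (t * eL Fq t (d + 1) z) (eL Fq t d z ^ qq)
    simp only [FiniteField.coe_frobeniusAlgHom] at h3
    rw [h3, mul_pow]
    rw [h2] at h1
    linear_combination - h1

lemma eL_one (ht : Function.Injective (aeval t : Fq[X] →ₐ[Fq] E)) (d : ℕ) :
    eL Fq t (d + 1) 1 = 0 := by
  induction d with
  | zero =>
    apply mul_left_cancel₀ (bracket_ne_zero Fq ht 0)
    rw [eL_succ Fq ht]
    simp [eL]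
  | succ d ih =>
    apply mul_left_cancel₀ (bracket_ne_zero Fq ht (d + 1))
    rw [eL_succ Fq ht, ih]
    simp [Fintype.card_ne_zero]

lemma eL_pow_lt (ht : Function.Injective (aeval t : Fq[X] →ₐ[Fq] E)) (j d : ℕ) (hjd : j < d) :
    eL Fq t d (t ^ j) = 0 := by
  induction j generalizing d with
  | zero =>
    obtain ⟨d, rfl⟩ : ∃ e, d = e + 1 := ⟨d - 1, by omega⟩
    simpa using eL_one Fq ht d
  | succ j ih =>
    obtain ⟨d, rfl⟩ : ∃ e, d = e + 1 := ⟨d - 1, by omega⟩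
    rw [pow_succ', eL_mul Fq ht, ih _ (by omega), ih _ (by omega)]
    simp [Fintype.card_ne_zero]

lemma eL_pow_self (ht : Function.Injective (aeval t : Fq[X] →ₐ[Fq] E)) (d : ℕ) :
    eL Fq t d (t ^ d) = 1 := by
  induction d with
  | zero => simp [eL]
  | succ d ih =>
    rw [pow_succ', eL_mul Fq ht, ih, eL_pow_lt Fq ht _ _ (Nat.lt_succ_self d)]
    simp

lemma eL_mon (ht : Function.Injective (aeval t : Fq[X] →ₐ[Fq] E)) (d : ℕ) (c : Fin d → Fq) :
    eL Fq t d (aeval t (mon Fq d c)) = 1 := by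
  simp only [mon, map_add, map_pow, aeval_X, map_sum, map_mul, aeval_C, ← Algebra.smul_def,
    map_smul]
  rw [eL_pow_self Fq ht, Finset.sum_eq_zero, add_zero]
  intro i _
  rw [eL_pow_lt Fq ht _ _ i.2, smul_zero]

/-- `E_d(z)` as a polynomial. -/
def Epol (t : E) (d : ℕ) : E[X] := ∑ i ∈ Finset.range (d + 1), C (cco Fq t d i) * X ^ qq ^ i

lemma cco_eq_zero (d i : ℕ) (h : d < i) : cco Fq t d i = 0 := by
  rw [cco, Gpol, eval_prod, Finset.prod_eq_zero (i := i - d - 1), zero_div]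
  · simp; omega
  · simp only [eval_sub, eval_C, eval_pow, eval_X]
    rw [← pow_mul, ← pow_add, show d + (i - d - 1 + 1) = i by omega, sub_self]

lemma cco_zero (d : ℕ) : cco Fq t d 0 = (ell Fq t d)⁻¹ := by
  simp [cco, Gpol, Dfac]

lemma cco_succ_zero (ht : Function.Injective (aeval t : Fq[X] →ₐ[Fq] E)) (d : ℕ) :
    (t ^ qq ^ (d + 1) - t) * cco Fq t (d + 1) 0 = - cco Fq t d 0 := by
  rw [cco_zero, cco_zero, ell, Finset.prod_range_succ, ← ell]
  have h1 := ell_ne_zero Fq ht d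
  have h2 := bracket_ne_zero Fq ht d
  have h3 : t - t ^ qq ^ (d + 1) ≠ 0 := by rw [← neg_ne_zero, neg_sub]; exact h2
  field_simp
  ring

lemma cco_aux (Y t g Z T D L : E) (hb : T - t ≠ 0) (hD : D ≠ 0) (hL : L ≠ 0) (hZ : Z ≠ 0) :
    (Y - t) * (g * Z / ((T - t) * D * (L * Z))) =
      g / (D * L) - (T - Y) * g / ((T - t) * D * L) := by
  field_simp
  ring

lemma cco_succ_succ (ht : Function.Injective (aeval t : Fq[X] →ₐ[Fq] E)) (d i : ℕ) :
    (t ^ qq ^ (d + 1) - t) * cco Fq t (d + 1) (i + 1) =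
      cco Fq t d i ^ qq - cco Fq t d (i + 1) := by
  set y := t ^ qq ^ d with hy
  have hyq : t ^ qq ^ (d + 1) = y ^ qq := by rw [hy, ← pow_mul, ← pow_succ]
  set g := ∏ j ∈ Finset.range i, (t ^ qq ^ (i + 1) - y ^ qq ^ (j + 2)) with hg
  have h1 : (Gpol Fq t i).eval y ^ qq = g := by
    rw [Gpol, eval_prod, ← Finset.prod_pow, hg]
    refine Finset.prod_congr rfl fun j _ => ?_
    have := pow_card_sub Fq (t ^ qq ^ i) (y ^ qq ^ (j + 1)) 1
    simp only [eval_sub, eval_C, eval_pow, eval_X]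
    rw [pow_one] at this
    rw [this, ← pow_mul, ← pow_mul, ← pow_succ, ← pow_succ]
  have h2 : (Gpol Fq t (i + 1)).eval y = (t ^ qq ^ (i + 1) - y ^ qq) * g := by
    rw [Gpol, eval_prod, Finset.prod_range_succ', mul_comm]
    simp [hg]
  have h3 : (Gpol Fq t (i + 1)).eval (y ^ qq) = g * (t - y ^ qq) ^ qq ^ (i + 1) := by
    rw [Gpol, eval_prod, Finset.prod_range_succ, pow_card_sub]
    congr 1
    · refine Finset.prod_congr rfl fun j _ => ?_
      simp only [eval_sub, eval_C, eval_pow, eval_X, ← pow_mul, ← pow_succ']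
    · simp
  have hl := ell_ne_zero Fq ht d
  have hD := Dfac_ne_zero Fq ht i
  have hb := bracket_ne_zero Fq ht i
  have hb2 : t - y ^ qq ≠ 0 := by
    rw [← hyq, ← neg_ne_zero, neg_sub]; exact bracket_ne_zero Fq ht d
  have e1 : cco Fq t (d + 1) (i + 1) = g * (t - y ^ qq) ^ qq ^ (i + 1) /
      ((t ^ qq ^ (i + 1) - t) * Dfac Fq t i ^ qq *
        (ell Fq t d ^ qq ^ (i + 1) * (t - y ^ qq) ^ qq ^ (i + 1))) := by
    rw [cco, hyq, h3, ell, Finset.prod_range_succ, ← ell, hyq, mul_pow, Dfac]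
  have e2 : cco Fq t d i ^ qq = g / (Dfac Fq t i ^ qq * ell Fq t d ^ qq ^ (i + 1)) := by
    rw [cco, div_pow, ← hy, h1, mul_pow, ← pow_mul, ← pow_succ]
  have e3 : cco Fq t d (i + 1) = (t ^ qq ^ (i + 1) - y ^ qq) * g /
      ((t ^ qq ^ (i + 1) - t) * Dfac Fq t i ^ qq * ell Fq t d ^ qq ^ (i + 1)) := by
    rw [cco, ← hy, h2, Dfac]
  rw [e1, e2, e3, hyq]
  exact cco_aux _ _ _ _ _ _ _ hb (pow_ne_zero _ hD) (pow_ne_zero _ hl) (pow_ne_zero _ hb2)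

lemma eval_Epol (ht : Function.Injective (aeval t : Fq[X] →ₐ[Fq] E)) (d : ℕ) (z : E) :
    (Epol Fq t d).eval z = eL Fq t d z := by
  induction d with
  | zero => simp [Epol, eL, cco_zero, ell]
  | succ d ih =>
    apply mul_left_cancel₀ (bracket_ne_zero Fq ht d)
    rw [eL_succ Fq ht, ← ih]
    have hev : ∀ e, (Epol Fq t e).eval z =
        ∑ i ∈ Finset.range (e + 1), cco Fq t e i * z ^ qq ^ i := fun e => by
      simp [Epol, eval_finsetSum]
    have h1 : (Epol Fq t d).eval z ^ qq =
        ∑ i ∈ Finset.range (d + 1), cco Fq t d i ^ qq * z ^ qq ^ (i + 1) := by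
      have := map_sum (FiniteField.frobeniusAlgHom Fq E) (fun i => cco Fq t d i * z ^ qq ^ i)
        (Finset.range (d + 1))
      simp only [FiniteField.coe_frobeniusAlgHom] at this
      rw [hev, this]
      refine Finset.sum_congr rfl fun i _ => ?_
      rw [mul_pow, ← pow_mul, ← pow_succ]
    have h2 : (Epol Fq t d).eval z =
        ∑ i ∈ Finset.range (d + 2), cco Fq t d i * z ^ qq ^ i := by
      rw [Finset.sum_range_succ, cco_eq_zero Fq d (d + 1) (by omega), zero_mul, add_zero, hev]
    rw [h1, h2, Finset.sum_range_succ' _ (d + 1), hev, Finset.sum_range_succ' _ (d + 1), mul_add,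
      ← mul_assoc, cco_succ_zero Fq ht, Finset.mul_sum]
    simp_rw [← mul_assoc, cco_succ_succ Fq ht, sub_mul]
    rw [Finset.sum_sub_distrib]
    ring

lemma coeff_Epol (d i : ℕ) : (Epol Fq t d).coeff (qq ^ i) = cco Fq t d i := by
  rw [Epol, finsetSum_coeff]
  simp only [coeff_C_mul_X_pow]
  have hinj : ∀ a b : ℕ, qq ^ a = qq ^ b ↔ a = b := fun a b =>
    (Nat.pow_right_injective (one_lt_qq Fq)).eq_iff
  simp only [hinj]
  rw [Finset.sum_ite_eq]
  split_ifs with h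
  · rfl
  · rw [cco_eq_zero]; simpa using h

lemma coeff_Epol_of_ne (d j : ℕ) (hj : ∀ i, j ≠ qq ^ i) : (Epol Fq t d).coeff j = 0 := by
  rw [Epol, finsetSum_coeff]
  refine Finset.sum_eq_zero fun i _ => ?_
  rw [coeff_C_mul_X_pow, if_neg (hj i)]

lemma natDegree_Epol (d : ℕ) : (Epol Fq t d).natDegree ≤ qq ^ d := by
  rw [Epol]
  refine natDegree_sum_le_of_forall_le _ _ fun i hi => ?_
  refine (natDegree_C_mul_X_pow_le _ _).trans ?_
  exact Nat.pow_le_pow_right (one_lt_qq Fq).le (by simp at hi; omega)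

end PowerSums

/-! ### The power sums as values of fixed polynomials -/

section PowerSumFormula

variable {E : Type*} [Field E] [Algebra Fq E] {t : E}

local notation "qq" => Fintype.card Fq

lemma coeff_mon_lt (d : ℕ) (c : Fin d → Fq) (i : Fin d) : (mon Fq d c).coeff i = c i := by
  rw [mon, coeff_add, coeff_X_pow, if_neg (by have := i.2; omega), zero_add, finsetSum_coeff]
  simp only [coeff_C_mul_X_pow]
  rw [Finset.sum_eq_single i]
  · simp
  · intro b _ hb
    rw [if_neg]
    intro h
    exact hb (Fin.ext h.symm)
  · simp

lemma mon_injective (d : ℕ) : Function.Injective (mon Fq d) := by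
  intro c c' h
  funext i
  rw [← coeff_mon_lt Fq d c i, h, coeff_mon_lt]

lemma degree_mon_tail (d : ℕ) (c : Fin d → Fq) :
    (∑ i : Fin d, C (c i) * X ^ (i : ℕ) : Fq[X]).degree < d := by
  refine (degree_sum_le _ _).trans_lt ?_
  rw [Finset.sup_lt_iff (WithBot.bot_lt_coe _)]
  intro i _
  refine (degree_C_mul_X_pow_le _ _).trans_lt ?_
  exact_mod_cast i.2

lemma mon_monic (d : ℕ) (c : Fin d → Fq) : (mon Fq d c).Monic :=
  monic_X_pow_add (degree_mon_tail Fq d c)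

lemma natDegree_mon (d : ℕ) (c : Fin d → Fq) : (mon Fq d c).natDegree = d := by
  rw [mon, add_comm, natDegree_add_eq_right_of_degree_lt]
  · simp
  · simpa using degree_mon_tail Fq d c

lemma mon_eq (P : Fq[X]) (hP : P.Monic) : mon Fq P.natDegree (fun i => P.coeff i) = P := by
  conv_rhs => rw [hP.as_sum]
  rw [mon, ← Fin.sum_univ_eq_sum_range (fun i => C (P.coeff i) * X ^ i)]

lemma factor_Epol (ht : Function.Injective (aeval t : Fq[X] →ₐ[Fq] E)) (d : ℕ) :
    ∃ l : E, 1 - Epol Fq t d = C l * ∏ c : Fin d → Fq, (X - C (aeval t (mon Fq d c))) := by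
  refine ⟨_, eq_leadingCoeff_mul_of_monic_of_dvd_of_natDegree_le ?_ ?_ ?_⟩
  · exact monic_prod_of_monic _ _ fun c _ => monic_X_sub_C _
  · refine Finset.prod_dvd_of_coprime ?_ ?_
    · intro c _ c' _ h
      refine isCoprime_X_sub_C_of_isUnit_sub ?_
      rw [isUnit_iff_ne_zero, sub_ne_zero]
      exact fun h' => h (mon_injective Fq d (ht h'))
    · intro c _
      rw [dvd_iff_isRoot, IsRoot, eval_sub, eval_one, eval_Epol Fq ht, eL_mon Fq ht, sub_self]
  · rw [natDegree_finsetProd_X_sub_C_eq_card]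
    refine (natDegree_sub_le _ _).trans ?_
    simpa using natDegree_Epol Fq d

lemma card_eq_zero' : ((qq : ℕ) : E) = 0 := by
  rw [← map_natCast (algebraMap Fq E), FiniteField.cast_card_eq_zero, map_zero]

lemma derivative_Epol (d : ℕ) : derivative (Epol Fq t d) = C (ell Fq t d)⁻¹ := by
  rw [Epol, derivative_sum, Finset.sum_range_succ', Finset.sum_eq_zero, zero_add]
  · simp [cco_zero]
  · intro i _
    rw [derivative_C_mul_X_pow]
    simp [card_eq_zero' Fq]

lemma coeff_zero_Epol (d : ℕ) : (Epol Fq t d).coeff 0 = 0 :=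
  coeff_Epol_of_ne Fq d 0 fun i => (pow_ne_zero i Fintype.card_ne_zero).symm

/-- The generating series identity `(1 - E_d(z)) * ∑ S_d(n+1) z ^ n = 1 / ℓ_d`, the logarithmic
derivative of `1 - E_d(z)`. -/
lemma gen_powSum (ht : Function.Injective (aeval t : Fq[X] →ₐ[Fq] E)) (d : ℕ) :
    ((1 - Epol Fq t d : E[X]) : PowerSeries E) * PowerSeries.mk (fun n => powSum Fq t d (n + 1)) =
      PowerSeries.C (ell Fq t d)⁻¹ := by
  classical
  obtain ⟨l, hl⟩ := factor_Epol Fq ht d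
  have hder : C (ell Fq t d)⁻¹ = - derivative (1 - Epol Fq t d) := by
    rw [derivative_sub, derivative_Epol, derivative_one]; ring
  have hG : PowerSeries.mk (fun n => powSum Fq t d (n + 1)) =
      ∑ c : Fin d → Fq, PowerSeries.mk (fun n => (aeval t (mon Fq d c) ^ (n + 1))⁻¹) := by
    ext n
    rw [map_sum]
    simp [powSum, PowerSeries.coeff_mk]
  have hgeo : ∀ c : Fin d → Fq, ((X - C (aeval t (mon Fq d c)) : E[X]) : PowerSeries E) *
      PowerSeries.mk (fun n => (aeval t (mon Fq d c) ^ (n + 1))⁻¹) = -1 := by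
    intro c
    have hc : aeval t (mon Fq d c) ≠ 0 := by
      rw [Ne, map_eq_zero_iff _ ht]; exact (mon_monic Fq d c).ne_zero
    ext n
    rw [Polynomial.coe_sub, Polynomial.coe_X, Polynomial.coe_C, sub_mul, map_sub,
      PowerSeries.coeff_C_mul, PowerSeries.coeff_mk]
    cases n with
    | zero => simp [hc]
    | succ n =>
      rw [PowerSeries.coeff_succ_X_mul, PowerSeries.coeff_mk]
      simp only [map_neg, PowerSeries.coeff_one]
      field_simp
      simp [pow_succ]
  rw [← Polynomial.coe_C, hder, hl, hG, derivative_C_mul, derivative_prod_finset]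
  rw [Polynomial.coe_neg, Polynomial.coe_mul, Polynomial.coe_mul, mul_assoc, ← mul_neg]
  congr 1
  rw [← Polynomial.coeToPowerSeries.ringHom_apply (φ := ∑ i, _), map_sum, Finset.mul_sum,
    ← Finset.sum_neg_distrib]
  refine Finset.sum_congr rfl fun c _ => ?_
  rw [← Finset.mul_prod_erase Finset.univ _ (Finset.mem_univ c), Polynomial.coe_mul, mul_assoc,
    mul_left_comm, hgeo, derivative_X_sub_C, mul_one, mul_neg, mul_one,
    Polynomial.coeToPowerSeries.ringHom_apply]

lemma sum_powSum (ht : Function.Injective (aeval t : Fq[X] →ₐ[Fq] E)) (d n : ℕ) :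
    powSum Fq t d (n + 1) - ∑ j ∈ Finset.range n,
      (Epol Fq t d).coeff (j + 1) * powSum Fq t d (n - j) =
      if n = 0 then (ell Fq t d)⁻¹ else 0 := by
  have h := congrArg (PowerSeries.coeff n) (gen_powSum Fq ht d)
  rw [PowerSeries.coeff_mul, PowerSeries.coeff_C,
    Finset.Nat.sum_antidiagonal_eq_sum_range_succ_mk] at h
  rw [← h, Finset.sum_range_succ']
  simp only [Polynomial.coeff_coe, coeff_sub, PowerSeries.coeff_mk, coeff_zero_Epol,
    coeff_one_zero, sub_zero, one_mul]
  rw [add_comm (∑ _ ∈ _, _), sub_eq_add_neg, ← Finset.sum_neg_distrib, Nat.sub_zero]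
  congr 1
  refine Finset.sum_congr (M := E) rfl fun j hj => ?_
  rw [coeff_one, if_neg (by omega), zero_sub, neg_mul]
  congr 3
  have := Finset.mem_range.1 hj
  omega

lemma natDegree_Gpol (i : ℕ) :
    (qq - 1) * (Gpol Fq t i).natDegree ≤ qq ^ i * qq := by
  have h1 : (Gpol Fq t i).natDegree ≤ ∑ j ∈ Finset.range i, qq ^ (j + 1) := by
    rw [Gpol]
    refine (natDegree_prod_le _ _).trans (Finset.sum_le_sum fun j _ => ?_)
    refine (natDegree_sub_le _ _).trans ?_
    simp
  refine (Nat.mul_le_mul_left _ h1).trans ?_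
  have h2 : (qq - 1) * ∑ j ∈ Finset.range i, qq ^ (j + 1) + qq = qq ^ i * qq := by
    induction i with
    | zero => simp
    | succ i ih =>
      have ih' := ih (by
        rw [Gpol]
        refine (natDegree_prod_le _ _).trans (Finset.sum_le_sum fun j _ => ?_)
        refine (natDegree_sub_le _ _).trans ?_
        simp)
      rw [Finset.sum_range_succ, mul_add, add_right_comm, ih']
      obtain ⟨m, hm⟩ : ∃ m, qq = m + 1 := ⟨qq - 1, by have := one_lt_qq Fq; omega⟩
      rw [hm]; simp; ring
  omega

lemma exists_coeff_Epol (ht : Function.Injective (aeval t : Fq[X] →ₐ[Fq] E)) (j : ℕ) :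
    ∃ G : E[X], (qq - 1) * G.natDegree ≤ j * qq ∧
      ∀ d, (Epol Fq t d).coeff j = G.eval (t ^ qq ^ d) / ell Fq t d ^ j := by
  by_cases h : ∃ i, j = qq ^ i
  · obtain ⟨i, rfl⟩ := h
    refine ⟨C (Dfac Fq t i)⁻¹ * Gpol Fq t i, ?_, fun d => ?_⟩
    · refine (Nat.mul_le_mul_left _ (natDegree_C_mul_le _ _)).trans (natDegree_Gpol Fq i)
    · have := Dfac_ne_zero Fq ht i
      have := ell_ne_zero Fq ht d
      rw [coeff_Epol, cco, eval_mul, eval_C]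
      field_simp
  · push Not at h
    exact ⟨0, by simp, fun d => by simp [coeff_Epol_of_ne Fq d j h]⟩

/-- For every `n ≥ 1` there is a polynomial `H` such that `S_d(n) = H(t ^ (q ^ d)) / ℓ_d ^ n`
for all `d` (Anderson and Thakur). -/
lemma exists_powSum (ht : Function.Injective (aeval t : Fq[X] →ₐ[Fq] E)) (n : ℕ) :
    ∃ H : E[X], (qq - 1) * H.natDegree ≤ n * qq ∧
      ∀ d, powSum Fq t d (n + 1) = H.eval (t ^ qq ^ d) / ell Fq t d ^ (n + 1) := by
  induction n using Nat.strong_induction_on with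
  | _ n ih =>
    rcases Nat.eq_zero_or_pos n with rfl | hn
    · refine ⟨1, by simp, fun d => ?_⟩
      have := sum_powSum Fq ht d 0
      simp only [Finset.range_zero, Finset.sum_empty, sub_zero, if_true] at this
      rw [this]; simp
    · choose! H hH1 hH2 using ih
      choose G hG1 hG2 using exists_coeff_Epol Fq ht (t := t)
      refine ⟨∑ j ∈ Finset.range n, G (j + 1) * H (n - j - 1), ?_, fun d => ?_⟩
      · have hb : (∑ j ∈ Finset.range n, G (j + 1) * H (n - j - 1)).natDegree ≤
            n * qq / (qq - 1) := by
          refine natDegree_sum_le_of_forall_le _ _ fun j hj => ?_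
          rw [Nat.le_div_iff_mul_le (by have := one_lt_qq Fq; omega)]
          have hj' := Finset.mem_range.1 hj
          have h1 := hG1 (j + 1)
          have h2 := hH1 (n - j - 1) (by omega)
          have h3 := Nat.mul_le_mul_left (qq - 1)
            (natDegree_mul_le (p := G (j + 1)) (q := H (n - j - 1)))
          have h4 : (j + 1) * qq + (n - j - 1) * qq = n * qq := by
            rw [← add_mul]; congr 1; omega
          rw [mul_comm]
          rw [mul_add] at h3
          omega
        exact (Nat.mul_le_mul_left _ hb).trans (Nat.mul_div_le _ _)
      · have := sum_powSum Fq ht d n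
        rw [if_neg (by omega), sub_eq_zero] at this
        rw [this, eval_finsetSum, Finset.sum_div]
        refine Finset.sum_congr rfl fun j hj => ?_
        have hj' := Finset.mem_range.1 hj
        have h2 := hH2 (n - j - 1) (by omega) d
        rw [show n - j - 1 + 1 = n - j by omega] at h2
        rw [h2, hG2, eval_mul, div_mul_div_comm, ← pow_add]
        congr 2
        omega

end PowerSumFormula

/-! ### Values along a sequence with a uniform expansion -/

section Expansions

open LaurentPolynomial

variable {k R : Type*} [Field k] [Field R] (ι : k →+* LaurentSeries R) (q : ℕ)

/-- A Laurent polynomial over `k` as an element of `k((1/x))`. -/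
def toL : k[T;T⁻¹] →+* LaurentSeries k :=
  LaurentPolynomial.eval₂ (algebraMap k (LaurentSeries k)) (Units.mk0 (xL k) xL_ne_zero)

/-- The value at `x = θ ^ (q ^ N)` of a Laurent polynomial over `k`, with `k` embedded
in `R((1/θ))` by `ι`. -/
def evN (N : ℕ) : k[T;T⁻¹] →+* LaurentSeries R :=
  LaurentPolynomial.eval₂ ι (Units.mk0 (xL R ^ q ^ N) (pow_ne_zero _ xL_ne_zero))

/-- `Exp ι q f y`: the formal series `f` in `k((1/x))` is an asymptotic expansion of the
sequence `y`, in the sense that truncating `f` at order `M` and substituting `x = θ ^ (q ^ N)`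
approximates `y N` up to order `M * q ^ N - O(1)`, uniformly in `N`. -/
def Exp (f : LaurentSeries k) (y : ℕ → LaurentSeries R) : Prop :=
  ∀ M : ℤ, ∃ g : k[T;T⁻¹], Bd (f - toL g) M ∧
    ∃ C : ℤ, ∀ N : ℕ, Bd (y N - evN ι q N g) (M * (q : ℤ) ^ N - C)

lemma laurent_eq_sum (g : k[T;T⁻¹]) :
    g = ∑ n ∈ g.coeff.support, LaurentPolynomial.C (g.coeff n) * T n := by
  ext m
  rw [AddMonoidAlgebra.coeff_sum]
  simp only [← single_eq_C_mul_T, AddMonoidAlgebra.coeff_single, Finsupp.coe_finsetSum,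
    Finset.sum_apply, Finsupp.single_apply]
  rw [Finset.sum_ite_eq']
  split_ifs with h
  · rfl
  · simpa using h

@[simp] lemma toL_C (c : k) : toL (LaurentPolynomial.C c) = algebraMap k _ c := by
  simp [toL]

@[simp] lemma toL_T (n : ℤ) : toL (T n : k[T;T⁻¹]) = xL k ^ n := by
  simp [toL]

@[simp] lemma evN_C (N : ℕ) (c : k) : evN ι q N (LaurentPolynomial.C c) = ι c := by
  simp [evN]

@[simp] lemma evN_T (N : ℕ) (n : ℤ) :
    evN ι q N (T n : k[T;T⁻¹]) = (xL R ^ q ^ N) ^ n := by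
  simp [evN]

lemma toL_eq_sum (g : k[T;T⁻¹]) :
    toL g = ∑ n ∈ g.coeff.support, algebraMap k _ (g.coeff n) * xL k ^ n := by
  conv_lhs => rw [laurent_eq_sum g]
  simp

lemma evN_eq_sum (N : ℕ) (g : k[T;T⁻¹]) :
    evN ι q N g = ∑ n ∈ g.coeff.support, ι (g.coeff n) * (xL R ^ q ^ N) ^ n := by
  conv_lhs => rw [laurent_eq_sum g]
  simp

lemma coeff_toL (g : k[T;T⁻¹]) (m : ℤ) : (toL g).coeff m = g.coeff (-m) := by
  rw [toL_eq_sum]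
  have h : ∀ n ∈ g.coeff.support, (algebraMap k (LaurentSeries k) (g.coeff n) * xL k ^ n).coeff m =
      if n = -m then g.coeff n else 0 := by
    intro n _
    rw [algebraMap_mul_coeff, xL_zpow]
    split_ifs with h
    · rw [h]; simp
    · rw [HahnSeries.coeff_single_of_ne (by omega), mul_zero]
  rw [HahnSeries.coeff_sum, Finset.sum_congr rfl h, Finset.sum_ite_eq']
  split_ifs with h'
  · rfl
  · symm; simpa using h'

lemma od_xN (N : ℕ) (n : ℤ) : Od ((xL R ^ q ^ N) ^ n) (-n * (q : ℤ) ^ N) := by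
  rw [← zpow_natCast, ← zpow_mul, xL_zpow]
  convert od_single _ (one_ne_zero (α := R)) using 1
  push_cast; ring

lemma exists_bd_coeff (g : k[T;T⁻¹]) : ∃ C : ℤ, 0 ≤ C ∧ ∀ n, Bd (ι (g.coeff n)) (-C) := by
  choose c hc using fun n => exists_bd (ι (g.coeff n))
  refine ⟨∑ n ∈ g.coeff.support, |c n|, Finset.sum_nonneg fun _ _ => abs_nonneg _, fun n => ?_⟩
  by_cases hn : n ∈ g.coeff.support
  · refine (hc n).mono ?_
    have := Finset.single_le_sum (fun i _ => abs_nonneg (c i)) hn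
    have h2 := neg_abs_le (c n)
    omega
  · have : g.coeff n = 0 := by simpa using hn
    rw [this, map_zero]
    exact bd_zero _

lemma bd_evN (g : k[T;T⁻¹]) (M : ℤ) (hg : Bd (toL g) M) :
    ∃ C : ℤ, ∀ N : ℕ, Bd (evN ι q N g) (M * (q : ℤ) ^ N - C) := by
  obtain ⟨C, -, hC⟩ := exists_bd_coeff ι g
  refine ⟨C, fun N => ?_⟩
  rw [evN_eq_sum]
  refine bd_sum fun n hn => ?_
  have hnM : M ≤ -n := by
    by_contra h
    have := hg (-n) (by omega)
    rw [coeff_toL, neg_neg] at this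
    simp [this] at hn
  refine ((hC n).mul (od_xN q N n).bd).mono ?_
  have := mul_le_mul_of_nonneg_right hnM (by positivity : (0 : ℤ) ≤ (q : ℤ) ^ N)
  omega

variable {ι q}

lemma exp_toL (g : k[T;T⁻¹]) : Exp ι q (toL g) (fun N => evN ι q N g) := fun M =>
  ⟨g, by simpa using bd_zero M, 0, fun N => by simpa using bd_zero _⟩

lemma Exp.bd {f : LaurentSeries k} {y : ℕ → LaurentSeries R} (h : Exp ι q f y) {M : ℤ}
    (hf : Bd f M) : ∃ C : ℤ, 0 ≤ C ∧ ∀ N : ℕ, Bd (y N) (M * (q : ℤ) ^ N - C) := by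
  obtain ⟨g, hg, C, hC⟩ := h M
  obtain ⟨C', hC'⟩ := bd_evN ι q g M (by simpa using hf.sub hg)
  refine ⟨max 0 (max C C'), by omega, fun N => ?_⟩
  have := ((hC N).mono (d := M * (q : ℤ) ^ N - max 0 (max C C')) (by omega)).add
    ((hC' N).mono (by omega))
  simpa using this

lemma Exp.congr {f f' : LaurentSeries k} {y y' : ℕ → LaurentSeries R} (h : Exp ι q f y)
    (hf : f = f') (hy : ∀ N, y N = y' N) : Exp ι q f' y' := by
  rw [← hf, ← funext hy]; exact h

lemma Exp.add {f f' : LaurentSeries k} {y y' : ℕ → LaurentSeries R} (h : Exp ι q f y)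
    (h' : Exp ι q f' y') : Exp ι q (f + f') (fun N => y N + y' N) := by
  intro M
  obtain ⟨g, hg, C, hC⟩ := h M
  obtain ⟨g', hg', C', hC'⟩ := h' M
  refine ⟨g + g', ?_, max C C', fun N => ?_⟩
  · convert hg.add hg' using 1
    rw [map_add]; ring
  · convert ((hC N).mono (d := M * (q : ℤ) ^ N - max C C') (by omega)).add
      ((hC' N).mono (by omega)) using 1
    rw [map_add]; ring

lemma Exp.mul (hq : 1 ≤ q) {f f' : LaurentSeries k} {y y' : ℕ → LaurentSeries R}
    (h : Exp ι q f y) (h' : Exp ι q f' y') : Exp ι q (f * f') (fun N => y N * y' N) := by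
  intro M
  obtain ⟨m₁, hm₁⟩ := exists_bd f
  obtain ⟨m₂, hm₂⟩ := exists_bd f'
  obtain ⟨m, hm, hm1, hm2⟩ : ∃ m : ℤ, 0 ≤ m ∧ -m ≤ m₁ ∧ -m ≤ m₂ :=
    ⟨max 0 (max (-m₁) (-m₂)), by omega, by omega, by omega⟩
  obtain ⟨g, hg, C, hC⟩ := h (max M 0 + m)
  obtain ⟨g', hg', C', hC'⟩ := h' (max M 0 + m)
  have hg'b : Bd (toL g') (-m) := by
    have := (hm₂.mono hm2).sub (hg'.mono (d := -m) (by omega))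
    simpa using this
  obtain ⟨C₁, -, hC₁⟩ := h.bd (hm₁.mono hm1)
  obtain ⟨C₂, hC₂⟩ := bd_evN ι q g' (-m) hg'b
  refine ⟨g * g', ?_, max (C' + C₁) (C + C₂), fun N => ?_⟩
  · have := (((hm₁.mono hm1).mul hg').mono (d := M) (by omega)).add
      ((hg.mul hg'b).mono (by omega))
    convert this using 1
    rw [map_mul]; ring
  · have hQ : M * (q : ℤ) ^ N ≤ (max M 0) * (q : ℤ) ^ N :=
      mul_le_mul_of_nonneg_right (by omega) (by positivity)
    have := (((hC₁ N).mul (hC' N)).mono (d := M * (q : ℤ) ^ N - max (C' + C₁) (C + C₂)) (by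
        rw [add_mul, neg_mul]; omega)).add
      (((hC N).mul (hC₂ N)).mono (by rw [add_mul, neg_mul]; omega))
    convert this using 1
    rw [map_mul]; ring

lemma exp_one : Exp ι q 1 (fun _ => 1) := by
  simpa using exp_toL (ι := ι) (q := q) 1

lemma Exp.pow (hq : 1 ≤ q) {f : LaurentSeries k} {y : ℕ → LaurentSeries R}
    (h : Exp ι q f y) (m : ℕ) : Exp ι q (f ^ m) (fun N => y N ^ m) := by
  induction m with
  | zero => simpa using exp_one
  | succ m ih => simpa [pow_succ] using ih.mul hq h

lemma exp_prod (hq : 1 ≤ q) {α : Type*} (s : Finset α) {f : α → LaurentSeries k}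
    {y : α → ℕ → LaurentSeries R} (h : ∀ i ∈ s, Exp ι q (f i) (y i)) :
    Exp ι q (∏ i ∈ s, f i) (fun N => ∏ i ∈ s, y i N) := by
  classical
  induction s using Finset.induction_on with
  | empty => simpa using exp_one
  | insert a s ha ih =>
    simp only [Finset.prod_insert ha]
    exact (h a (by simp)).mul hq (ih fun i hi => h i (by simp [hi]))

lemma exp_zero : Exp ι q 0 (fun _ => 0) := by
  simpa using exp_toL (ι := ι) (q := q) 0

lemma exp_sum {α : Type*} (s : Finset α) {f : α → LaurentSeries k}
    {y : α → ℕ → LaurentSeries R} (h : ∀ i ∈ s, Exp ι q (f i) (y i)) :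
    Exp ι q (∑ i ∈ s, f i) (fun N => ∑ i ∈ s, y i N) := by
  classical
  induction s using Finset.induction_on with
  | empty => simpa using exp_zero
  | insert a s ha ih =>
    simp only [Finset.sum_insert ha]
    exact (h a (by simp)).add (ih fun i hi => h i (by simp [hi]))

/-- A sequence approximated by sequences with expansions has an expansion. -/
lemma Exp.lim {f : LaurentSeries k} {y : ℕ → LaurentSeries R} (s : ℕ → LaurentSeries k)
    (σ : ℕ → ℕ → LaurentSeries R) (hs : ∀ I, Exp ι q (s I) (σ I))
    (h : ∀ M : ℤ, ∃ I, Bd (f - s I) M ∧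
      ∃ C : ℤ, ∀ N : ℕ, Bd (y N - σ I N) (M * (q : ℤ) ^ N - C)) : Exp ι q f y := by
  intro M
  obtain ⟨I, hI, C, hC⟩ := h M
  obtain ⟨g, hg, C', hC'⟩ := hs I M
  refine ⟨g, by simpa using hI.add hg, max C C', fun N => ?_⟩
  have := ((hC N).mono (d := M * (q : ℤ) ^ N - max C C') (by omega)).add
    ((hC' N).mono (by omega))
  simpa using this

lemma exp_aeval (P : k[X]) :
    Exp ι q (aeval (xL k) P) (fun N => P.eval₂ ι (xL R ^ q ^ N)) := by
  refine (exp_toL (ι := ι) (q := q) (toLaurent P)).congr ?_ fun N => ?_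
  · simp [toL, aeval_def]
  · simp [evN]

lemma geom_aux {z : LaurentSeries R} (hz : Bd z 1) (m : ℕ) :
    (1 - z)⁻¹ - ∑ i ∈ Finset.range m, z ^ i = z ^ m * (1 - z)⁻¹ ∧ Bd (1 - z)⁻¹ 0 := by
  have h1 : Od (1 - z) 0 := od_one.sub (by simpa using hz)
  have h2 : Bd (1 - z)⁻¹ 0 := by simpa using h1.inv.bd
  have h3 := h1.ne_zero
  refine ⟨?_, h2⟩
  have := geom_sum_mul z m
  field_simp
  linear_combination this

/-- Inverses `1 / (1 - t / x ^ r)` expand as geometric series. -/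
lemma exp_geom (hq : 1 ≤ q) (t : k) (ht : ι t = xL R) (r : ℕ) (hr : 2 ≤ r) :
    Exp ι q (1 - algebraMap k _ t * (xL k ^ r)⁻¹)⁻¹
      (fun N => (1 - xL R * ((xL R ^ q ^ N) ^ r)⁻¹)⁻¹) := by
  intro M
  refine ⟨∑ i ∈ Finset.range M.toNat, (LaurentPolynomial.C t * T (-(r : ℤ))) ^ i, ?_,
    M.toNat, fun N => ?_⟩
  · have hz : Bd (algebraMap k (LaurentSeries k) t * (xL k ^ r)⁻¹) r := by
      have := (bd_algebraMap t).mul (od_xL (k := k).pow r).inv.bd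
      simpa using this
    obtain ⟨h2, h3⟩ := geom_aux (hz.mono (d := 1) (by omega)) M.toNat
    simp only [map_sum, map_pow, map_mul, toL_C, toL_T, zpow_neg, zpow_natCast]
    rw [h2]
    refine ((hz.pow _).mul h3).mono ?_
    have : ((M.toNat : ℕ) : ℤ) * 1 ≤ M.toNat * r :=
      mul_le_mul_of_nonneg_left (by omega) (by omega)
    omega
  · have hQ : 1 ≤ q ^ N := Nat.one_le_pow _ _ hq
    have hz : Bd (xL R * ((xL R ^ q ^ N) ^ r)⁻¹) (r * (q : ℤ) ^ N - 1) := by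
      have := (od_xL (k := R)).bd.mul (((od_xL (k := R)).pow (q ^ N)).pow r).inv.bd
      refine this.mono ?_
      push_cast
      rw [mul_neg, mul_one, mul_neg, neg_neg]
      omega
    have hrQ : (2 : ℤ) * 1 ≤ r * (q : ℤ) ^ N :=
      mul_le_mul (by omega) (by exact_mod_cast hQ) (by norm_num) (by omega)
    obtain ⟨h2, h3⟩ := geom_aux (hz.mono (d := 1) (by omega)) M.toNat
    simp only [map_sum, map_pow, map_mul, evN_C, evN_T, zpow_neg, zpow_natCast, ht]
    rw [h2]
    refine ((hz.pow _).mul h3).mono ?_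
    have h5 : (M : ℤ) * (q : ℤ) ^ N ≤ M.toNat * (q : ℤ) ^ N :=
      mul_le_mul_of_nonneg_right (by omega) (by positivity)
    have h6 : (M.toNat : ℤ) * (1 * (q : ℤ) ^ N) ≤ M.toNat * (r * (q : ℤ) ^ N) :=
      mul_le_mul_of_nonneg_left
        (mul_le_mul_of_nonneg_right (by omega) (by positivity)) (by omega)
    rw [mul_sub]
    rw [one_mul] at h6
    omega

end Expansions

/-! ### No small relations between values with independent expansions -/

section NoRelations

variable {R : Type*} [Field R]

lemma sum_range_mul' {M : Type*} [AddCommMonoid M] (f : ℕ → M) (B Q : ℕ) :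
    ∑ m ∈ Finset.range (B * Q), f m =
      ∑ b ∈ Finset.range B, ∑ r ∈ Finset.range Q, f (b * Q + r) := by
  induction B with
  | zero => simp
  | succ B ih => rw [add_mul, one_mul, Finset.sum_range_add, ih, Finset.sum_range_succ]

/-- The `b`-th digit of `w` in base `X ^ Q`. -/
def digit (Q : ℕ) (w : R[X]) (b : ℕ) : R[X] :=
  ∑ r ∈ Finset.range Q, C (w.coeff (b * Q + r)) * X ^ r

lemma coeff_digit (Q : ℕ) (w : R[X]) (b r : ℕ) :
    (digit Q w b).coeff r = if r < Q then w.coeff (b * Q + r) else 0 := by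
  rw [digit, finsetSum_coeff]
  simp only [coeff_C_mul_X_pow]
  rw [Finset.sum_ite_eq]
  simp

lemma sum_digit (Q B : ℕ) (w : R[X]) (hw : w.natDegree < B * Q) :
    w = ∑ b ∈ Finset.range B, digit Q w b * (X ^ Q) ^ b := by
  conv_lhs => rw [w.as_sum_range' _ hw, sum_range_mul']
  refine Finset.sum_congr rfl fun b _ => ?_
  rw [digit, Finset.sum_mul]
  refine Finset.sum_congr rfl fun r _ => ?_
  rw [← C_mul_X_pow_eq_monomial, pow_add, ← pow_mul]
  ring

/-- Some nonzero multiple of bounded degree kills a bounded number of coefficients. -/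
lemma exists_multiplier {α β : Type*} [Fintype α] [Fintype β] (v : α → R[X]) (pos : β → ℕ) :
    ∃ g : R[X], g ≠ 0 ∧ g.natDegree ≤ Fintype.card α * Fintype.card β ∧
      ∀ i j, (g * v i).coeff (pos j) = 0 := by
  set G := Fintype.card α * Fintype.card β with hG
  let L : degreeLT R (G + 1) →ₗ[R] (α × β → R) :=
    LinearMap.pi fun ij => (lcoeff R (pos ij.2)) ∘ₗ
      (LinearMap.mulRight R (v ij.1)) ∘ₗ (degreeLT R (G + 1)).subtype
  have hfin : Module.finrank R (degreeLT R (G + 1)) = G + 1 := by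
    rw [(degreeLTEquiv R (G + 1)).finrank_eq]; simp
  have hFD : FiniteDimensional R (degreeLT R (G + 1)) :=
    Module.Finite.equiv (degreeLTEquiv R (G + 1)).symm
  have hker : LinearMap.ker L ≠ ⊥ := by
    apply LinearMap.ker_ne_bot_of_finrank_lt
    rw [hfin]
    simp [hG]
  obtain ⟨g, hg, hg0⟩ := (Submodule.ne_bot_iff _).1 hker
  refine ⟨g, by simpa using hg0, ?_, fun i j => ?_⟩
  · have := mem_degreeLT.1 g.2
    exact Nat.lt_succ_iff.1 (by rwa [natDegree_lt_iff_degree_lt (by simpa using hg0)])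
  · exact congrFun (LinearMap.mem_ker.1 hg) (i, j)

variable {k : Type*} [Field k]

/-- On a finite-dimensional space, an injective linear map to Laurent series is detected by
finitely many coefficients. -/
lemma exists_order_bound {V : Type*} [AddCommGroup V] [Module k V] [FiniteDimensional k V]
    (Φ : V →+ LaurentSeries k) (hΦ : ∀ (c : k) v, Φ (c • v) = algebraMap k _ c * Φ v)
    (hinj : ∀ v, Φ v = 0 → v = 0) : ∃ M : ℕ, ∀ v, Bd (Φ v) M → v = 0 := by
  let S : ℕ → Submodule k V := fun M =>
    { carrier := {v | Bd (Φ v) M}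
      add_mem' := fun {a b} ha hb => by
        simp only [Set.mem_ofPred_eq, map_add] at *; exact ha.add hb
      zero_mem' := by simp only [Set.mem_ofPred_eq, map_zero]; exact bd_zero _
      smul_mem' := fun c v hv => by
        simp only [Set.mem_ofPred_eq, hΦ] at *
        simpa using (bd_algebraMap c).mul hv }
  have hS : ∀ M v, v ∈ S M ↔ Bd (Φ v) M := fun _ _ => Iff.rfl
  obtain ⟨M, hM⟩ := IsArtinian.monotone_stabilizes (R := k) (M := V)
    ⟨fun M => OrderDual.toDual (S M), fun a b hab => by
      show S b ≤ S a
      intro v hv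
      rw [hS] at *
      exact hv.mono (by omega)⟩
  refine ⟨M, fun v hv => hinj v (eq_zero_of_bd fun c => ⟨max M c, by omega, ?_⟩)⟩
  have h1 : S M = S (max M c.toNat) := hM (max M c.toNat) (by omega)
  have h2 : v ∈ S (max M c.toNat) := by rw [← h1, hS]; exact hv
  rw [hS] at h2
  exact h2.mono (by omega)

end NoRelations

section NoRelations

variable {R : Type*} [Field R] {k : Type*} [Field k]

lemma bd_sum_univ {α : Type*} [Fintype α] {f : α → LaurentSeries R} {c : ℤ}
    (h : ∀ i, Bd (f i) c) : Bd (∑ i, f i) c := bd_sum fun i _ => h i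

lemma toL_toLaurent (P : k[X]) : toL (Polynomial.toLaurent P) = aeval (xL k) P := by
  simp [toL, aeval_def]

lemma coeff_aeval_mul (P : k[X]) (B : ℕ) (hP : P.natDegree < B) (y : LaurentSeries k) (m : ℤ) :
    (aeval (xL k) P * y).coeff m = ∑ b ∈ Finset.range B, P.coeff b * y.coeff (m + b) := by
  rw [aeval_eq_sum_range' hP, Finset.sum_mul, HahnSeries.coeff_sum]
  refine Finset.sum_congr rfl fun b _ => ?_
  rw [Algebra.smul_def, mul_assoc, algebraMap_mul_coeff, xL_pow, HahnSeries.coeff_single_mul]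
  simp

variable [Algebra R[X] k] [IsFractionRing R[X] k]

lemma exists_common_denominator {J : Type*} [Fintype J] (g : J → LaurentPolynomial k) :
    ∃ d : R[X], d ≠ 0 ∧ ∀ i n, ∃ a : R[X],
      algebraMap R[X] k a = algebraMap R[X] k d * (g i).coeff n := by
  classical
  obtain ⟨b, hb⟩ := IsLocalization.exist_integer_multiples_of_finset (nonZeroDivisors R[X])
    (Finset.univ.biUnion fun i => (g i).coeff.support.image (g i).coeff)
  refine ⟨b, nonZeroDivisors.ne_zero b.2, fun i n => ?_⟩
  by_cases h : (g i).coeff n = 0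
  · exact ⟨0, by simp [h]⟩
  · obtain ⟨a, ha⟩ := hb ((g i).coeff n) (by
      simp only [Finset.mem_biUnion, Finset.mem_univ, true_and, Finset.mem_image]
      exact ⟨i, n, by simpa using h, rfl⟩)
    exact ⟨a, by rw [ha, Algebra.smul_def]⟩

/-- Sequences whose expansions are linearly independent over `k[x]` satisfy no linear relation
over `R[θ]` of degree `O(q ^ N)` at index `N`, for `N` large. -/
theorem no_relation {q : ℕ} (hq : 2 ≤ q) (ι : k →+* LaurentSeries R)
    (hι : ∀ a : R[X], ι (algebraMap R[X] k a) = aeval (xL R) a)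
    {J : Type*} [Fintype J] (ψ : J → LaurentSeries k) (s : J → ℕ → LaurentSeries R)
    (hE : ∀ i, Exp ι q (ψ i) (s i))
    (hind : ∀ r : J → k[X], ∑ i, aeval (xL k) (r i) * ψ i = 0 → r = 0) (B0 : ℕ) :
    ∃ N0 : ℕ, ∀ N ≥ N0, ∀ v : J → R[X], (∀ i, (v i).natDegree ≤ B0 * q ^ N) →
      ∑ i, aeval (xL R) (v i) * s i N = 0 → v = 0 := by
  classical
  obtain ⟨B, hB⟩ : ∃ B, B = B0 + 1 := ⟨_, rfl⟩
  have hFD : FiniteDimensional k (degreeLT k (B + 1)) :=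
    Module.Finite.equiv (degreeLTEquiv k (B + 1)).symm
  let Φ : (J → degreeLT k (B + 1)) →+ LaurentSeries k := AddMonoidHom.mk'
    (fun P => ∑ i, aeval (xL k) (P i).1 * ψ i) (fun P P' => by
      rw [← Finset.sum_add_distrib]
      refine Finset.sum_congr rfl fun i _ => ?_
      simp [add_mul])
  have hΦ : ∀ P, Φ P = ∑ i, aeval (xL k) (P i).1 * ψ i := fun P => rfl
  obtain ⟨M, hM⟩ := exists_order_bound Φ (fun c P => by
      rw [hΦ, hΦ, Finset.mul_sum]
      refine Finset.sum_congr rfl fun i _ => ?_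
      rw [Pi.smul_apply, Submodule.coe_smul, Polynomial.smul_eq_C_mul, map_mul, aeval_C, mul_assoc])
    (fun P hP => by
      have := hind _ hP
      funext i
      exact Subtype.ext (congrFun this i))
  choose g hg C hC using fun i => hE i (M + B)
  choose C2 hC2 hC2' using fun i => exists_bd_coeff ι (g i)
  obtain ⟨dd, hdd0, hdd⟩ := exists_common_denominator (R := R) g
  obtain ⟨C', hC'1, hC'2⟩ : ∃ C' : ℕ, (∀ i, C i + dd.natDegree ≤ C') ∧
      ∀ i, C2 i + dd.natDegree ≤ C' := by
    have hle : ∀ i, (|C i| + |C2 i|).toNat ≤ ∑ i, (|C i| + |C2 i|).toNat := fun i =>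
      Finset.single_le_sum (f := fun i => (|C i| + |C2 i|).toNat) (fun _ _ => Nat.zero_le _)
        (Finset.mem_univ i)
    refine ⟨(∑ i, (|C i| + |C2 i|).toNat) + dd.natDegree, fun i => ?_, fun i => ?_⟩
    · have h1 := hle i
      have h2 := le_abs_self (C i)
      have h3 := abs_nonneg (C2 i)
      omega
    · have h1 := hle i
      have h2 := le_abs_self (C2 i)
      have h3 := abs_nonneg (C i)
      omega
  obtain ⟨G, hG⟩ : ∃ G, G = Fintype.card J * Fintype.card (Fin (B + 1) × Fin C') := ⟨_, rfl⟩
  refine ⟨G + C' + 1, fun N hN v hv hrel => ?_⟩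
  by_contra hv0
  obtain ⟨Q, hQ⟩ : ∃ Q, Q = q ^ N := ⟨_, rfl⟩
  have hQZ : (Q : ℤ) = (q : ℤ) ^ N := by rw [hQ]; push_cast; rfl
  have hQbig : G + C' + 1 < Q := by
    have := Nat.lt_pow_self (n := N) (show 1 < q by omega)
    omega
  obtain ⟨g0, hg0, hg0d, hg0v⟩ := exists_multiplier v
    (fun bj : Fin (B + 1) × Fin C' => (bj.1 : ℕ) * Q + (Q - C' + (bj.2 : ℕ)))
  rw [← hG] at hg0d
  set w : J → R[X] := fun i => g0 * v i with hw
  have hwdeg : ∀ i, (w i).natDegree < (B + 1) * Q := by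
    intro i
    have h1 := natDegree_mul_le (p := g0) (q := v i)
    have h2 := hv i
    rw [← hQ] at h2
    have h3 : (B + 1) * Q = B0 * Q + Q + Q := by rw [hB]; ring
    simp only [hw]
    omega
  have hdig : ∀ i, ∀ b < B + 1, (digit Q (w i) b).natDegree ≤ Q - 1 - C' := by
    intro i b hb
    rw [natDegree_le_iff_coeff_eq_zero]
    intro r hr
    rw [coeff_digit]
    split_ifs with h
    · have := hg0v i (⟨b, hb⟩, ⟨r - (Q - C'), by omega⟩)
      simp only at this
      rwa [show Q - C' + (r - (Q - C')) = r by omega] at this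
    · rfl
  set P : J → k[X] := fun i =>
    ∑ b ∈ Finset.range (B + 1), Polynomial.C (algebraMap R[X] k (digit Q (w i) b)) * X ^ b with hP
  have hPc : ∀ i, ∀ b < B + 1, (P i).coeff b = algebraMap R[X] k (digit Q (w i) b) := by
    intro i b hb
    simp only [hP, finsetSum_coeff, coeff_C_mul_X_pow]
    rw [Finset.sum_ite_eq, if_pos (by simpa using hb)]
  have hPd : ∀ i, P i ∈ degreeLT k (B + 1) := by
    intro i
    refine Submodule.sum_mem _ fun b hb => mem_degreeLT.2 ?_
    refine (degree_C_mul_X_pow_le _ _).trans_lt ?_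
    exact_mod_cast Finset.mem_range.1 hb
  have hPn : ∀ i, (P i).natDegree < B + 1 := by
    intro i
    refine lt_of_le_of_lt (natDegree_sum_le_of_forall_le (n := B) _ _ fun b hb => ?_) (by omega)
    refine (natDegree_C_mul_X_pow_le _ _).trans ?_
    have := Finset.mem_range.1 hb
    omega
  have hev : ∀ i, (P i).eval₂ ι (xL R ^ q ^ N) = aeval (xL R) (w i) := by
    intro i
    conv_rhs => rw [sum_digit Q (B + 1) (w i) (hwdeg i)]
    simp only [hP, eval₂_finsetSum, eval₂_mul, eval₂_C, eval₂_X_pow, hι, map_sum, map_mul, map_pow,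
      aeval_X, hQ]
  have hevb : ∀ i, Bd (aeval (xL R) (w i)) (-((Q : ℤ) - 1 - C') - B * Q) := by
    intro i
    rw [sum_digit Q (B + 1) (w i) (hwdeg i), map_sum]
    refine bd_sum fun b hb => ?_
    have hb' := Finset.mem_range.1 hb
    rw [map_mul, map_pow, map_pow, aeval_X]
    refine ((bd_aeval_xL _ _ (hdig i b hb')).mul
      (((od_xL (k := R)).pow Q).pow b).bd).mono ?_
    have : (b : ℤ) * Q ≤ B * Q := mul_le_mul_of_nonneg_right (by omega) (by omega)
    have h2 : (b : ℤ) * (Q * -1) = - (b * Q) := by ring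
    rw [h2]
    omega
  have hP0 : (fun i => (⟨P i, hPd i⟩ : degreeLT k (B + 1))) ≠ 0 := by
    intro h
    apply hv0
    funext i
    have h1 : P i = 0 := congrArg Subtype.val (congrFun h i)
    have h2 : w i = 0 := by
      rw [sum_digit Q (B + 1) (w i) (hwdeg i)]
      refine Finset.sum_eq_zero fun b hb => ?_
      have := hPc i b (Finset.mem_range.1 hb)
      rw [h1, coeff_zero, eq_comm, map_eq_zero_iff _ (IsFractionRing.injective R[X] k)] at this
      rw [this, zero_mul]
    simpa [hw, hg0] using h2
  set Γ : LaurentPolynomial k := ∑ i, Polynomial.toLaurent (P i) * g i with hΓ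
  have hΓL : toL Γ = ∑ i, aeval (xL k) (P i) * toL (g i) := by
    rw [hΓ, map_sum]
    simp only [map_mul, toL_toLaurent]
  have hnb : ¬ Bd (toL Γ) M := by
    intro hbd
    apply hP0
    apply hM
    rw [hΦ]
    have h1 : Bd (∑ i, aeval (xL k) (P i) * (ψ i - toL (g i))) M := by
      refine bd_sum_univ fun i => ?_
      refine ((bd_aeval_xL (P i) B (by have := hPn i; omega)).mul (hg i)).mono (by omega)
    have h2 := h1.add hbd
    rw [hΓL, ← Finset.sum_add_distrib] at h2
    convert h2 using 2 with i
    ring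
  obtain ⟨m0, hm0⟩ := exists_od (y := toL Γ) (fun h => hnb (h ▸ bd_zero _))
  have hm0M : m0 + 1 ≤ M := by
    by_contra h
    exact hnb (hm0.bd.mono (by omega))
  have hm0Q : m0 * (Q : ℤ) ≤ M * Q - Q := by
    have : (m0 + 1) * (Q : ℤ) ≤ M * Q := mul_le_mul_of_nonneg_right hm0M (by omega)
    rw [add_mul, one_mul] at this
    omega
  -- the value of `Γ` is small because of the relation
  have hval : Bd (evN ι q N Γ) (m0 * Q + 1 + dd.natDegree) := by
    have h1 : evN ι q N Γ = - ∑ i, aeval (xL R) (w i) * (s i N - evN ι q N (g i)) := by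
      have h2 : ∑ i, aeval (xL R) (w i) * s i N = 0 := by
        simp only [hw, map_mul, mul_assoc, ← Finset.mul_sum, hrel, mul_zero]
      simp only [mul_sub, Finset.sum_sub_distrib, h2, zero_sub, neg_neg, hΓ, map_sum, map_mul]
      refine Finset.sum_congr rfl fun i _ => ?_
      rw [← hev]
      simp [evN]
    rw [h1]
    refine Bd.neg (bd_sum_univ fun i => ((hevb i).mul (hC i N)).mono ?_)
    have h3 := hC'1 i
    rw [← hQZ, add_mul]
    omega
  have hcoef : ∀ n, Bd (ι (Γ.coeff n)) (-((Q : ℤ) - 1 - C') - (C' - dd.natDegree)) := by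
    intro n
    rw [← neg_neg n, ← coeff_toL, hΓL, HahnSeries.coeff_sum, map_sum]
    refine bd_sum_univ fun i => ?_
    rw [coeff_aeval_mul _ _ (hPn i), map_sum]
    refine bd_sum fun b hb => ?_
    have hb' := Finset.mem_range.1 hb
    rw [map_mul, hPc i b hb', hι, coeff_toL]
    refine ((bd_aeval_xL _ _ (hdig i b hb')).mul (hC2' i _)).mono ?_
    have := hC'2 i
    omega
  have h_den : ∀ n, ∃ a : R[X], algebraMap R[X] k a = algebraMap R[X] k dd * Γ.coeff n := by
    intro n
    choose a ha using hdd
    refine ⟨∑ i, ∑ b ∈ Finset.range (B + 1), digit Q (w i) b * a i (n - b), ?_⟩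
    rw [← neg_neg n, ← coeff_toL, hΓL, HahnSeries.coeff_sum, map_sum, Finset.mul_sum]
    refine Finset.sum_congr rfl fun i _ => ?_
    rw [coeff_aeval_mul _ _ (hPn i), map_sum, Finset.mul_sum]
    refine Finset.sum_congr rfl fun b hb => ?_
    rw [map_mul, ha, hPc i b (Finset.mem_range.1 hb), coeff_toL,
      show -(-n + (b : ℤ)) = - -n - b by ring]
    ring
  have hlead : Γ.coeff (-m0) ≠ 0 := by
    rw [← coeff_toL]; exact (od_iff.1 hm0).2
  have hterm : Bd (ι (Γ.coeff (-m0)) * (xL R ^ q ^ N) ^ (-m0)) (m0 * Q + 1 + dd.natDegree) := by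
    have hsum := evN_eq_sum ι q N Γ
    rw [← Finset.add_sum_erase _ _ (Finsupp.mem_support_iff.2 hlead)] at hsum
    rw [← sub_eq_iff_eq_add] at hsum
    rw [← hsum]
    refine hval.sub (bd_sum fun n hn => ?_)
    rw [Finset.mem_erase, Finsupp.mem_support_iff] at hn
    have hn2 : m0 + 1 ≤ -n := by
      by_contra h
      refine hn.2 ?_
      have := hm0.bd (-n) (by omega)
      rwa [coeff_toL, neg_neg] at this
    refine ((hcoef n).mul (od_xN q N n).bd).mono ?_
    have := mul_le_mul_of_nonneg_right hn2 (show (0 : ℤ) ≤ Q by omega)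
    rw [add_mul, one_mul] at this
    rw [← hQZ]
    omega
  obtain ⟨a, ha⟩ := h_den (-m0)
  have ha0 : a ≠ 0 := by
    rintro rfl
    rw [map_zero, eq_comm, mul_eq_zero] at ha
    rcases ha with ha | ha
    · exact hdd0 ((map_eq_zero_iff _ (IsFractionRing.injective R[X] k)).1 ha)
    · exact hlead ha
  have h1 := (od_aeval_xL dd hdd0).bd.mul hterm
  rw [← hι dd, ← mul_assoc, ← map_mul, ← ha, hι] at h1
  have h2 := ((od_aeval_xL a ha0).mul (od_xN (R := R) q N (-m0))).le_of_bd h1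
  rw [← hQZ, neg_neg] at h2
  omega

end NoRelations

/-! ### The formal analogues of the period and of the zeta value -/

section FormalFunctions

variable {k : Type*} [Field k] {q : ℕ}

lemma int_lt_pow (hq : 2 ≤ q) (I : ℕ) : (I : ℤ) < (q : ℤ) ^ I := by
  exact_mod_cast Nat.lt_pow_self (n := I) (show 1 < q by omega)

/-- The partial products of `ω = ∏_{i ≥ 1} (1 - t / x ^ (q ^ i))⁻¹`. -/
def omS (q : ℕ) (t : k) (I : ℕ) : LaurentSeries k :=
  ∏ i ∈ Finset.range I, (1 - algebraMap k _ t * (xL k ^ q ^ (i + 1))⁻¹)⁻¹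

lemma bd_om_aux (t : k) (r : ℕ) : Bd (algebraMap k _ t * (xL k ^ r)⁻¹) r := by
  have := (bd_algebraMap t).mul (od_xL (k := k).pow r).inv.bd
  simpa using this

lemma od_om_aux (t : k) (r : ℕ) (hr : 1 ≤ r) :
    Od (1 - algebraMap k _ t * (xL k ^ r)⁻¹) 0 :=
  od_one.sub ((bd_om_aux t r).mono (by omega))

lemma od_omS (hq : 2 ≤ q) (t : k) (I : ℕ) : Od (omS q t I) 0 := by
  have := od_prod (s := Finset.range I) (c := fun _ => 0)
    (f := fun i => (1 - algebraMap k (LaurentSeries k) t * (xL k ^ q ^ (i + 1))⁻¹)⁻¹)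
    (fun i _ => by
      simpa using (od_om_aux t (q ^ (i + 1)) (Nat.one_le_pow _ _ (by omega))).inv)
  rw [Finset.sum_const_zero] at this
  exact this

/-- The series `ω`, with `τ ω = (1 - t / x ^ q) ω`. -/
lemma exists_omega (hq : 2 ≤ q) (t : k) : ∃ ω : LaurentSeries k,
    (∀ I, Bd (ω - omS q t I) ((q : ℤ) ^ (I + 1))) ∧ ω ≠ 0 ∧
    tau k (show 0 < q by omega) ω = (1 - algebraMap k _ t * (xL k ^ q)⁻¹) * ω := by
  have hq0 : 0 < q := by omega
  obtain ⟨ω, hω⟩ := exists_limit (omS q t) (fun I => (q : ℤ) ^ (I + 1))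
    (fun a b hab => pow_le_pow_right₀ (by exact_mod_cast hq0) (by omega))
    (fun c => ⟨c.toNat, by have := int_lt_pow hq (c.toNat + 1); push_cast at this; omega⟩)
    (fun I => by
      rw [omS, Finset.prod_range_succ, ← omS]
      have hz := bd_om_aux t (q ^ (I + 1))
      obtain ⟨h1, h2⟩ := geom_aux (hz.mono (d := 1) (by
        exact_mod_cast Nat.one_le_pow (I + 1) q hq0)) 1
      have h3 : ∀ y : LaurentSeries k, omS q t I * y - omS q t I =
        omS q t I * (y - ∑ i ∈ Finset.range 1,
          (algebraMap k (LaurentSeries k) t * (xL k ^ q ^ (I + 1))⁻¹) ^ i) := by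
        intro y; simp; ring
      rw [h3, h1, pow_one]
      refine ((od_omS hq t I).bd.mul (hz.mul h2)).mono ?_
      push_cast; simp)
  refine ⟨ω, hω, ?_, ?_⟩
  · have h0 := hω 0
    have h1 : Od (1 + (ω - omS q t 0)) 0 := od_one.add (h0.mono (by
      simp; omega))
    simp only [omS, Finset.range_zero, Finset.prod_empty, add_sub_cancel] at h1
    exact h1.ne_zero
  · have hτ : ∀ I, tau k hq0 (omS q t I) =
        (1 - algebraMap k _ t * (xL k ^ q)⁻¹) * omS q t (I + 1) := by
      intro I
      have hne := (od_om_aux t q (by omega)).ne_zero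
      rw [omS, omS, Finset.prod_range_succ', map_prod]
      simp only [zero_add, pow_one]
      rw [mul_comm (∏ _ ∈ _, _), ← mul_assoc, mul_inv_cancel₀ hne, one_mul]
      refine Finset.prod_congr rfl fun i _ => ?_
      simp only [map_inv₀, map_sub, map_one, map_mul, map_pow, tau_algebraMap, tau_xL]
      rw [← pow_mul, ← pow_succ']
    rw [← sub_eq_zero]
    refine eq_zero_of_bd fun c => ⟨(q : ℤ) ^ (c.toNat + 2), ?_, ?_⟩
    · have := int_lt_pow hq (c.toNat + 2)
      push_cast at this; omega
    · have h1 := (hω c.toNat).tau hq0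
      have h2 := (od_om_aux t q (by omega)).bd.mul (hω (c.toNat + 1))
      have h3 := (h1.mono (d := (q : ℤ) ^ (c.toNat + 2)) (by rw [← pow_succ'])).sub
        (h2.mono (by simp))
      rw [map_sub, hτ] at h3
      convert h3 using 1
      ring

/-- The series `f = -x ^ q ω ^ (q - 1)` attached to `ω`, with `τ f = (t - x ^ q) ^ (q - 1) f`. -/
lemma tau_f1 (hq : 2 ≤ q) (hneg : (-1 : k) ^ (q - 1) = 1) (t : k) (ω : LaurentSeries k)
    (hω : tau k (show 0 < q by omega) ω = (1 - algebraMap k _ t * (xL k ^ q)⁻¹) * ω) :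
    tau k (show 0 < q by omega) (-xL k ^ q * ω ^ (q - 1)) =
      aeval (xL k) (betaP q t) ^ (q - 1) * (-xL k ^ q * ω ^ (q - 1)) := by
  have hneg' : (-1 : LaurentSeries k) ^ (q - 1) = 1 := by
    have := congrArg (algebraMap k (LaurentSeries k)) hneg
    simpa using this
  have hβ : aeval (xL k) (betaP q t) =
      -1 * xL k ^ q * (1 - algebraMap k _ t * (xL k ^ q)⁻¹) := by
    have := pow_ne_zero q (xL_ne_zero (k := k))
    simp only [betaP, map_sub, aeval_C, map_pow, aeval_X]
    field_simp
    ring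
  rw [hβ]
  simp only [map_mul, map_neg, map_pow, tau_xL, hω, mul_pow, hneg']
  have : (xL k ^ q) ^ q = (xL k ^ q) ^ (q - 1) * xL k ^ q := by
    rw [← pow_succ]; congr 1; omega
  rw [this]
  ring

/-- The term of index `d` of the formal zeta series. -/
def FT (q : ℕ) (t : k) (n : ℕ) (h : k[X]) (d : ℕ) : LaurentSeries k :=
  aeval (xL k ^ q ^ d) h * (∏ j ∈ Finset.range d, aeval (xL k) (C t - X ^ q ^ (j + 1)) ^ n)⁻¹

lemma aeval_xL_pow (r : ℕ) (h : k[X]) : aeval (xL k ^ r) h = aeval (xL k) (expand k r h) := by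
  rw [expand_aeval]

lemma sum_pow_eq (q d : ℕ) :
    ((q : ℤ) - 1) * ∑ j ∈ Finset.range d, (q : ℤ) ^ (j + 1) = (q : ℤ) ^ (d + 1) - q := by
  induction d with
  | zero => simp
  | succ d ih => rw [Finset.sum_range_succ, mul_add, ih]; ring

/-- The numerical estimate behind the convergence of the (formal) zeta series. -/
lemma order_estimate (hq : 2 ≤ q) (n d e : ℕ) (he : (q - 1) * e + q ≤ n * q) :
    (q : ℤ) ^ d - 2 * n ≤ n * ∑ j ∈ Finset.range d, (q : ℤ) ^ (j + 1) - e * (q : ℤ) ^ d := by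
  have h1 := sum_pow_eq q d
  have hq1 : (0 : ℤ) < (q : ℤ) - 1 := by omega
  refine le_of_mul_le_mul_left ?_ hq1
  have h2 : ((q : ℤ) - 1) * (n * ∑ j ∈ Finset.range d, (q : ℤ) ^ (j + 1) - e * (q : ℤ) ^ d) =
      n * ((q : ℤ) ^ (d + 1) - q) - (((q : ℤ) - 1) * e) * (q : ℤ) ^ d := by
    rw [← h1]; ring
  rw [h2]
  have he' : ((q : ℤ) - 1) * e + q ≤ n * q := by
    have : ((q - 1 : ℕ) : ℤ) = (q : ℤ) - 1 := by omega
    rw [← this]; exact_mod_cast he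
  have hQ : (0 : ℤ) < (q : ℤ) ^ d := by positivity
  have h3 := mul_le_mul_of_nonneg_right he' hQ.le
  have h4 : (0 : ℤ) ≤ (n : ℤ) * ((q : ℤ) - 2) := mul_nonneg (by omega) (by omega)
  rw [pow_succ]
  nlinarith

lemma bd_FT (hq : 2 ≤ q) (t : k) (n : ℕ) (h : k[X]) (hh : (q - 1) * h.natDegree + q ≤ n * q)
    (d : ℕ) : Bd (FT q t n h d) ((q : ℤ) ^ d - 2 * n) := by
  have h1 : Bd (aeval (xL k ^ q ^ d) h) (-((h.natDegree * q ^ d : ℕ) : ℤ)) := by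
    rw [aeval_xL_pow]
    refine bd_aeval_xL _ _ ?_
    rw [natDegree_expand]
  have h2 := od_prod (s := Finset.range d) (c := fun j => (n : ℤ) * -((q ^ (j + 1) : ℕ) : ℤ))
    (f := fun j => aeval (xL k) (C t - X ^ q ^ (j + 1)) ^ n)
    (fun j _ => (od_beta (Nat.pos_of_ne_zero (pow_ne_zero _ (by omega))) t).pow n)
  refine (h1.mul h2.inv.bd).mono ((order_estimate hq n d h.natDegree hh).trans ?_)
  push_cast
  rw [Finset.mul_sum, ← Finset.sum_neg_distrib]
  simp only [mul_neg, neg_neg]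
  omega

lemma tau_FT (hq : 2 ≤ q) (t : k) (n : ℕ) (h : k[X]) (d : ℕ) :
    tau k (show 0 < q by omega) (FT q t n h d) =
      aeval (xL k) (betaP q t) ^ n * FT q t n h (d + 1) := by
  have hβ : aeval (xL k) (betaP q t) ^ n ≠ 0 := pow_ne_zero _ (od_beta (by omega) t).ne_zero
  rw [FT, FT, Finset.prod_range_succ', zero_add, pow_one, ← betaP, mul_inv, map_mul, aeval_xL_pow,
    tau_aeval, aeval_xL_pow, expand_expand, ← pow_succ']
  rw [mul_left_comm, mul_left_comm _ _ (aeval (xL k) (betaP q t) ^ n)⁻¹, mul_inv_cancel₀ hβ,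
    mul_one, map_inv₀, map_prod]
  congr 2
  refine Finset.prod_congr rfl fun j _ => ?_
  simp only [map_pow, map_sub, aeval_C, aeval_X, tau_algebraMap, tau_xL]
  rw [← pow_mul, ← pow_succ']

/-- The formal zeta series `F`, with `τ F = (t - x ^ q) ^ n (F - h)`. -/
lemma exists_F (hq : 2 ≤ q) (t : k) (n : ℕ) (h : k[X])
    (hh : (q - 1) * h.natDegree + q ≤ n * q) : ∃ F : LaurentSeries k,
    (∀ I, Bd (F - ∑ d ∈ Finset.range I, FT q t n h d) ((q : ℤ) ^ I - 2 * n)) ∧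
    tau k (show 0 < q by omega) F = aeval (xL k) (betaP q t) ^ n * (F - aeval (xL k) h) := by
  have hq0 : 0 < q := by omega
  obtain ⟨F, hF⟩ := exists_limit (fun I => ∑ d ∈ Finset.range I, FT q t n h d)
    (fun I => (q : ℤ) ^ I - 2 * n)
    (fun a b hab => by
      have := pow_le_pow_right₀ (show (1 : ℤ) ≤ q by exact_mod_cast hq0) hab
      simp only; omega)
    (fun c => ⟨(c + 2 * n).toNat, by have := int_lt_pow hq (c + 2 * n).toNat; omega⟩)
    (fun I => by
      simp only [Finset.sum_range_succ, add_sub_cancel_left]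
      exact bd_FT hq t n h hh I)
  refine ⟨F, hF, ?_⟩
  rw [← sub_eq_zero]
  refine eq_zero_of_bd fun c => ?_
  obtain ⟨I, hI⟩ : ∃ I : ℕ, c + 2 * n + n * q + 2 * n * q ≤ I :=
    ⟨(c + 2 * n + n * q + 2 * n * q).toNat, by omega⟩
  have hIlt := int_lt_pow hq (I + 1)
  push_cast at hIlt
  refine ⟨(q : ℤ) ^ (I + 1) - 2 * n - n * q - 2 * n * q, by omega, ?_⟩
  have h1 := (hF I).tau hq0
  have h2 := ((od_beta hq0 t).pow n).bd.mul (hF (I + 1))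
  have hnq : (0 : ℤ) ≤ n * q := by positivity
  have h3 := (h1.mono (d := (q : ℤ) ^ (I + 1) - 2 * n - n * q - 2 * n * q) (by
      rw [mul_sub, ← pow_succ']
      have : (q : ℤ) * (2 * n) = 2 * n * q := by ring
      omega)).sub
    (h2.mono (by
      have : 2 * (n : ℤ) * q = 2 * (n * q) := by ring
      rw [mul_neg]
      omega))
  rw [map_sub, map_sum, Finset.sum_range_succ'] at h3
  simp only [tau_FT hq] at h3
  rw [← Finset.mul_sum] at h3
  convert h3 using 1
  have h0 : FT q t n h 0 = aeval (xL k) h := by simp [FT]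
  rw [h0]
  ring

end FormalFunctions

/-! ### Convergence of the period and of the zeta value -/

section Topology

open Filter Topology

variable {R : Type*} [Field R]

lemma tendsto_of_bd {α : Type*} {l : Filter α} {u : α → LaurentSeries R} {z : LaurentSeries R}
    (h : ∀ D : ℤ, ∀ᶠ x in l, Bd (u x - z) D) : Tendsto u l (𝓝 z) := by
  rw [tendsto_iff_forall_eventually_mem]
  intro s hs
  rw [Valued.mem_nhds] at hs
  obtain ⟨γ, hγ⟩ := hs
  obtain ⟨x, hx⟩ := MonoidWithZeroHom.ValueGroup₀.restrict₀_surjective _ γ.val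
  rw [← Valuation.restrict_def] at hx
  have hx0 : (Valued.v x : WithZero (Multiplicative ℤ)) ≠ 0 := by
    intro h0
    rw [← Valuation.restrict_eq_zero_iff, hx] at h0
    exact γ.ne_zero h0
  filter_upwards [h (-WithZero.log (Valued.v x) + 1)] with y hy
  refine hγ ?_
  rw [Set.mem_ofPred_eq, ← hx, Valuation.restrict_lt_iff]
  refine lt_of_le_of_lt ((LaurentSeries.valuation_le_iff_coeff_lt_eq_zero R).2 hy) ?_
  rw [← WithZero.lt_log_iff_exp_lt hx0]
  omega

/-- Convergence of a family along finite sets `S I`, at the rate `a`, outside of which the terms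
are small at the rate `b`. -/
lemma hasSum_of_bd {β : Type*} (f : β → LaurentSeries R) (z : LaurentSeries R)
    (S : ℕ → Finset β) (a b : ℕ → ℤ) (hu : ∀ D, ∃ I, D ≤ a I ∧ D ≤ b I)
    (hlim : ∀ I, Bd (z - ∑ i ∈ S I, f i) (a I)) (hout : ∀ I, ∀ i ∉ S I, Bd (f i) (b I)) :
    HasSum f z := by
  classical
  refine tendsto_of_bd fun D => ?_
  obtain ⟨I, hI, hI'⟩ := hu D
  filter_upwards [eventually_ge_atTop (S I)] with s hs
  rw [← Finset.sum_sdiff hs]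
  have h1 : Bd (∑ i ∈ s \ S I, f i) D :=
    bd_sum fun i hi => (hout I i (Finset.mem_sdiff.1 hi).2).mono hI'
  convert h1.sub ((hlim I).mono hI) using 1
  ring

lemma hasProd_of_bd (f : ℕ → LaurentSeries R) (z : LaurentSeries R)
    (a b : ℕ → ℤ) (hb : ∀ i, 0 ≤ b i) (hbm : Monotone b) (hu : ∀ D, ∃ I, D ≤ a I ∧ D ≤ b I)
    (hlim : ∀ I, Bd (z - ∏ i ∈ Finset.range I, f i) (a I)) (hout : ∀ i, Bd (f i - 1) (b i)) :
    HasProd f z := by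
  classical
  refine tendsto_of_bd fun D => ?_
  obtain ⟨I, hI, hI'⟩ := hu D
  filter_upwards [eventually_ge_atTop (Finset.range I)] with s hs
  rw [← Finset.prod_sdiff hs]
  have hf : ∀ i, Bd (f i) 0 := fun i => by
    have := ((hout i).mono (hb i)).add bd_one
    simpa using this
  have h1 : ∀ u : Finset ℕ, (∀ i ∈ u, I ≤ i) → Bd (∏ i ∈ u, f i - 1) (b I) := by
    intro u
    induction u using Finset.induction_on with
    | empty => intro; simpa using bd_zero _
    | insert i u hi ih =>
      intro hu
      rw [Finset.prod_insert hi]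
      have h2 := (hf i).mul (ih fun j hj => hu j (Finset.mem_insert_of_mem hj))
      have h3 := (hout i).mono (hbm (hu i (Finset.mem_insert_self _ _)))
      rw [zero_add] at h2
      convert h2.add h3 using 1
      ring
  have h2 := h1 (s \ Finset.range I) fun i hi => by simpa using (Finset.mem_sdiff.1 hi).2
  have h3 : Bd (∏ i ∈ Finset.range I, f i) 0 := by
    generalize Finset.range I = u
    induction u using Finset.induction_on with
    | empty => simpa using bd_one
    | insert i u hi ih => rw [Finset.prod_insert hi]; simpa using (hf i).mul ih
  convert ((h2.mul h3).mono (d := D) (by omega)).sub ((hlim I).mono hI) using 1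
  ring

end Topology

/-! ### The period and the zeta value as specializations of formal series -/

section Values

variable {k R : Type*} [Field k] [Field R] {ι : k →+* LaurentSeries R} {q : ℕ}

/-- The factor `(1 - θ ^ (1 - q ^ (i + 1)))⁻¹` of the period. -/
def piFac (R : Type*) [Field R] (q i : ℕ) : LaurentSeries R :=
  (1 - xL R * (xL R ^ q ^ (i + 1))⁻¹)⁻¹

lemma bd_piFac_aux (r : ℕ) : Bd (xL R * (xL R ^ r)⁻¹) (r - 1) := by
  have := (od_xL (k := R)).bd.mul ((od_xL (k := R)).pow r).inv.bd
  exact this.mono (by simp)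

lemma od_piFac (hq : 2 ≤ q) (i : ℕ) : Od (piFac R q i) 0 := by
  have h : (2 : ℤ) ≤ (q : ℤ) ^ (i + 1) := by
    have := int_lt_pow hq (i + 1); push_cast at this; omega
  have h1 : Od (1 - xL R * (xL R ^ q ^ (i + 1))⁻¹) 0 :=
    od_one.sub ((bd_piFac_aux _).mono (by push_cast; omega))
  simpa [piFac] using h1.inv

lemma bd_piFac_sub_one (hq : 2 ≤ q) (i : ℕ) : Bd (piFac R q i - 1) ((q : ℤ) ^ (i + 1) - 1) := by
  have h : (2 : ℤ) ≤ (q : ℤ) ^ (i + 1) := by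
    have := int_lt_pow hq (i + 1); push_cast at this; omega
  have hz := bd_piFac_aux (R := R) (q ^ (i + 1))
  obtain ⟨h1, h2⟩ := geom_aux (hz.mono (d := 1) (by push_cast; omega)) 1
  have h3 := hz.mul h2
  simp only [Finset.range_one, Finset.sum_singleton, pow_zero, pow_one] at h1
  rw [piFac, h1]
  exact h3.mono (by push_cast; omega)

lemma od_prod_piFac (hq : 2 ≤ q) (s : Finset ℕ) : Od (∏ i ∈ s, piFac R q i) 0 := by
  have := od_prod (s := s) (c := fun _ => 0) (f := fun i => piFac R q i)
    (fun i _ => od_piFac hq i)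
  rwa [Finset.sum_const_zero] at this

lemma exists_pival (R : Type*) [Field R] (hq : 2 ≤ q) : ∃ P : LaurentSeries R,
    HasProd (piFac R q) P ∧
    ∀ I, Bd (P - ∏ i ∈ Finset.range I, piFac R q i) ((q : ℤ) ^ (I + 1) - 1) := by
  have hq0 : 0 < q := by omega
  have hm : Monotone fun I : ℕ => (q : ℤ) ^ (I + 1) - 1 := fun a b hab => by
    have := pow_le_pow_right₀ (show (1 : ℤ) ≤ q by exact_mod_cast hq0)
      (show a + 1 ≤ b + 1 by omega)
    simp only; omega
  have hu : ∀ c : ℤ, ∃ I : ℕ, c ≤ (q : ℤ) ^ (I + 1) - 1 := fun c =>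
    ⟨c.toNat, by have := int_lt_pow hq (c.toNat + 1); push_cast at this; omega⟩
  obtain ⟨P, hP⟩ := exists_limit (fun I => ∏ i ∈ Finset.range I, piFac R q i)
    (fun I => (q : ℤ) ^ (I + 1) - 1) hm hu (fun I => by
      simp only [Finset.prod_range_succ]
      have := (od_prod_piFac (R := R) hq (Finset.range I)).bd.mul (bd_piFac_sub_one hq I)
      rw [zero_add] at this
      convert this using 1
      ring)
  refine ⟨P, hasProd_of_bd _ _ (fun I => (q : ℤ) ^ (I + 1) - 1)
    (fun I => (q : ℤ) ^ (I + 1) - 1) (fun i => ?_) hm (fun D => ?_) hP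
    (bd_piFac_sub_one hq), hP⟩
  · have := int_lt_pow hq (i + 1); push_cast at this; omega
  · obtain ⟨I, hI⟩ := hu D
    exact ⟨I, hI, hI⟩

/-- The series `ω` specializes, at `x = θ ^ (q ^ N)`, to the tails of the product for the
period. -/
lemma exp_omega (hq : 2 ≤ q) (t : k) (ht : ι t = xL R) (ω : LaurentSeries k)
    (hω : ∀ I, Bd (ω - omS q t I) ((q : ℤ) ^ (I + 1))) (P : LaurentSeries R)
    (hP : ∀ I, Bd (P - ∏ i ∈ Finset.range I, piFac R q i) ((q : ℤ) ^ (I + 1) - 1)) :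
    Exp ι q ω (fun N => P * (∏ i ∈ Finset.range N, piFac R q i)⁻¹) := by
  refine Exp.lim (omS q t) (fun I N => ∏ i ∈ Finset.range I, piFac R q (N + i)) (fun I => ?_)
    (fun M => ?_)
  · refine exp_prod (by omega) _ fun i _ => ?_
    refine (exp_geom (by omega) t ht (q ^ (i + 1)) ?_).congr rfl fun N => ?_
    · have := int_lt_pow hq (i + 1)
      zify; push_cast at this; omega
    · rw [piFac, ← pow_mul, ← pow_add, add_assoc]
  · have hI := int_lt_pow hq (M.toNat + 1)
    push_cast at hI
    refine ⟨M.toNat, (hω _).mono (by omega), 1, fun N => ?_⟩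
    have h1 := (hP (N + M.toNat)).mul (od_prod_piFac (R := R) hq (Finset.range N)).inv.bd
    rw [sub_mul, Finset.prod_range_add, mul_comm (∏ i ∈ Finset.range N, _),
      mul_inv_cancel_right₀ (od_prod_piFac hq _).ne_zero] at h1
    refine h1.mono ?_
    have h2 : (q : ℤ) ^ (N + M.toNat + 1) = (q : ℤ) ^ (M.toNat + 1) * (q : ℤ) ^ N := by ring
    rw [h2]
    have : M * (q : ℤ) ^ N ≤ (q : ℤ) ^ (M.toNat + 1) * (q : ℤ) ^ N :=
      mul_le_mul_of_nonneg_right (by omega) (by positivity)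
    omega

/-- `ℓ_d = ∏_{j=1}^d (θ - θ ^ (q ^ j))` in `R((1/θ))`. -/
def ellL (R : Type*) [Field R] (q d : ℕ) : LaurentSeries R :=
  ∏ j ∈ Finset.range d, (xL R - xL R ^ q ^ (j + 1))

lemma od_bracket (r : ℕ) (hr : 2 ≤ r) : Od (xL R - xL R ^ r) (-r) := by
  have h1 : Od (-(xL R ^ r)) (-r) := by
    simpa using ((od_xL (k := R)).pow r).neg
  rw [sub_eq_add_neg, add_comm]
  exact h1.add ((od_xL (k := R)).bd.mono (by omega))

lemma two_le_pow (hq : 2 ≤ q) (j : ℕ) : 2 ≤ q ^ (j + 1) := by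
  have := int_lt_pow hq (j + 1)
  zify; push_cast at this; omega

lemma od_ellL (hq : 2 ≤ q) (d : ℕ) :
    Od (ellL R q d) (-∑ j ∈ Finset.range d, (q : ℤ) ^ (j + 1)) := by
  have := od_prod (s := Finset.range d) (c := fun j => -((q ^ (j + 1) : ℕ) : ℤ))
    (f := fun j => xL R - xL R ^ q ^ (j + 1)) (fun j _ => od_bracket _ (two_le_pow hq j))
  rw [Finset.sum_neg_distrib] at this
  push_cast at this
  exact this

lemma sum_pow_le (hq : 2 ≤ q) (d : ℕ) :
    ∑ j ∈ Finset.range d, (q : ℤ) ^ (j + 1) ≤ 2 * (q : ℤ) ^ d := by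
  induction d with
  | zero => simp
  | succ d ih =>
    rw [Finset.sum_range_succ, pow_succ]
    have : (0 : ℤ) < (q : ℤ) ^ d := by positivity
    nlinarith

/-- The power sum `S_d`, as a specialization of `h`. -/
def Sval (ι : k →+* LaurentSeries R) (q n : ℕ) (h : k[X]) (d : ℕ) : LaurentSeries R :=
  h.eval₂ ι (xL R ^ q ^ d) * (ellL R q d ^ n)⁻¹

lemma exists_bd_Sval (hq : 2 ≤ q) (n : ℕ) (h : k[X])
    (hh : (q - 1) * h.natDegree + q ≤ n * q) :
    ∃ c : ℤ, 0 ≤ c ∧ ∀ d, Bd (Sval ι q n h d) ((q : ℤ) ^ d - 2 * n - c) := by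
  obtain ⟨c, hc0, hc⟩ := (exp_aeval (ι := ι) (q := q) h).bd (bd_aeval_xL h h.natDegree le_rfl)
  refine ⟨c, hc0, fun d => ?_⟩
  have h1 := (hc d).mul ((od_ellL hq d).pow n).inv.bd
  refine h1.mono ?_
  have := order_estimate hq n d h.natDegree hh
  have e1 : -((n : ℤ) * -∑ j ∈ Finset.range d, (q : ℤ) ^ (j + 1)) =
    n * ∑ j ∈ Finset.range d, (q : ℤ) ^ (j + 1) := by ring
  rw [e1, neg_mul]
  omega

lemma exp_inv_bracket (hq : 1 ≤ q) (t : k) (ht : ι t = xL R) (r : ℕ) (hr : 2 ≤ r) :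
    Exp ι q (aeval (xL k) (C t - X ^ r))⁻¹ (fun N => (xL R - (xL R ^ q ^ N) ^ r)⁻¹) := by
  have h1 := exp_toL (ι := ι) (q := q) (-(LaurentPolynomial.T (-(r : ℤ))))
  refine (h1.mul hq (exp_geom hq t ht r hr)).congr ?_ fun N => ?_
  · have := pow_ne_zero r (xL_ne_zero (k := k))
    simp only [map_neg, toL_T, zpow_neg, zpow_natCast, map_sub, aeval_C, map_pow, aeval_X]
    rw [neg_mul, ← mul_inv, ← inv_neg]
    congr 1
    field_simp
    ring
  · have := pow_ne_zero r (pow_ne_zero (q ^ N) (xL_ne_zero (k := R)))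
    simp only [map_neg, evN_T, zpow_neg, zpow_natCast]
    rw [neg_mul, ← mul_inv, ← inv_neg]
    congr 1
    field_simp
    ring

/-- The formal zeta series `F` specializes to the normalized remainders of the zeta value. -/
lemma exp_F (hq : 2 ≤ q) (t : k) (ht : ι t = xL R) (n : ℕ) (h : k[X]) (F : LaurentSeries k)
    (hF : ∀ I, Bd (F - ∑ d ∈ Finset.range I, FT q t n h d) ((q : ℤ) ^ I - 2 * n))
    (ζ : LaurentSeries R) (c : ℤ)
    (hζ : ∀ I, Bd (ζ - ∑ d ∈ Finset.range I, Sval ι q n h d) ((q : ℤ) ^ I - 2 * n - c)) :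
    Exp ι q F (fun N => ellL R q N ^ n * (ζ - ∑ d ∈ Finset.range N, Sval ι q n h d)) := by
  refine Exp.lim (fun I => ∑ d ∈ Finset.range I, FT q t n h d)
    (fun I N => ∑ d ∈ Finset.range I, ellL R q N ^ n * Sval ι q n h (N + d))
    (fun I => exp_sum _ fun d _ => ?_) (fun M => ?_)
  · have h1 := exp_aeval (ι := ι) (q := q) (expand k (q ^ d) h)
    have h2 := exp_prod (ι := ι) (q := q) (by omega) (Finset.range d) fun j _ =>
      (exp_inv_bracket (by omega) t ht (q ^ (j + 1)) (two_le_pow hq j)).pow (by omega) n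
    refine (h1.mul (by omega) h2).congr ?_ fun N => ?_
    · rw [FT, aeval_xL_pow, ← Finset.prod_inv_distrib]
      simp only [inv_pow]
    · have hN := (od_ellL (R := R) hq N).ne_zero
      have e1 : ellL R q (N + d) = ellL R q N *
          ∏ j ∈ Finset.range d, (xL R - (xL R ^ q ^ N) ^ q ^ (j + 1)) := by
        rw [ellL, Finset.prod_range_add, ← ellL]
        congr 1
        refine Finset.prod_congr rfl fun j _ => ?_
        rw [← pow_mul, ← pow_add, add_assoc]
      rw [Sval, e1, mul_pow, mul_inv, mul_left_comm, mul_inv_cancel_left₀ (pow_ne_zero _ hN),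
        expand_eq_comp_X_pow, eval₂_comp, eval₂_X_pow, ← pow_mul, ← pow_add, Finset.prod_pow,
        Finset.prod_inv_distrib, inv_pow]
  · obtain ⟨I, hI⟩ : ∃ I : ℕ, M + 4 * n ≤ I := ⟨(M + 4 * n).toNat, by omega⟩
    have hI' := int_lt_pow hq I
    refine ⟨I, (hF I).mono (by omega), 2 * n + c, fun N => ?_⟩
    have h1 := ((od_ellL (R := R) hq N).pow n).bd.mul (hζ (N + I))
    rw [Finset.sum_range_add, ← sub_sub, mul_sub _ (_ - _), Finset.mul_sum] at h1
    refine h1.mono ?_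
    have h2 := sum_pow_le hq N
    have h3 := mul_le_mul_of_nonneg_left h2 (show (0 : ℤ) ≤ n by positivity)
    have hQ : (0 : ℤ) < (q : ℤ) ^ N := by positivity
    have h4 := mul_le_mul_of_nonneg_right (show M + 2 * n ≤ (q : ℤ) ^ I by omega) hQ.le
    rw [pow_add, mul_neg]
    nlinarith

end Values

/-! ### Independence of the formal series -/

section Independence

variable {k R : Type*} [Field k] [Field R] {ι : k →+* LaurentSeries R} {q : ℕ}

lemma neg_one_pow_card (p : ℕ) [Fact p.Prime] (E : Type*) [Field E] [CharP E p] {f : ℕ}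
    (hqp : q = p ^ f) (hq : 2 ≤ q) : (-1 : E) ^ (q - 1) = 1 := by
  rcases (Fact.out : p.Prime).eq_two_or_odd' with rfl | ho
  · have : (-1 : E) = 1 := CharTwo.neg_eq 1
    rw [this, one_pow]
  · have : Odd q := hqp ▸ ho.pow
    exact Even.neg_one_pow (by obtain ⟨m, hm⟩ := this; exact ⟨m, by omega⟩)

/-- `ℓ_N ^ (q - 1) θ ^ q = θ ^ (q ^ (N + 1)) ∏_{i ≤ N} (1 - θ ^ (1 - q ^ i)) ^ (q - 1)`. -/
lemma ellL_pow (hq : 2 ≤ q) (hneg : (-1 : R) ^ (q - 1) = 1) (N : ℕ) :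
    ellL R q N ^ (q - 1) * xL R ^ q =
      (xL R ^ q ^ N) ^ q * ((∏ i ∈ Finset.range N, piFac R q i)⁻¹) ^ (q - 1) := by
  have hneg' : (-1 : LaurentSeries R) ^ (q - 1) = 1 := by
    have := congrArg (algebraMap R (LaurentSeries R)) hneg
    simpa using this
  induction N with
  | zero => simp [ellL]
  | succ N ih =>
    have h0 := pow_ne_zero (q ^ (N + 1)) (xL_ne_zero (k := R))
    have e : xL R - xL R ^ q ^ (N + 1) = -1 * xL R ^ q ^ (N + 1) * (piFac R q N)⁻¹ := by
      rw [piFac, inv_inv]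
      field_simp
      ring
    rw [ellL, Finset.prod_range_succ, ← ellL, mul_pow, mul_right_comm, ih, e, mul_pow, mul_pow,
      hneg', one_mul, Finset.prod_range_succ, mul_inv, mul_pow, ← pow_mul, ← pow_succ]
    have : (xL R ^ q ^ (N + 1)) ^ q =
        (xL R ^ q ^ (N + 1)) ^ (q - 1) * xL R ^ q ^ (N + 1) := by
      rw [← pow_succ]; congr 1; omega
    rw [this]
    ring

/-- The solutions `w`, `F` of the two difference equations are algebraically independent over
`k(x)`, provided that `F` specializes to the remainders of a nonzero `ζ`. -/
lemma formal_independence (p : ℕ) [Fact p.Prime] [CharP k p] [CharP R p] {f : ℕ}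
    (hqp : q = p ^ f) (hq : 2 ≤ q) (t : k) (ht : ι t = xL R) (n : ℕ) (hn : 1 ≤ n)
    (hodd : ¬ (q - 1) ∣ n) (h : k[X]) (w F : LaurentSeries k) (hw : w ≠ 0)
    (hwτ : tau k (show 0 < q by omega) w = aeval (xL k) (betaP q t) ^ (q - 1) * w)
    (hFτ : tau k (show 0 < q by omega) F =
      aeval (xL k) (betaP q t) ^ n * (F - aeval (xL k) h))
    (ζ : LaurentSeries R) (hζ : ζ ≠ 0)
    (hF : Exp ι q F (fun N => ellL R q N ^ n * (ζ - ∑ d ∈ Finset.range N, Sval ι q n h d)))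
    (D : ℕ) (r : Fin D × Fin D → k[X])
    (hrel : ∑ ij, aeval (xL k) (r ij) * (w ^ (ij.1 : ℕ) * F ^ (ij.2 : ℕ)) = 0) : r = 0 := by
  by_contra hr
  have : CharP (LaurentSeries R) p := charP_of_injective_algebraMap
    (algebraMap R (LaurentSeries R)).injective p
  have htinj : Function.Injective fun i : ℕ => t ^ q ^ i := by
    intro i j hij
    have h1 := congrArg ι hij
    simp only [map_pow, ht] at h1
    have h2 := (od_xL (k := R)).pow (q ^ i)
    rw [h1] at h2
    have h3 := h2.unique ((od_xL (k := R)).pow (q ^ j))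
    exact Nat.pow_right_injective hq (by zify; push_cast at h3; omega)
  obtain ⟨i, P, hFP, hexp, hPt⟩ := exists_polynomial_of_relation (by omega) p hqp hq t htinj n hn
    hodd h w F hw (q - 1) (by omega) hwτ hFτ D r hr hrel
  -- The functional equation of `P` determines its values at the points `θ ^ (q ^ N)`.
  have hval : ∀ N, P.eval₂ ι (xL R ^ q ^ N) =
      -(ellL R q N ^ n * ∑ d ∈ Finset.range N, Sval ι q n h d) ^ p ^ i := by
    intro N
    induction N with
    | zero =>
      have h1 : P.eval₂ ι (ι t) = ι (P.eval t) := eval₂_at_apply ι t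
      have : p ^ i ≠ 0 := pow_ne_zero _ (Fact.out : p.Prime).ne_zero
      rw [pow_zero, pow_one, ← ht, h1, hPt]
      rw [Finset.range_zero, Finset.sum_empty, mul_zero, zero_pow this, map_zero, neg_zero]
    | succ N ih =>
      have h1 := congrArg (fun Q : k[X] => Q.eval₂ ι (xL R ^ q ^ N)) hexp
      simp only [expand_eq_comp_X_pow, eval₂_comp, eval₂_X, eval₂_mul, eval₂_pow, eval₂_sub,
        betaP, eval₂_C, ht] at h1
      rw [← pow_mul, ← pow_succ, ih] at h1
      have h2 : ellL R q N ^ n ≠ 0 := pow_ne_zero _ (od_ellL hq N).ne_zero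
      have h3 : h.eval₂ ι (xL R ^ q ^ N) = ellL R q N ^ n * Sval ι q n h N := by
        rw [Sval, mul_left_comm, mul_inv_cancel₀ h2, mul_one]
      have h4 : ellL R q (N + 1) = ellL R q N * (xL R - xL R ^ q ^ (N + 1)) := by
        rw [ellL, Finset.prod_range_succ, ← ellL]
      have h5 : ellL R q (N + 1) ^ n * ∑ d ∈ Finset.range (N + 1), Sval ι q n h d =
          (xL R - xL R ^ q ^ (N + 1)) ^ n * (ellL R q N ^ n * ∑ d ∈ Finset.range N, Sval ι q n h d +
            ellL R q N ^ n * Sval ι q n h N) := by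
        rw [Finset.sum_range_succ, h4, mul_pow]; ring
      rw [h1, h3, h5, mul_pow _ (_ + _), add_pow_char_pow, pow_mul]
      ring
  have hE := (hF.pow (by omega) (p ^ i)).add
    ((exp_aeval (ι := ι) (q := q) (-P)).congr rfl fun N => rfl)
  rw [hFP, map_neg, add_neg_cancel] at hE
  obtain ⟨C, hC0, hC⟩ := hE.bd (bd_zero 0)
  obtain ⟨c, hc⟩ := exists_od hζ
  have key : ∀ N : ℕ, (N : ℤ) ≤ C + (p ^ i : ℕ) * c := by
    intro N
    have h1 := hC N
    rw [eval₂_neg, hval, neg_neg, mul_sub, sub_pow_char_pow, sub_add_cancel] at h1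
    have h2 := (((((od_ellL (R := R) hq N).pow n).mul hc)).pow (p ^ i)).le_of_bd h1
    have h3 : (N : ℤ) ≤ ∑ j ∈ Finset.range N, (q : ℤ) ^ (j + 1) := by
      have : ∀ j ∈ Finset.range N, (1 : ℤ) ≤ (q : ℤ) ^ (j + 1) := fun j _ => by
        have := int_lt_pow hq (j + 1); push_cast at this; omega
      simpa using Finset.sum_le_sum this
    have h4 : (1 : ℤ) ≤ (p ^ i : ℕ) * n := by
      have : 0 < p ^ i := pow_pos (Fact.out : p.Prime).pos _
      exact_mod_cast Nat.mul_pos this (by omega)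
    have h5 := mul_le_mul h4 h3 (by omega) (by omega)
    rw [zero_mul, zero_sub] at h2
    nlinarith
  have := key (C + (p ^ i : ℕ) * c + 1).toNat
  omega

end Independence

/-! ### Independence of the period and of the zeta value -/

section Core

variable {k R : Type*} [Field k] [Field R] {q : ℕ}

lemma natDegree_le_of_bd (P : R[X]) (b : ℕ) (h : Bd (aeval (xL R) P) (-b)) :
    P.natDegree ≤ b := by
  by_cases hP : P = 0
  · simp [hP]
  · have := (od_aeval_xL P hP).le_of_bd h
    omega

/-- The polynomial `ℓ_N`. -/
def ellP (R : Type*) [Field R] (q N : ℕ) : R[X] := ∏ j ∈ Finset.range N, (X - X ^ q ^ (j + 1))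

lemma aeval_ellP (N : ℕ) : aeval (xL R) (ellP R q N) = ellL R q N := by
  simp [ellP, ellL, map_prod]

lemma ellP_ne_zero (hq : 2 ≤ q) (N : ℕ) : ellP R q N ≠ 0 := by
  intro h
  have := congrArg (aeval (xL R)) h
  rw [aeval_ellP, map_zero] at this
  exact (od_ellL hq N).ne_zero this

lemma natDegree_ellP_le (hq : 2 ≤ q) (N : ℕ) : (ellP R q N).natDegree ≤ 2 * q ^ N := by
  apply natDegree_le_of_bd
  rw [aeval_ellP]
  exact (od_ellL hq N).bd.mono (by have := sum_pow_le hq N; push_cast; omega)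

/-- The partial sums of the zeta value have denominators dividing `Γ ℓ_N ^ n` with `Γ` independent
of `N`, and numerators of degree `O(q ^ N)`. -/
lemma exists_numerators [Algebra R[X] k] [IsFractionRing R[X] k] (ι : k →+* LaurentSeries R)
    (hι : ∀ a : R[X], ι (algebraMap R[X] k a) = aeval (xL R) a) (hq : 2 ≤ q) (n : ℕ) (h : k[X])
    (hh : (q - 1) * h.natDegree + q ≤ n * q) :
    ∃ (Γ : R[X]) (T : ℕ → R[X]) (B : ℕ), Γ ≠ 0 ∧ ∀ N, (T N).natDegree ≤ B * q ^ N ∧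
      aeval (xL R) (T N) = aeval (xL R) Γ *
        (ellL R q N ^ n * ∑ d ∈ Finset.range N, Sval ι q n h d) := by
  obtain ⟨b, hbm, hb⟩ := IsLocalization.integerNormalization_spec (nonZeroDivisors R[X]) h
  set g := IsLocalization.integerNormalization (nonZeroDivisors R[X]) h
  have hev : ∀ d : ℕ, aeval (xL R) (g.eval (X ^ q ^ d)) =
      aeval (xL R) b * h.eval₂ ι (xL R ^ q ^ d) := by
    intro d
    have h1 := congrArg (fun Q : k[X] => Q.eval₂ ι (xL R ^ q ^ d)) hb
    have h2 : ι.comp (algebraMap R[X] k) = (aeval (xL R) : R[X] →ₐ[R] LaurentSeries R).toRingHom :=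
      RingHom.ext hι
    simp only [eval₂_map, h2] at h1
    rw [Algebra.smul_def, IsScalarTower.algebraMap_apply R[X] k k[X], algebraMap_eq, eval₂_mul,
      eval₂_C, hι] at h1
    rw [← h1]
    have h3 := hom_eval₂ g (RingHom.id _) (aeval (xL R) : R[X] →ₐ[R] LaurentSeries R).toRingHom
      (X ^ q ^ d)
    have h4 : (aeval (xL R) : R[X] →ₐ[R] LaurentSeries R).toRingHom (X ^ q ^ d) = xL R ^ q ^ d :=
      aeval_X_pow _
    rw [RingHom.comp_id, h4] at h3
    exact h3
  obtain ⟨c, hc0, hc⟩ := exists_bd_Sval (ι := ι) hq n h hh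
  have hb0 : b ≠ 0 := nonZeroDivisors.ne_zero hbm
  let T : ℕ → R[X] := fun N => ∑ d ∈ Finset.range N,
    g.eval (X ^ q ^ d) * (∏ j ∈ Finset.Ico d N, (X - X ^ q ^ (j + 1))) ^ n
  have hT : ∀ N, aeval (xL R) (T N) = aeval (xL R) b *
        (ellL R q N ^ n * ∑ d ∈ Finset.range N, Sval ι q n h d) := by
    intro N
    simp only [T, map_sum, map_mul, map_pow, Finset.mul_sum, hev, map_prod, map_sub, aeval_X]
    refine Finset.sum_congr rfl fun d hd => ?_
    have e1 : ellL R q N = ellL R q d * ∏ j ∈ Finset.Ico d N, (xL R - xL R ^ q ^ (j + 1)) :=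
      (Finset.prod_range_mul_prod_Ico _ (Finset.mem_range.1 hd).le).symm
    have e2 : ellL R q d ^ n ≠ 0 := pow_ne_zero _ (od_ellL hq d).ne_zero
    rw [Sval, e1, mul_pow]
    field_simp
  refine ⟨b, T, b.natDegree + 2 * n + 2 * n + c.toNat, hb0, fun N => ⟨?_, hT N⟩⟩
  apply natDegree_le_of_bd
  rw [hT]
  have h1 : Bd (∑ d ∈ Finset.range N, Sval ι q n h d) (-(2 * n) - c) :=
    bd_sum fun d _ => (hc d).mono (by
      have : (0 : ℤ) < (q : ℤ) ^ d := by positivity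
      omega)
  refine ((od_aeval_xL b hb0).bd.mul (((od_ellL (R := R) hq N).pow n).bd.mul h1)).mono ?_
  have h2 := mul_le_mul_of_nonneg_left (sum_pow_le hq N) (show (0 : ℤ) ≤ n by positivity)
  have h3 : (1 : ℤ) ≤ (q : ℤ) ^ N := by
    have : (0 : ℤ) < (q : ℤ) ^ N := by positivity
    omega
  have h4 : (c.toNat : ℤ) = c := by omega
  push_cast
  rw [h4]
  have h5 := mul_le_mul_of_nonneg_left h3 (show (0 : ℤ) ≤ b.natDegree + 2 * n + c by omega)
  nlinarith

end Core

section Core2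

variable {k R : Type*} [Field k] [Field R] {q : ℕ}

/-- A relation between `ϖ` and `ζ` yields one between `U ϖ` and `z`, where `V ζ = Γ z + T`, with
control on the degrees of the coefficients. -/
lemma clear_denominators {K : Type*} [Field K] (φ : R[X] →+* K) (U V Γ T : R[X]) (hU : U ≠ 0)
    (hV : V ≠ 0) (hΓ : Γ ≠ 0) (ϖ ζ z : K) (hz : φ V * ζ = φ Γ * z + φ T) (D : ℕ)
    (r : Fin D × Fin D → R[X]) (hr : r ≠ 0)
    (hrel : ∑ ij, φ (r ij) * (ϖ ^ (ij.1 : ℕ) * ζ ^ (ij.2 : ℕ)) = 0) (b : ℕ)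
    (hUb : U.natDegree ≤ b) (hVb : V.natDegree ≤ b) (hΓb : Γ.natDegree ≤ b)
    (hTb : T.natDegree ≤ b) (hrb : ∀ ij, (r ij).natDegree ≤ b) :
    ∃ v : Fin D × Fin D → R[X], v ≠ 0 ∧ (∀ il, (v il).natDegree ≤ (4 * D + 1) * b) ∧
      ∑ il, φ (v il) * ((φ U * ϖ) ^ (il.1 : ℕ) * z ^ (il.2 : ℕ)) = 0 := by
  let c : Fin D → Fin D → R[X] := fun i j => r (i, j) * V ^ (D - j : ℕ)
  let p : Fin D → R[X][X] := fun i => ∑ j, C (c i j) * X ^ (j : ℕ)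
  let G : Fin D → R[X][X] := fun i => taylor T (p i)
  have hG : ∀ i, G i = ∑ j, C (c i j) * (X + C T) ^ (j : ℕ) := by
    intro i
    simp only [G, p, map_sum, taylor_mul, taylor_C, taylor_pow, taylor_X]
  have hpc : ∀ i (j : Fin D), (p i).coeff j = c i j := by
    intro i j
    simp only [p, finsetSum_coeff, coeff_C_mul, coeff_X_pow, Fin.val_inj]
    simp
  have hpd : ∀ i, (p i).natDegree < D := by
    intro i
    refine lt_of_le_of_lt (natDegree_sum_le_of_forall_le (n := D - 1) _ _ fun j _ => ?_) ?_
    · exact (natDegree_C_mul_X_pow_le _ _).trans (by omega)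
    · have := i.2; omega
  have hGd : ∀ i, (G i).natDegree < D := fun i => by
    simp only [G, natDegree_taylor]; exact hpd i
  refine ⟨fun il => U ^ (D - il.1 : ℕ) * Γ ^ (il.2 : ℕ) * (G il.1).coeff il.2, ?_, ?_, ?_⟩
  · intro hv
    apply hr
    have hG0 : ∀ i, G i = 0 := by
      intro i
      ext1 l
      rw [coeff_zero]
      by_cases hl : l < D
      · have := congrFun hv (i, ⟨l, hl⟩)
        simpa [hU, hΓ] using this
      · exact coeff_eq_zero_of_natDegree_lt (lt_of_lt_of_le (hGd i) (by omega))
    funext ij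
    have h1 : p ij.1 = 0 := taylor_injective T (by rw [map_zero]; exact hG0 ij.1)
    have h2 := hpc ij.1 ij.2
    rw [h1, coeff_zero] at h2
    have h3 : r ij * V ^ (D - ij.2 : ℕ) = 0 := h2.symm
    exact (mul_eq_zero.1 h3).resolve_right (pow_ne_zero _ hV)
  · rintro ⟨i, l⟩
    simp only
    have hco : ((G i).coeff l).natDegree ≤ b + D * b + D * b := by
      rw [hG, finsetSum_coeff]
      refine natDegree_sum_le_of_forall_le _ _ fun j _ => ?_
      rw [coeff_C_mul, coeff_X_add_C_pow]
      refine natDegree_mul_le.trans ?_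
      have h1 : (c i j).natDegree ≤ b + D * b :=
        natDegree_mul_le.trans (add_le_add (hrb _)
          (natDegree_pow_le.trans (Nat.mul_le_mul (by omega) hVb)))
      have h2 : (T ^ (j - l : ℕ) * (((j : ℕ).choose l : ℕ) : R[X])).natDegree ≤ D * b := by
        refine natDegree_mul_le.trans ?_
        rw [natDegree_natCast, add_zero]
        have := j.2
        exact natDegree_pow_le.trans (Nat.mul_le_mul (by omega) hTb)
      omega
    have h1 : (U ^ (D - i : ℕ)).natDegree ≤ D * b :=
      natDegree_pow_le.trans (Nat.mul_le_mul (by omega) hUb)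
    have h2 : (Γ ^ (l : ℕ)).natDegree ≤ D * b :=
      natDegree_pow_le.trans (Nat.mul_le_mul l.2.le hΓb)
    have h3 := natDegree_mul_le (p := U ^ (D - i : ℕ)) (q := Γ ^ (l : ℕ))
    refine natDegree_mul_le.trans ?_
    have : (4 * D + 1) * b = 4 * (D * b) + b := by ring
    omega
  · have hinner : ∀ i : Fin D, ∑ l : Fin D, φ ((G i).coeff l) * (φ Γ * z) ^ (l : ℕ) =
        φ V ^ D * ∑ j : Fin D, φ (r (i, j)) * ζ ^ (j : ℕ) := by
      intro i
      have h1 := eval₂_eq_sum_range' φ (hGd i) (φ Γ * z)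
      rw [Fin.sum_univ_eq_sum_range (fun l => φ ((G i).coeff l) * (φ Γ * z) ^ l), ← h1, hG,
        eval₂_finsetSum, Finset.mul_sum]
      refine Finset.sum_congr rfl fun j _ => ?_
      rw [eval₂_mul, eval₂_C, eval₂_pow, eval₂_add, eval₂_X, eval₂_C, ← hz]
      have : φ V ^ D = φ V ^ (D - j : ℕ) * φ V ^ (j : ℕ) := by
        rw [← pow_add]; congr 1; omega
      simp only [c, map_mul, map_pow, mul_pow, this]
      ring
    rw [Fintype.sum_prod_type] at hrel ⊢
    simp only at hrel ⊢
    have : ∀ i : Fin D, ∑ l : Fin D, φ (U ^ (D - i : ℕ) * Γ ^ (l : ℕ) * (G i).coeff l) *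
        ((φ U * ϖ) ^ (i : ℕ) * z ^ (l : ℕ)) =
        φ U ^ D * φ V ^ D * ∑ j : Fin D, φ (r (i, j)) * (ϖ ^ (i : ℕ) * ζ ^ (j : ℕ)) := by
      intro i
      have e : φ U ^ D = φ U ^ (D - i : ℕ) * φ U ^ (i : ℕ) := by
        rw [← pow_add]; congr 1; omega
      have h1 := congrArg (fun y => φ U ^ D * ϖ ^ (i : ℕ) * y) (hinner i)
      simp only [Finset.mul_sum] at h1 ⊢
      refine Eq.trans (Finset.sum_congr rfl fun l _ => ?_) (h1.trans
        (Finset.sum_congr rfl fun l _ => ?_))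
      · simp only [map_mul, map_pow, mul_pow, e]; ring
      · ring
    rw [Finset.sum_congr rfl fun i _ => this i, ← Finset.mul_sum, hrel, mul_zero]

end Core2

section Core3

variable {k R : Type*} [Field k] [Field R] {q : ℕ}

/-- There is no algebraic relation over `R[θ]` between `-θ ^ q P ^ (q - 1)`, where `P` is the
product for the period, and a series `ζ` with terms `S_d`. -/
theorem core [Algebra R[X] k] [IsFractionRing R[X] k] (p : ℕ) [Fact p.Prime] [CharP k p]
    [CharP R p] {f : ℕ} (hqp : q = p ^ f) (hq : 2 ≤ q) (ι : k →+* LaurentSeries R)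
    (hι : ∀ a : R[X], ι (algebraMap R[X] k a) = aeval (xL R) a) (n : ℕ) (hn : 1 ≤ n)
    (hodd : ¬ (q - 1) ∣ n) (h : k[X]) (hh : (q - 1) * h.natDegree + q ≤ n * q)
    (P : LaurentSeries R)
    (hP : ∀ I, Bd (P - ∏ i ∈ Finset.range I, piFac R q i) ((q : ℤ) ^ (I + 1) - 1))
    (ζ : LaurentSeries R) (hζ0 : ζ ≠ 0) (c : ℤ)
    (hζ : ∀ I, Bd (ζ - ∑ d ∈ Finset.range I, Sval ι q n h d) ((q : ℤ) ^ I - 2 * n - c))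
    (D : ℕ) (r : Fin D × Fin D → R[X])
    (hrel : ∑ ij, aeval (xL R) (r ij) *
      ((-xL R ^ q * P ^ (q - 1)) ^ (ij.1 : ℕ) * ζ ^ (ij.2 : ℕ)) = 0) : r = 0 := by
  by_contra hr
  have ht : ι (algebraMap R[X] k X) = xL R := by rw [hι, aeval_X]
  set t := algebraMap R[X] k X
  obtain ⟨ω, hω, hω0, hωτ⟩ := exists_omega hq t
  obtain ⟨F, hF, hFτ⟩ := exists_F hq t n h hh
  have hEF := exp_F hq t ht n h F hF ζ c hζ
  have hneg := neg_one_pow_card p R hqp hq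
  have hw0 : -xL k ^ q * ω ^ (q - 1) ≠ 0 :=
    mul_ne_zero (neg_ne_zero.2 (pow_ne_zero _ xL_ne_zero)) (pow_ne_zero _ hω0)
  have hEw : Exp ι q (-xL k ^ q * ω ^ (q - 1))
      (fun N => ellL R q N ^ (q - 1) * (-xL R ^ q * P ^ (q - 1))) := by
    have h1 := (exp_aeval (ι := ι) (q := q) (-X ^ q)).mul (by omega)
      ((exp_omega hq t ht ω hω P hP).pow (by omega) (q - 1))
    refine h1.congr (by simp) fun N => ?_
    have h2 := ellL_pow hq hneg N
    rw [mul_pow, mul_left_comm, eval₂_neg, eval₂_X_pow]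
    linear_combination P ^ (q - 1) * h2
  obtain ⟨Γ, T, B, hΓ, hT⟩ := exists_numerators ι hι hq n h hh
  obtain ⟨ρ, hρ⟩ : ∃ ρ : ℕ, ∀ ij, (r ij).natDegree ≤ ρ :=
    ⟨∑ ij, (r ij).natDegree, fun ij =>
      Finset.single_le_sum (f := fun ij => (r ij).natDegree) (fun _ _ => Nat.zero_le _)
        (Finset.mem_univ ij)⟩
  obtain ⟨b, hb⟩ : ∃ b : ℕ, b = ρ + B + 2 * (q - 1) + 2 * n + Γ.natDegree := ⟨_, rfl⟩
  obtain ⟨N, hN⟩ := no_relation hq ι hι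
    (fun il : Fin D × Fin D => (-xL k ^ q * ω ^ (q - 1)) ^ (il.1 : ℕ) * F ^ (il.2 : ℕ))
    (fun il N => (ellL R q N ^ (q - 1) * (-xL R ^ q * P ^ (q - 1))) ^ (il.1 : ℕ) *
      (ellL R q N ^ n * (ζ - ∑ d ∈ Finset.range N, Sval ι q n h d)) ^ (il.2 : ℕ))
    (fun il => (hEw.pow (by omega) _).mul (by omega) (hEF.pow (by omega) _))
    (formal_independence p hqp hq t ht n hn hodd h _ F hw0
      (tau_f1 hq (neg_one_pow_card p k hqp hq) t ω hωτ) hFτ ζ hζ0 hEF D) ((4 * D + 1) * b)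
  have hN' := hN N le_rfl
  have hQ : 1 ≤ q ^ N := Nat.one_le_pow _ _ (by omega)
  have hL := natDegree_ellP_le (R := R) hq N
  have hLn : ∀ m, (ellP R q N ^ m).natDegree ≤ 2 * m * q ^ N := fun m =>
    natDegree_pow_le.trans ((Nat.mul_le_mul_left m hL).trans (le_of_eq (by ring)))
  have hmono : ∀ a, a ≤ b → a * q ^ N ≤ b * q ^ N := fun a ha => Nat.mul_le_mul_right _ ha
  have hcst : ∀ a, a ≤ a * q ^ N := fun a => Nat.le_mul_of_pos_right _ hQ
  obtain ⟨v, hv0, hvd, hv⟩ := clear_denominators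
    (aeval (xL R) : R[X] →ₐ[R] LaurentSeries R).toRingHom
    (ellP R q N ^ (q - 1)) (Γ * ellP R q N ^ n) Γ (T N) (pow_ne_zero _ (ellP_ne_zero hq N))
    (mul_ne_zero hΓ (pow_ne_zero _ (ellP_ne_zero hq N))) hΓ
    (-xL R ^ q * P ^ (q - 1)) ζ
    (ellL R q N ^ n * (ζ - ∑ d ∈ Finset.range N, Sval ι q n h d)) (by
      simp only [AlgHom.toRingHom_eq_coe, RingHom.coe_coe, map_mul, map_pow, aeval_ellP,
        (hT N).2]
      ring) D r hr hrel (b * q ^ N)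
    ((hLn _).trans (hmono _ (by omega)))
    (natDegree_mul_le.trans ((add_le_add (hcst _) (hLn n)).trans
      (by rw [← add_mul]; exact hmono _ (by omega))))
    ((hcst _).trans (hmono _ (by omega)))
    ((hT N).1.trans (hmono _ (by omega)))
    (fun ij => (hρ ij).trans ((hcst _).trans (hmono _ (by omega))))
  refine hv0 (hN' v (fun il => (hvd il).trans (by rw [mul_assoc])) ?_)
  simp only [AlgHom.toRingHom_eq_coe, RingHom.coe_coe, map_pow, aeval_ellP] at hv
  exact hv

end Core3

/-! ### The zeta value -/

section Zeta

local notation "qq" => Fintype.card Fq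

/-- The embedding of `𝔽_q(t)` into `𝔽_q((1/θ))` with `t ↦ θ`. -/
def iota : RatFunc Fq →+* LaurentSeries Fq :=
  IsFractionRing.lift (A := Fq[X]) (K := RatFunc Fq)
    (g := (aeval (xL Fq) : Fq[X] →ₐ[Fq] LaurentSeries Fq).toRingHom) aeval_xL_injective

lemma iota_algebraMap (a : Fq[X]) : iota Fq (algebraMap Fq[X] (RatFunc Fq) a) =
    aeval (xL Fq) a :=
  IsFractionRing.lift_algebraMap (A := Fq[X]) (K := RatFunc Fq)
    (g := (aeval (xL Fq) : Fq[X] →ₐ[Fq] LaurentSeries Fq).toRingHom) aeval_xL_injective a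

/-- The index set of the zeta value is the set of monic polynomials, parametrized by their degree
and their non-leading coefficients. -/
def monTuple (x : Σ d : ℕ, (Fin d → Fq)) : {a : Fin 1 → Polynomial Fq //
      (∀ i, (a i).Monic) ∧ ∀ i j : Fin 1, i < j → (a j).degree < (a i).degree} :=
  ⟨fun _ => mon Fq x.1 x.2, fun _ => mon_monic Fq _ _, fun i j h => by
    exact absurd (Subsingleton.elim i j) h.ne⟩

lemma monTuple_bijective : Function.Bijective (monTuple Fq) := by
  constructor
  · rintro ⟨d, c⟩ ⟨d', c'⟩ h
    have h1 : mon Fq d c = mon Fq d' c' := congrFun (congrArg Subtype.val h) 0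
    obtain rfl : d = d' := by
      have := congrArg natDegree h1
      rwa [natDegree_mon, natDegree_mon] at this
    rw [mon_injective Fq d h1]
  · rintro ⟨a, ha, ha'⟩
    refine ⟨⟨(a 0).natDegree, fun i => (a 0).coeff i⟩, Subtype.ext (funext fun i => ?_)⟩
    rw [Subsingleton.elim i 0]
    exact mon_eq Fq (a 0) (ha 0)

lemma exists_h (n : ℕ) (hn : 1 ≤ n) : ∃ h : (RatFunc Fq)[X],
    (qq - 1) * h.natDegree + qq ≤ n * qq ∧
    ∀ d, powSum Fq (xL Fq) d n = Sval (iota Fq) qq n h d := by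
  obtain ⟨m, rfl⟩ : ∃ m, n = m + 1 := ⟨n - 1, by omega⟩
  have hae : ∀ a : Fq[X], aeval (algebraMap Fq[X] (RatFunc Fq) X) a =
      algebraMap Fq[X] (RatFunc Fq) a := fun a => by
    rw [aeval_algebraMap_apply, aeval_X_left_apply]
  have ht : Function.Injective
      (aeval (algebraMap Fq[X] (RatFunc Fq) X) : Fq[X] →ₐ[Fq] RatFunc Fq) := by
    intro a b hab
    rw [hae, hae] at hab
    exact IsFractionRing.injective Fq[X] (RatFunc Fq) hab
  obtain ⟨H, hH, hS⟩ := exists_powSum Fq ht m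
  refine ⟨H, by rw [add_mul, one_mul]; omega, fun d => ?_⟩
  have h1 := congrArg (iota Fq) (hS d)
  have hX : iota Fq (algebraMap Fq[X] (RatFunc Fq) X) = xL Fq := by
    rw [iota_algebraMap, aeval_X]
  have h2 : iota Fq (H.eval ((algebraMap Fq[X] (RatFunc Fq) X) ^ qq ^ d)) =
      H.eval₂ (iota Fq) (xL Fq ^ qq ^ d) := by
    rw [← eval₂_at_apply, map_pow, hX]
  rw [map_div₀, h2, div_eq_mul_inv] at h1
  simp only [powSum, map_sum, map_inv₀, map_pow, hae, iota_algebraMap, ell, map_prod, map_sub,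
    hX] at h1
  exact h1

lemma bd_inv_mon (n : ℕ) (hn : 1 ≤ n) (d : ℕ) (c : Fin d → Fq) :
    Bd ((aeval (xL Fq) (mon Fq d c) ^ n)⁻¹) d := by
  have h1 := ((od_aeval_xL (mon Fq d c) (mon_monic Fq d c).ne_zero).pow n).inv.bd
  refine h1.mono ?_
  rw [natDegree_mon, mul_neg, neg_neg]
  have : (1 : ℤ) ≤ n := by exact_mod_cast hn
  nlinarith

lemma exists_zeta (n : ℕ) (hn : 1 ≤ n) (h : (RatFunc Fq)[X])
    (hh : (qq - 1) * h.natDegree + qq ≤ n * qq)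
    (hS : ∀ d, powSum Fq (xL Fq) d n = Sval (iota Fq) qq n h d) :
    mzv Fq 1 ![n] ≠ 0 ∧ ∃ c : ℤ, ∀ I, Bd (mzv Fq 1 ![n] -
      ∑ d ∈ Finset.range I, Sval (iota Fq) qq n h d) ((qq : ℤ) ^ I - 2 * n - c) := by
  have hq : 2 ≤ qq := one_lt_qq Fq
  obtain ⟨c, hc0, hc⟩ := exists_bd_Sval (ι := iota Fq) hq n h hh
  have hu : ∀ D : ℤ, ∃ I : ℕ, D ≤ (qq : ℤ) ^ I - 2 * n - c ∧ D ≤ I := fun D =>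
    ⟨(D + 2 * n + c).toNat + D.toNat, by
      have := int_lt_pow hq ((D + 2 * n + c).toNat + D.toNat)
      push_cast at this
      omega, by push_cast; omega⟩
  obtain ⟨ζ, hζ⟩ := exists_limit (fun I => ∑ d ∈ Finset.range I, Sval (iota Fq) qq n h d)
    (fun I => (qq : ℤ) ^ I - 2 * n - c)
    (fun a b hab => by
      have := pow_le_pow_right₀ (show (1 : ℤ) ≤ qq by omega) hab
      simp only; omega)
    (fun D => by obtain ⟨I, hI, -⟩ := hu D; exact ⟨I, hI⟩)
    (fun I => by
      simp only [Finset.sum_range_succ, add_sub_cancel_left]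
      exact hc I)
  have hsum : HasSum (fun x : Σ d : ℕ, (Fin d → Fq) =>
      (aeval (xL Fq) (mon Fq x.1 x.2) ^ n)⁻¹) ζ := by
    refine hasSum_of_bd _ _ (fun I => (Finset.range I).sigma fun _ => Finset.univ) _ (fun I => I)
      hu (fun I => ?_) (fun I x hx => ?_)
    · have := hζ I
      simp only [← hS, powSum] at this
      rw [Finset.sum_sigma]
      exact this
    · refine (bd_inv_mon Fq n hn x.1 x.2).mono ?_
      simpa using hx
  have hmzv : mzv Fq 1 ![n] = ζ := by
    rw [mzv, ← (Equiv.ofBijective _ (monTuple_bijective Fq)).tsum_eq, ← hsum.tsum_eq]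
    refine tsum_congr fun x => ?_
    simp [monTuple, theta, xL]
  rw [hmzv]
  refine ⟨?_, c, hζ⟩
  obtain ⟨I, hI, hI'⟩ := hu 1
  obtain ⟨J, rfl⟩ : ∃ J, I = J + 1 := ⟨I - 1, by omega⟩
  have h1 := (hζ (J + 1)).mono hI
  have h2 : Bd (∑ d ∈ Finset.range J, powSum Fq (xL Fq) (d + 1) n) 1 :=
    bd_sum fun d _ => bd_sum fun x _ => (bd_inv_mon Fq n hn (d + 1) x).mono (by push_cast; omega)
  have h3 : powSum Fq (xL Fq) 0 n = 1 := by simp [powSum, mon]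
  simp only [← hS] at h1
  rw [Finset.sum_range_succ', h3] at h1
  have h4 : Od (1 + (ζ - 1)) 0 := od_one.add (by
    have := h1.add h2
    rw [zero_add]
    convert this using 1
    ring)
  rw [add_sub_cancel] at h4
  exact h4.ne_zero

lemma exists_period : ∃ P : LaurentSeries Fq,
    (∏' i : ℕ, (1 - theta Fq ^ ((1 : ℤ) - (qq : ℤ) ^ (i + 1)))⁻¹) = P ∧
    ∀ I, Bd (P - ∏ i ∈ Finset.range I, piFac Fq qq i) ((qq : ℤ) ^ (I + 1) - 1) := by
  obtain ⟨P, hP, hP'⟩ := exists_pival Fq (one_lt_qq Fq)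
  refine ⟨P, ?_, hP'⟩
  rw [← hP.tprod_eq]
  refine tprod_congr fun i => ?_
  have h0 : xL Fq ≠ 0 := xL_ne_zero
  change (1 - xL Fq ^ ((1 : ℤ) - (qq : ℤ) ^ (i + 1)))⁻¹ = _
  rw [piFac, zpow_sub₀ h0, zpow_one, ← zpow_natCast (xL Fq) (qq ^ (i + 1)), div_eq_mul_inv]
  push_cast
  rfl

/-- There is no algebraic relation over `𝔽_q[θ]` between `-θ ^ q P ^ (q - 1)` and `ζ(n)`, where
`P` is the product for the period. -/
theorem no_relation_zeta (n : ℕ) (hn : 1 ≤ n) (hodd : ¬ (qq - 1) ∣ n) (D : ℕ)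
    (r : Fin D × Fin D → Fq[X])
    (hrel : ∑ ij, aeval (xL Fq) (r ij) *
      ((-xL Fq ^ qq * (∏' i : ℕ, (1 - theta Fq ^ ((1 : ℤ) - (qq : ℤ) ^ (i + 1)))⁻¹) ^ (qq - 1)) ^
        (ij.1 : ℕ) * mzv Fq 1 ![n] ^ (ij.2 : ℕ)) = 0) : r = 0 := by
  obtain ⟨h, hh, hS⟩ := exists_h Fq n hn
  obtain ⟨hζ0, c, hζ⟩ := exists_zeta Fq n hn h hh hS
  obtain ⟨P, hPe, hP⟩ := exists_period Fq
  rw [hPe] at hrel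
  obtain ⟨p, hp⟩ := CharP.exists Fq
  obtain ⟨f, hpp, hf⟩ := FiniteField.card Fq p
  have : Fact p.Prime := ⟨hpp⟩
  have : CharP (RatFunc Fq) p :=
    charP_of_injective_algebraMap (algebraMap Fq (RatFunc Fq)).injective p
  exact core p hf (one_lt_qq Fq) (iota Fq) (iota_algebraMap Fq) n hn hodd h hh P hP _ hζ0 c hζ D r
    hrel

end Zeta

/-! ### From polynomial relations to algebraic independence over `k̄` -/

section Final

/-- It suffices to exclude relations written with a square array of coefficients, lifted along
`φ`. -/
lemma algIndep_of_no_relation {R K : Type*} [CommRing R] [Field K] (φ : R →+* K) (x y : K)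
    (H : ∀ (D : ℕ) (r : Fin D × Fin D → R),
      ∑ ij, φ (r ij) * (x ^ (ij.1 : ℕ) * y ^ (ij.2 : ℕ)) = 0 → r = 0) :
    AlgebraicIndependent φ.range ![x, y] := by
  rw [algebraicIndependent_iff]
  intro f hf
  have hlift : ∀ a : φ.range, ∃ r, φ r = a := fun a => a.2
  choose g hg using hlift
  have hlt : ∀ d ∈ f.support, ∀ i, d i < f.totalDegree + 1 := fun d hd i => by
    have h1 := MvPolynomial.le_totalDegree hd
    have h2 : d i ≤ d.sum fun _ e => e := by
      by_cases hi : i ∈ d.support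
      · exact Finset.single_le_sum (f := fun i => d i) (fun _ _ => Nat.zero_le _) hi
      · simp [Finsupp.notMem_support_iff.mp hi]
    omega
  let e : Fin (f.totalDegree + 1) × Fin (f.totalDegree + 1) → (Fin 2 →₀ ℕ) :=
    fun ij => Finsupp.equivFunOnFinite.symm ![(ij.1 : ℕ), (ij.2 : ℕ)]
  have he : Function.Injective e := fun a b hab => by
    have h0 := DFunLike.congr_fun hab 0
    have h1 := DFunLike.congr_fun hab 1
    simp only [e, Finsupp.equivFunOnFinite_symm_apply_apply, Matrix.cons_val_zero,
      Matrix.cons_val_one] at h0 h1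
    exact Prod.ext (Fin.ext h0) (Fin.ext h1)
  have hesurj : ∀ d ∈ f.support, ∃ ij, e ij = d := fun d hd =>
    ⟨(⟨d 0, hlt d hd 0⟩, ⟨d 1, hlt d hd 1⟩), by
      ext i
      fin_cases i <;> simp [e]⟩
  have h0 : (fun ij => g (f.coeff (e ij))) = 0 := by
    refine H (f.totalDegree + 1) _ ?_
    rw [MvPolynomial.aeval_def, MvPolynomial.eval₂_eq'] at hf
    rw [← hf]
    symm
    refine (Finset.sum_subset (s₂ := Finset.univ.image e)
      (fun d hd => ?_) (fun d _ hd => ?_)).trans ?_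
    · obtain ⟨ij, rfl⟩ := hesurj d hd
      exact Finset.mem_image_of_mem _ (Finset.mem_univ _)
    · rw [MvPolynomial.notMem_support_iff.mp hd, map_zero, zero_mul]
    · rw [Finset.sum_image fun _ _ _ _ h => he h]
      refine Finset.sum_congr rfl fun ij _ => ?_
      rw [hg]
      simp only [Fin.prod_univ_two, e, Finsupp.equivFunOnFinite_symm_apply_apply,
        Matrix.cons_val_zero, Matrix.cons_val_one]
      rfl
  ext d
  by_cases hd : d ∈ f.support
  · obtain ⟨ij, rfl⟩ := hesurj d hd
    have h1 := hg (f.coeff (e ij))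
    have h2 : g (f.coeff (e ij)) = 0 := congrFun h0 ij
    rw [h2, map_zero] at h1
    simp [← h1]
  · simp [MvPolynomial.notMem_support_iff.mp hd]

lemma algIndep_of_pow {R K : Type*} [CommRing R] [Field K] [Algebra R K] (x y : K) (m : ℕ)
    (h : AlgebraicIndependent R ![x ^ m, y]) : AlgebraicIndependent R ![x, y] := by
  rw [AlgebraicIndependent.iff_transcendental_adjoin_image 0] at h ⊢
  have hset : ∀ a : K, (![a, y] '' {0}ᶜ : Set K) = {y} := fun a => by
    ext z
    simp [Fin.exists_fin_two, eq_comm]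
  have hfun : ∀ a : K, (fun j : {j : Fin 2 // j ≠ 0} => ![a, y] j) = fun _ => y := fun a => by
    ext ⟨j, hj⟩
    fin_cases j
    · simp at hj
    · rfl
  rw [hset, hfun] at h ⊢
  exact ⟨h.1, fun hx => h.2 (by simpa using hx.pow m)⟩

/-- Extension of scalars from a ring `A` to the algebraic closure of a field `k` algebraic over
`A`. -/
lemma algIndep_algebraicClosure {K ι : Type*} [Field K] (A : Subring K) (k : Subfield K)
    (hA : A ≤ k.toSubring) (hk : ∀ x ∈ k, IsAlgebraic A x) (x : ι → K)
    (hx : AlgebraicIndependent A x) : AlgebraicIndependent (algebraicClosure k K) x := by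
  let : Algebra A k := (Subring.inclusion hA).toAlgebra
  have : IsScalarTower A k K := .of_algebraMap_eq fun _ => rfl
  have : Algebra.IsAlgebraic A k := ⟨fun z => by
    rw [← isAlgebraic_algHom_iff (IsScalarTower.toAlgHom A k K) Subtype.val_injective]
    exact hk z.1 z.2⟩
  exact (hx.extendScalars k).extendScalars (algebraicClosure k K)

local notation "qq" => Fintype.card Fq

/-- Evaluation of polynomials at `θ`, with values in `k̄_∞`. -/
def evalTheta : Fq[X] →+* KinfBar Fq :=
  (algebraMap (Kinf Fq) (KinfBar Fq)).comp (aeval (xL Fq)).toRingHom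

lemma evalTheta_apply (r : Fq[X]) :
    evalTheta Fq r = algebraMap (Kinf Fq) (KinfBar Fq) (aeval (xL Fq) r) := rfl

lemma evalTheta_X : evalTheta Fq X = thetaBar Fq := by
  rw [evalTheta_apply, aeval_X]
  rfl

lemma evalTheta_C (a : Fq) :
    evalTheta Fq (C a) = algebraMap (Kinf Fq) (KinfBar Fq) (algebraMap Fq (Kinf Fq) a) := by
  rw [evalTheta_apply, aeval_C]

lemma range_evalTheta_le : (evalTheta Fq).range ≤ (kSub Fq).toSubring := by
  rintro _ ⟨r, rfl⟩
  change evalTheta Fq r ∈ kSub Fq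
  induction r using Polynomial.induction_on' with
  | add f g hf hg => rw [map_add]; exact add_mem hf hg
  | monomial m a =>
    rw [← C_mul_X_pow_eq_monomial, map_mul, map_pow, evalTheta_C, evalTheta_X]
    have hC : algebraMap (Kinf Fq) (KinfBar Fq) (algebraMap Fq (Kinf Fq) a) ∈ kSub Fq :=
      Subfield.subset_closure (Set.mem_union_left _ (Set.mem_range_self a))
    have hX : thetaBar Fq ∈ kSub Fq :=
      Subfield.subset_closure (Set.mem_union_right _ (Set.mem_singleton _))
    exact mul_mem hC (pow_mem hX _)

/-- The field `k` is algebraic over the ring `𝔽_q[θ]`. -/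
lemma isAlgebraic_of_mem_kSub (x : KinfBar Fq) (hx : x ∈ kSub Fq) :
    IsAlgebraic (evalTheta Fq).range x := by
  have hmem : ∀ r, IsAlgebraic (evalTheta Fq).range (evalTheta Fq r) := fun r =>
    isAlgebraic_algebraMap (⟨_, r, rfl⟩ : (evalTheta Fq).range)
  induction hx using Subfield.closure_induction with
  | mem x hx =>
    rcases hx with ⟨a, rfl⟩ | rfl
    · simpa only [evalTheta_C] using hmem (C a)
    · simpa only [evalTheta_X] using hmem X
  | one => exact isAlgebraic_one
  | add x y _ _ hx hy => exact hx.add hy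
  | neg x _ hx => exact hx.neg
  | inv x _ hx => exact hx.inv
  | mul x y _ _ hx hy => exact hx.mul hy

/-- `π̃ ^ (q - 1) = -θ ^ q P ^ (q - 1)`, which lies in `k_∞`; the sign is `(-1) ^ q = -1`. -/
lemma pitilde_pow (η : KinfBar Fq) (hη : η ^ (qq - 1) = -thetaBar Fq) :
    pitilde Fq η ^ (qq - 1) = algebraMap (Kinf Fq) (KinfBar Fq)
      (-xL Fq ^ qq *
        (∏' i : ℕ, (1 - theta Fq ^ ((1 : ℤ) - (qq : ℤ) ^ (i + 1)))⁻¹) ^ (qq - 1)) := by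
  have h1 : (-1 : KinfBar Fq) ^ qq = -1 := by
    have h := congrArg (algebraMap Fq (Kinf Fq)) (FiniteField.pow_card (-1 : Fq))
    have h' := congrArg (algebraMap (Kinf Fq) (KinfBar Fq)) h
    simpa only [map_pow, map_neg, map_one] using h'
  rw [pitilde, mul_pow, ← pow_mul, mul_comm qq, pow_mul, hη, neg_pow, h1, map_mul, map_neg,
    map_pow, map_pow, neg_one_mul]
  rfl

end Final

end PiZeta

/-- For an "odd" integer `n ≥ 1` (i.e. `q − 1 ∤ n`), `π̃` and `ζ(n)` are
algebraically independent over `k̄`. -/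
theorem pitilde_zetan_algIndep
    (n : ℕ) (hn : 1 ≤ n) (hodd : ¬ (Fintype.card Fq - 1) ∣ n)
    (η : KinfBar Fq) (hη : η ^ (Fintype.card Fq - 1) = -thetaBar Fq) :
    AlgebraicIndependent (kbar Fq)
      ![pitilde Fq η,
        algebraMap (Kinf Fq) (KinfBar Fq) (mzv Fq 1 ![n])] := by
  refine PiZeta.algIndep_algebraicClosure _ _ (PiZeta.range_evalTheta_le Fq)
    (PiZeta.isAlgebraic_of_mem_kSub Fq) _ ?_
  refine PiZeta.algIndep_of_pow _ _ (Fintype.card Fq - 1) ?_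
  refine PiZeta.algIndep_of_no_relation _ _ _ fun D r hr =>
    PiZeta.no_relation_zeta Fq n hn hodd D r ?_
  refine (algebraMap (Kinf Fq) (KinfBar Fq)).injective ?_
  rw [map_zero, map_sum, ← hr]
  refine Finset.sum_congr rfl fun ij _ => ?_
  rw [PiZeta.pitilde_pow Fq η hη, map_mul, map_mul, map_pow, map_pow, PiZeta.evalTheta_apply]
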